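/- arXiv:1101.4557 — 3 statements merged into one kernel-verified Lean document; each statement's English description precedes it below -/
import Mathlib

section
/- Let P ∈ F₂[z] with P(0) = 1, q the odd integer attached to P, r the multiplicative order of 2 modulo q. Assume E'(q) ≠ ∅ and let 𝒞 be a coherent set of semi-bad classes with |𝒞| = r, 𝒮 the associated set of primes, δ(n) the indicator that n has no bad prime factor, and V(x) = Σ_{n ≥ 1, n·2^{ω_𝒮(n)} ≤ x} δ(n). Then for all x > 1, A(P,x) ≤ V(2x). -/
/-!
Write `σ(n)` for the sum of the divisors of `n` lying in `A`. The argument has three parts.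

*Periodicity* (`sigA_congr`): modulo `2 ^ (k + 1)`, `σ(2 ^ k n)` depends only on the class of `n`
modulo `q`, up to multiplication by powers of two. Over an algebraic closure of `F₂`, the polynomial
`P` is a product of factors `1 - α X` with `α ^ q = 1`; lift it to the Witt vectors as
`∏ (1 - [α] X)` using Teichmüller representatives. The series `∏ (1 - X ^ a)`, `a ∈ A`, times this
lift is congruent to `1` modulo `2`, and a series congruent to `1` modulo `2` is a product of factors
`1 - c X ^ n` with `2 ∣ c`, so the coefficient of `X ^ m` in its logarithmic derivative is divisible
by `2 ^ (v₂(m) + 1)` (`IsLD.two_pow_dvd`). Hence `σ(m) + ∑ [α] ^ m` is divisible by that power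
(`sigA_add_powerSum`), and the power sum has period `q` in `m`. Invariance under `n ↦ 2 n` is
elementary (`sigA_double`).

*Sieving*: for `m` odd, let `f(m) = m ∑ 2 ^ i` over the `i ≤ k` with `2 ^ i m ∈ A`
(this is `layer`), so that `σ(2 ^ k m)` is the sum of `f` over the divisors of `m`. The signed sum of
`σ(2 ^ k m / ∏ U)` over the subsets `U` of a set `T` of prime divisors of `m` is the sum of `f(d)`
over those `d ∣ m` with full valuation at each `p ∈ T` (`fullSum`). By periodicity it vanishes modulo
`2 ^ (k + 1)` if `T` consists of one bad prime; if `T` consists of `w` primes of `𝒮`, the value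
depends only on the parity of `|U|`, and the sum is a multiple of `2 ^ (w - 1)`. Strong induction on
`m` passes the vanishing to `f(m)` itself. So `2 ^ k m ∈ A` forces `m` to have no bad prime factor
and `ω_𝒮(m) ≤ k + 1`.

*Counting*: the map `n ↦ 2 n / 2 ^ ω_𝒮(n)` is therefore integer valued on `A`, keeps the odd part
and so `ω_𝒮` (as `2 ∉ 𝒮`), is injective, and lands in the set counted by `V(2x)`.
-/

open Polynomial

/-- Number of partitions of `n` with all parts in `A` (this is `1` for `n = 0`). -/
noncomputable def partitionCount (A : Set ℕ) (n : ℕ) : ℕ :=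
  Nat.card {p : n.Partition // ∀ i ∈ p.parts, i ∈ A}

/-- The odd integer `q = q(P)` attached to `P`: the lcm of the orders of the irreducible
factors of `P`, characterized as the least `m > 0` such that every irreducible factor of `P`
divides `X ^ m - 1` over `F₂`. -/
noncomputable def qOf (P : Polynomial (ZMod 2)) : ℕ :=
  sInf {m | 0 < m ∧ ∀ Q : Polynomial (ZMod 2), Irreducible Q → Q ∣ P → Q ∣ X ^ m - 1}

/-- The counting function `A(P,x) = |{n : 1 ≤ n ≤ x, n ∈ 𝒜}|`. -/
noncomputable def countA (A : Set ℕ) (x : ℝ) : ℕ :=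
  Set.ncard {n : ℕ | n ∈ A ∧ 1 ≤ n ∧ (n : ℝ) ≤ x}

/-- The set `E(q)` of bad classes: the powers `2^i`, `0 ≤ i ≤ r - 1`, in `ℤ/qℤ`,
where `r` is the multiplicative order of `2` modulo `q`. -/
def badE (q : ℕ) : Set (ZMod q) := {x | ∃ i < orderOf (2 : ZMod q), x = 2 ^ i}

/-- A class of `(ℤ/qℤ)*` is semi-bad if it does not belong to `E(q)` but its square does. -/
def SemiBad (q : ℕ) (x : ZMod q) : Prop := IsUnit x ∧ x ∉ badE q ∧ x ^ 2 ∈ badE q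

/-- The set `E'(q)` of semi-bad classes. -/
def semiBadE (q : ℕ) : Set (ZMod q) := {x | SemiBad q x}

/-- A set of semi-bad classes is coherent if it is nonempty and the product of any two of
its elements is a bad class. -/
def Coherent (q : ℕ) (C : Set (ZMod q)) : Prop :=
  C.Nonempty ∧ (∀ x ∈ C, SemiBad q x) ∧ ∀ x ∈ C, ∀ y ∈ C, x * y ∈ badE q

/-- `p` is a bad prime: an odd prime whose class modulo `q` is a bad class. -/
def IsBadPrime (q p : ℕ) : Prop :=
  p.Prime ∧ p ≠ 2 ∧ (p : ZMod q) ∈ badE q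

/-- `ω_𝒮(n)`: the number of distinct prime divisors of `n` belonging to `S`. -/
noncomputable def omegaS (S : Set ℕ) (n : ℕ) : ℕ :=
  Set.ncard {p | p.Prime ∧ p ∣ n ∧ p ∈ S}

/-- `V(x) = Σ_{n ≥ 1, n·2^{ω_𝒮(n)} ≤ x} δ(n)`, where `δ(n)` is the indicator that no bad
prime divides `n`. -/
noncomputable def Vq (q : ℕ) (S : Set ℕ) (x : ℝ) : ℕ :=
  Set.ncard {n : ℕ | 1 ≤ n ∧ ((n * 2 ^ omegaS S n : ℕ) : ℝ) ≤ x ∧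
    ∀ p : ℕ, p.Prime → p ∣ n → ¬ IsBadPrime q p}


/-! ### Logarithmic derivatives of power series -/

/-- `S` is the logarithmic derivative `X U' / U` of `U`, in the division-free form
`X U' = U S`. -/
def IsLD {W : Type*} [CommRing W] (U S : PowerSeries W) : Prop :=
  PowerSeries.X * PowerSeries.derivative W U = U * S

/-- The logarithmic derivative `-∑_{t ≥ 1} n c ^ t X ^ (n t)` of `1 - c X ^ n`. -/
noncomputable def ldTerm {W : Type*} [CommRing W] (c : W) (n : ℕ) : PowerSeries W :=
  PowerSeries.mk fun m => if n ∣ m ∧ 0 < m then -((n : W) * c ^ (m / n)) else 0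

/-- The factor `1 - c X ^ n`. -/
noncomputable def fac {W : Type*} [CommRing W] (c : W) (n : ℕ) : PowerSeries W :=
  1 - PowerSeries.C c * PowerSeries.X ^ n

section LD
variable {W : Type*} [CommRing W]

lemma coeff_X_mul_derivative (U : PowerSeries W) (m : ℕ) :
    PowerSeries.coeff m (PowerSeries.X * PowerSeries.derivative W U) =
      (m : W) * PowerSeries.coeff m U := by
  cases m with
  | zero => simp
  | succ m =>
    rw [PowerSeries.coeff_succ_X_mul, PowerSeries.coeff_derivative]
    push_cast; ring

lemma IsLD.mul {U V S T : PowerSeries W} (h : IsLD U S) (h' : IsLD V T) :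
    IsLD (U * V) (S + T) := by
  unfold IsLD at *
  rw [Derivation.leibniz, smul_eq_mul, smul_eq_mul]
  linear_combination V * h + U * h'

lemma isLD_one : IsLD (1 : PowerSeries W) 0 := by
  unfold IsLD
  simp

lemma isLD_fac (c : W) {n : ℕ} (hn : 0 < n) : IsLD (fac c n) (ldTerm c n) := by
  unfold IsLD
  ext m
  rw [coeff_X_mul_derivative, fac, sub_mul, one_mul, mul_assoc]
  simp only [map_sub, PowerSeries.coeff_C_mul, PowerSeries.coeff_X_pow_mul', ldTerm,
    PowerSeries.coeff_mk, PowerSeries.coeff_one, PowerSeries.coeff_X_pow]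
  by_cases hm : m = 0
  · subst hm
    simp [hn.ne']
  by_cases hmn : m = n
  · subst hmn
    simp [hm, Nat.pos_of_ne_zero hm, Nat.div_self hn]
  by_cases hd : n ∣ m
  · obtain ⟨t, rfl⟩ := hd
    rcases t with _ | _ | t
    · simp at hm
    · simp at hmn
    have h1 : n ≤ n * (t + 1 + 1) := Nat.le_mul_of_pos_right _ (by omega)
    have h2 : n * (t + 1 + 1) - n = n * (t + 1) := by
      rw [show n * (t + 1 + 1) = n * (t + 1) + n by ring]; simp
    simp [hn.ne', h1, h2, hn, hmn, Nat.mul_div_cancel_left _ hn]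
    ring
  · by_cases hle : n ≤ m
    · have : ¬ n ∣ m - n := by
        rw [Nat.dvd_sub_self_right]; omega
      simp [hm, hmn, hd, this]
    · simp [hm, hmn, hd, hle]

lemma isLD_prod {ι : Type*} (s : Multiset ι) (c : ι → W) (n : ι → ℕ) (hn : ∀ i ∈ s, 0 < n i) :
    IsLD (s.map fun i => fac (c i) (n i)).prod (s.map fun i => ldTerm (c i) (n i)).sum := by
  induction s using Multiset.induction with
  | empty => simpa using isLD_one
  | cons a s ih =>
    simp only [Multiset.map_cons, Multiset.prod_cons, Multiset.sum_cons]
    exact (isLD_fac _ (hn a (by simp))).mul (ih fun i hi => hn i (by simp [hi]))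

lemma constantCoeff_prod_fac {ι : Type*} (s : Multiset ι) (c : ι → W) (n : ι → ℕ)
    (hn : ∀ i ∈ s, 0 < n i) :
    PowerSeries.constantCoeff (s.map fun i => fac (c i) (n i)).prod = 1 := by
  induction s using Multiset.induction with
  | empty => simp
  | cons a s ih =>
    have := hn a (by simp)
    simp only [Multiset.map_cons, Multiset.prod_cons, map_mul,
      ih fun i hi => hn i (by simp [hi])]
    simp [fac, this.ne']

/-- Logarithmic derivatives of series agreeing up to order `N` agree up to order `N`. -/
lemma IsLD.congr_trunc {U V S T : PowerSeries W} (h : IsLD U S) (h' : IsLD V T)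
    (hU : PowerSeries.constantCoeff U = 1) {N : ℕ} (hUV : PowerSeries.X ^ N ∣ U - V) :
    PowerSeries.X ^ N ∣ S - T := by
  have h1 : PowerSeries.X ^ N ∣
      PowerSeries.X * PowerSeries.derivative W (U - V) := by
    rw [PowerSeries.X_pow_dvd_iff] at hUV ⊢
    intro m hm
    rw [coeff_X_mul_derivative, hUV m hm, mul_zero]
  have hunit : IsUnit U := by
    rw [PowerSeries.isUnit_iff_constantCoeff, hU]; exact isUnit_one
  rw [← hunit.dvd_mul_left]
  unfold IsLD at h h'
  have : U * (S - T) = PowerSeries.X * PowerSeries.derivative W (U - V) - (U - V) * T := by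
    rw [map_sub]; linear_combination -h + h'
  rw [this]
  exact dvd_sub h1 (hUV.mul_right T)

/-- Writing `t = 2 ^ s u` with `u` odd, this holds because `s + 1 ≤ 2 ^ s ≤ t`. -/
lemma two_pow_succ_dvd {k n t : ℕ} (ht : 0 < t) (h : 2 ^ k ∣ n * t) :
    2 ^ (k + 1) ∣ n * 2 ^ t := by
  obtain ⟨s, u, hu, rfl⟩ := Nat.exists_eq_two_pow_mul_odd ht.ne'
  have h1 : 2 ^ k ∣ n * 2 ^ s := by
    rw [← mul_assoc] at h
    exact Nat.Coprime.dvd_of_dvd_mul_right (Nat.Coprime.pow_left _ hu.coprime_two_left) h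
  have h2 : s + 1 ≤ 2 ^ s * u :=
    (Nat.lt_two_pow_self (n := s)).trans_le (Nat.le_mul_of_pos_right _ hu.pos)
  have h3 : 2 ^ (k + 1) ∣ n * 2 ^ (s + 1) := by
    rw [pow_succ, pow_succ, ← mul_assoc]; exact mul_dvd_mul_right h1 2
  exact h3.trans (mul_dvd_mul_left _ (pow_dvd_pow 2 h2))

/-- A series congruent to `1` modulo `2` up to order `N` is, up to order `N`, a product of
factors `1 - c X ^ n` with `2 ∣ c`. -/
lemma exists_prod_fac {K : Type*} [CommRing K] (φ : W →+* K) (hφ2 : φ 2 = 0)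
    (hφ : ∀ w, φ w = 0 → 2 ∣ w) (U : PowerSeries W) (hU : PowerSeries.constantCoeff U = 1)
    (N : ℕ) (hUN : ∀ m, 0 < m → m ≤ N → φ (PowerSeries.coeff m U) = 0) :
    ∃ c : ℕ → W, (∀ n, 2 ∣ c n) ∧
      PowerSeries.X ^ (N + 1) ∣ U - ∏ n ∈ Finset.Icc 1 N, fac (c n) n := by
  induction N with
  | zero =>
    refine ⟨fun _ => 0, by simp, ?_⟩
    simp [PowerSeries.X_dvd_iff, hU]
  | succ j ih =>
    obtain ⟨c, hc, hd⟩ := ih fun m h1 h2 => hUN m h1 (by omega)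
    set Q := ∏ n ∈ Finset.Icc 1 j, fac (c n) n with hQ
    have hQ0 : PowerSeries.constantCoeff Q = 1 :=
      constantCoeff_prod_fac (Finset.Icc 1 j).val c id
        (fun i (hi : i ∈ Finset.Icc 1 j) => (Finset.mem_Icc.1 hi).1)
    have hQmap : PowerSeries.map φ Q = 1 := by
      rw [hQ, map_prod]
      refine Finset.prod_eq_one fun n _ => ?_
      obtain ⟨d, hd⟩ := hc n
      simp [fac, hd, hφ2]
    set e := PowerSeries.coeff (j + 1) U - PowerSeries.coeff (j + 1) Q with he
    have he2 : 2 ∣ e := by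
      apply hφ
      have := congrArg (PowerSeries.coeff (j + 1)) hQmap
      rw [PowerSeries.coeff_map] at this
      rw [he, map_sub, hUN _ (by omega) le_rfl, this]
      simp [PowerSeries.coeff_one]
    -- the new factor `1 + e X ^ (j + 1)` corrects the coefficient of `X ^ (j + 1)`
    refine ⟨Function.update c (j + 1) (-e), ?_, ?_⟩
    · intro n
      by_cases hn : n = j + 1
      · subst hn; simpa using he2
      · simpa [hn] using hc n
    · rw [Finset.prod_Icc_succ_top (by omega)]
      have : ∏ n ∈ Finset.Icc 1 j, fac (Function.update c (j + 1) (-e) n) n = Q := by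
        refine Finset.prod_congr rfl fun n hn => ?_
        have : n ≠ j + 1 := by have := Finset.mem_Icc.1 hn; omega
        simp [this]
      rw [this, Function.update_self]
      have h2 : U - Q * fac (-e) (j + 1) =
          (U - Q) - PowerSeries.X ^ (j + 1) * (PowerSeries.C e * Q) := by
        simp [fac]; ring
      rw [h2]
      rw [PowerSeries.X_pow_dvd_iff] at hd ⊢
      intro m hm
      rw [map_sub, PowerSeries.coeff_X_pow_mul']
      by_cases hmj : m < j + 1
      · rw [hd m hmj, if_neg (by omega), sub_zero]
      · obtain rfl : m = j + 1 := by omega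
        simp [hQ0, ← he]

/-- If `U ≡ 1` modulo `2` up to order `N`, then the coefficient of `X ^ m`, `m ≤ N`, in the
logarithmic derivative of `U` is divisible by twice the power of two dividing `m`. -/
lemma IsLD.two_pow_dvd {K : Type*} [CommRing K] (φ : W →+* K) (hφ2 : φ 2 = 0)
    (hφ : ∀ w, φ w = 0 → 2 ∣ w) {U T : PowerSeries W} (hUT : IsLD U T)
    (hU : PowerSeries.constantCoeff U = 1)
    {N : ℕ} (hUN : ∀ m, 0 < m → m ≤ N → φ (PowerSeries.coeff m U) = 0)
    {m k : ℕ} (hm : 0 < m) (hmN : m ≤ N) (hk : 2 ^ k ∣ m) :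
    2 ^ (k + 1) ∣ PowerSeries.coeff m T := by
  obtain ⟨c, hc, hd⟩ := exists_prod_fac φ hφ2 hφ U hU N hUN
  have hS := isLD_prod (Finset.Icc 1 N).val c id
        (fun i (hi : i ∈ Finset.Icc 1 N) => (Finset.mem_Icc.1 hi).1)
  have h1 := PowerSeries.X_pow_dvd_iff.1 (hUT.congr_trunc hS hU hd) m (by omega)
  rw [map_sub, sub_eq_zero] at h1
  rw [h1]
  change 2 ^ (k + 1) ∣ PowerSeries.coeff m (∑ n ∈ Finset.Icc 1 N, ldTerm (c n) n)
  rw [map_sum]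
  refine Finset.dvd_sum fun n hn => ?_
  rw [ldTerm, PowerSeries.coeff_mk]
  split_ifs with h
  · obtain ⟨⟨t, rfl⟩, -⟩ := h
    have hn0 : 0 < n := (Finset.mem_Icc.1 hn).1
    have ht : 0 < t := Nat.pos_of_mul_pos_left hm
    obtain ⟨d, hd⟩ := hc n
    rw [dvd_neg, Nat.mul_div_cancel_left _ hn0, hd, mul_pow, ← mul_assoc]
    refine Dvd.dvd.mul_right ?_ _
    exact_mod_cast Nat.cast_dvd_cast (α := W) (two_pow_succ_dvd ht hk)
  · simp

end LD

/-! ### The partition generating function -/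

section GF

open scoped PowerSeries.WithPiTopology in
lemma fac_mul_geom {R : Type*} [CommRing R] [TopologicalSpace R] [IsTopologicalRing R] [T2Space R]
    {n : ℕ} (hn : 0 < n) :
    fac (1 : R) n * ∑' j : ℕ, (PowerSeries.X : PowerSeries R) ^ (n * j) = 1 := by
  simp only [fac, map_one, one_mul, pow_mul]
  exact PowerSeries.WithPiTopology.one_sub_mul_tsum_pow_of_constantCoeff_eq_zero
    (by simp [hn.ne'])

open Classical PowerSeries.WithPiTopology in
/-- The partition generating function of `A` is inverted, up to order `N`, by the product of
`1 - X ^ a` over the `a ∈ A` with `a ≤ N`. -/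
lemma coeff_prod_mul_partition {R : Type*} [CommRing R] (A : Set ℕ) (N : ℕ) :
    PowerSeries.X ^ (N + 1) ∣
      (∏ a ∈ (Finset.Icc 1 N).filter (· ∈ A), fac (1 : R) a) *
        PowerSeries.mk (fun n => (partitionCount A n : R)) - 1 := by
  -- for the discrete topology, convergence means that each coefficient is eventually constant
  let _ : TopologicalSpace R := ⊥
  have : DiscreteTopology R := ⟨rfl⟩
  have hcard : ∀ n, partitionCount A n = (Nat.Partition.restricted n (· ∈ A)).card := by
    intro n
    rw [partitionCount, Nat.card_eq_fintype_card, Fintype.card_subtype]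
    rfl
  have hprod := Nat.Partition.hasProd_powerSeriesMk_card_restricted R (· ∈ A)
  simp_rw [← hcard] at hprod
  set F : PowerSeries R := PowerSeries.mk (fun n => (partitionCount A n : R)) with hF
  set D := ∏ a ∈ (Finset.Icc 1 N).filter (· ∈ A), fac (1 : R) a with hD
  set g : ℕ → PowerSeries R := fun i => if i + 1 ∈ A then
    ∑' j : ℕ, (PowerSeries.X : PowerSeries R) ^ ((i + 1) * j) else 1 with hg
  rw [PowerSeries.X_pow_dvd_iff]
  intro m hm
  have hlim := ((PowerSeries.WithPiTopology.continuous_coeff R m).tendsto _).comp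
    (Filter.Tendsto.const_mul D hprod)
  rw [SummationFilter.unconditional_filter, nhds_discrete, Filter.tendsto_pure] at hlim
  obtain ⟨s, hs, hsN⟩ := (hlim.and (Filter.eventually_ge_atTop (Finset.range N))).exists
  rw [map_sub, ← hs, sub_eq_zero]
  have hD' : D = ∏ i ∈ Finset.range N, if i + 1 ∈ A then fac (1 : R) (i + 1) else 1 := by
    rw [hD, Finset.prod_filter, Finset.range_eq_Ico, Finset.prod_Ico_add' (fun a => if a ∈ A then fac (1 : R) a else 1)]
    rfl
  have hone : D * ∏ i ∈ Finset.range N, g i = 1 := by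
    rw [hD', ← Finset.prod_mul_distrib]
    refine Finset.prod_eq_one fun i _ => ?_
    simp only [hg]
    split_ifs
    · exact fac_mul_geom (Nat.succ_pos i)
    · simp
  have hrest : PowerSeries.X ^ (N + 1) ∣ ∏ i ∈ s \ Finset.range N, g i - 1 := by
    refine Finset.prod_induction g (fun G => PowerSeries.X ^ (N + 1) ∣ G - 1) ?_ (by simp) ?_
    · intro a b ha hb
      have : a * b - 1 = (a - 1) * b + (b - 1) := by ring
      rw [this]
      exact dvd_add (ha.mul_right b) hb
    · intro i hi
      have hi' : N ≤ i := by simpa using (Finset.mem_sdiff.1 hi).2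
      simp only [hg]
      split_ifs
      · have := fac_mul_geom (R := R) (Nat.succ_pos i)
        rw [Nat.succ_eq_add_one] at this
        have h2 : (∑' j : ℕ, (PowerSeries.X : PowerSeries R) ^ ((i + 1) * j)) - 1 =
            PowerSeries.X ^ (i + 1) *
              ∑' j : ℕ, (PowerSeries.X : PowerSeries R) ^ ((i + 1) * j) := by
          simp only [fac, map_one, one_mul] at this
          linear_combination this
        rw [h2]
        exact Dvd.dvd.mul_right (pow_dvd_pow _ (by omega)) _
      · simp
  have hsplit : D * ∏ i ∈ s, g i = ∏ i ∈ s \ Finset.range N, g i := by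
    rw [← Finset.prod_sdiff hsN, mul_left_comm, hone, mul_one]
  have := PowerSeries.X_pow_dvd_iff.1 hrest m hm
  rw [map_sub, sub_eq_zero] at this
  rw [← this, ← hsplit]
  rfl

end GF

/-! ### Witt vectors and periodicity of the restricted divisor sum -/

section Witt

/-- The sum of the divisors of `n` lying in `A`. -/
noncomputable def sigA (A : Set ℕ) (n : ℕ) : ℕ := by
  classical exact ∑ d ∈ n.divisors with d ∈ A, d

local notation "KK" => AlgebraicClosure (ZMod 2)
local notation "WW" => WittVector 2 (AlgebraicClosure (ZMod 2))

/-- The normalization `P(0) = 1` turns the splitting of `P` into a product of `1 - α X`, where the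
`α` are the inverses of the roots. -/
lemma exists_roots (P : Polynomial (ZMod 2)) (hP : P.coeff 0 = 1) (hq : qOf P ≠ 0) :
    ∃ s : Multiset KK, (∀ α ∈ s, α ^ qOf P = 1) ∧
      (P.map (algebraMap (ZMod 2) KK) : PowerSeries KK) = (s.map fun α => fac α 1).prod := by
  have hmem := Nat.sInf_mem (s := {m | 0 < m ∧ ∀ Q : Polynomial (ZMod 2), Irreducible Q → Q ∣ P →
    Q ∣ X ^ m - 1}) (Nat.nonempty_of_pos_sInf (Nat.pos_of_ne_zero hq))
  have hdvd : ∀ Q : Polynomial (ZMod 2), Irreducible Q → Q ∣ P → Q ∣ X ^ qOf P - 1 := hmem.2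
  set R := P.map (algebraMap (ZMod 2) KK) with hR
  have hP0 : P ≠ 0 := by rintro rfl; simp at hP
  have hR0 : R ≠ 0 := (Polynomial.map_ne_zero_iff (algebraMap (ZMod 2) KK).injective).2 hP0
  have hRc : R.coeff 0 = 1 := by simp [hR, hP]
  have hroot : ∀ β ∈ R.roots, β ≠ 0 ∧ β ^ qOf P = 1 := by
    intro β hβ
    have hβ' : R.eval β = 0 := (Polynomial.mem_roots hR0).1 hβ
    refine ⟨?_, ?_⟩
    · rintro rfl
      rw [← Polynomial.coeff_zero_eq_eval_zero, hRc] at hβ'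
      exact one_ne_zero hβ'
    · have hint : IsIntegral (ZMod 2) β := Algebra.IsIntegral.isIntegral β
      have h1 : minpoly (ZMod 2) β ∣ P := by
        apply minpoly.dvd
        rwa [Polynomial.aeval_def, ← Polynomial.eval_map]
      obtain ⟨Q, hQ⟩ := hdvd _ (minpoly.irreducible hint) h1
      have := congrArg (Polynomial.aeval β) hQ
      simpa [sub_eq_zero] using this
  have hsplit := (IsAlgClosed.splits R).eq_prod_roots
  refine ⟨R.roots.map (·⁻¹), ?_, ?_⟩
  · intro α hα
    obtain ⟨β, hβ, rfl⟩ := Multiset.mem_map.1 hα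
    rw [inv_pow, (hroot β hβ).2, inv_one]
  · have key : ∀ s : Multiset KK, (∀ β ∈ s, β ≠ 0) →
        (s.map fun β => (X - C β : KK[X])).prod =
          C ((s.map fun β => -β).prod) * (s.map fun β => (1 - C β⁻¹ * X : KK[X])).prod := by
      intro s hs
      induction s using Multiset.induction with
      | empty => simp
      | cons β s ih =>
        simp only [Multiset.map_cons, Multiset.prod_cons, ih fun b hb => hs b (by simp [hb])]
        have : (X - C β : KK[X]) = C (-β) * (1 - C β⁻¹ * X) := by
          rw [mul_sub, ← mul_assoc, ← C_mul, neg_mul, mul_inv_cancel₀ (hs β (by simp))]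
          simp; ring
        rw [this, C_mul]; ring
    have hR2 : R = (R.roots.map fun β => (1 - C β⁻¹ * X : KK[X])).prod := by
      rw [key _ fun β hβ => (hroot β hβ).1, ← mul_assoc, ← C_mul] at hsplit
      have h0 := congrArg (Polynomial.eval 0) hsplit
      rw [← Polynomial.coeff_zero_eq_eval_zero, hRc, Polynomial.eval_mul, Polynomial.eval_C,
        Polynomial.eval_multiset_prod] at h0
      simp only [Multiset.map_map, Function.comp_def, eval_sub, eval_one, eval_mul, eval_C, eval_X,
        mul_zero, sub_zero, Multiset.map_const', Multiset.prod_replicate, one_pow, mul_one] at h0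
      rw [← h0] at hsplit
      simpa using hsplit
    rw [hR2, ← hR2, Multiset.map_map]
    conv_lhs => rw [hR2]
    rw [← Polynomial.coeToPowerSeries.ringHom_apply, map_multiset_prod, Multiset.map_map]
    congr 1
    refine Multiset.map_congr rfl fun β _ => ?_
    simp [fac, Polynomial.coeToPowerSeries.ringHom_apply]

lemma constCoeff_two_dvd (w : WW) (h : WittVector.constantCoeff w = 0) : 2 ∣ w := by
  have := (WittVector.mem_span_p_iff_coeff_zero_eq_zero (p := 2) w).2 h
  simpa [Ideal.mem_span_singleton] using this

/-- Over the Witt vectors, `σ(A, m)` is the negative of a power sum of Teichmüller lifts, modulo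
twice the power of two dividing `m`. -/
lemma sigA_add_powerSum (P : Polynomial (ZMod 2)) (hP : P.coeff 0 = 1)
    (A : Set ℕ) (hA : ∀ n : ℕ, (partitionCount A n : ZMod 2) = P.coeff n) (hq : qOf P ≠ 0) :
    ∃ s : Multiset WW, (∀ ω ∈ s, ω ^ qOf P = 1) ∧
      ∀ m k : ℕ, 0 < m → 2 ^ k ∣ m →
        2 ^ (k + 1) ∣ ((sigA A m : WW) + (s.map fun ω => ω ^ m).sum) := by
  classical
  obtain ⟨s, hs, hPs⟩ := exists_roots P hP hq
  set τ := WittVector.teichmuller 2 (R := KK) with hτ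
  refine ⟨s.map τ, ?_, ?_⟩
  · intro ω hω
    obtain ⟨α, hα, rfl⟩ := Multiset.mem_map.1 hω
    rw [← map_pow, hs α hα, map_one]
  intro m k hm hk
  set φ : WW →+* KK := WittVector.constantCoeff with hφ
  have hφ2 : φ 2 = 0 := by
    rw [map_ofNat]
    exact CharTwo.two_eq_zero
  have hφτ : ∀ α, φ (τ α) = α := fun α => WittVector.teichmuller_coeff_zero 2 α
  have hφfac : ∀ (c : WW) n, PowerSeries.map φ (fac c n) = fac (φ c) n := by
    intro c n; simp [fac]
  set B := (Finset.Icc 1 m).filter (· ∈ A) with hB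
  set D : PowerSeries WW := ∏ a ∈ B, fac (1 : WW) a with hD
  set Q : PowerSeries WW := ((s.map τ).map fun ω => fac ω 1).prod with hQ
  have hBpos : ∀ i ∈ B.val, 0 < i := by
    intro i (hi : i ∈ B)
    exact (Finset.mem_Icc.1 (Finset.mem_filter.1 hi).1).1
  have hLD := (isLD_prod B.val (fun _ => (1 : WW)) id hBpos).mul
    (isLD_prod (s.map τ) id (fun _ => 1) fun _ _ => one_pos)
  have hD0 : PowerSeries.constantCoeff D = 1 :=
    constantCoeff_prod_fac B.val (fun _ => (1 : WW)) id hBpos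
  have hQ0 : PowerSeries.constantCoeff Q = 1 :=
    constantCoeff_prod_fac (s.map τ) id (fun _ => 1) fun _ _ => one_pos
  have hmap : PowerSeries.map φ (D * Q) = (∏ a ∈ B, fac (1 : KK) a) *
      PowerSeries.mk (fun n => (partitionCount A n : KK)) := by
    rw [map_mul]
    congr 1
    · rw [hD, map_prod]
      exact Finset.prod_congr rfl fun a _ => by rw [hφfac, map_one]
    · rw [hQ, map_multiset_prod, Multiset.map_map, Multiset.map_map]
      have : (PowerSeries.mk fun n => (partitionCount A n : KK)) =
          (P.map (algebraMap (ZMod 2) KK) : PowerSeries KK) := by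
        ext n
        rw [PowerSeries.coeff_mk, Polynomial.coeff_coe, Polynomial.coeff_map, ← hA, map_natCast]
      rw [this, hPs]
      congr 1
      refine Multiset.map_congr rfl fun α _ => ?_
      simp only [Function.comp_apply]
      rw [hφfac, hφτ]
  have hUN : ∀ j, 0 < j → j ≤ m → φ (PowerSeries.coeff j (D * Q)) = 0 := by
    intro j hj hjm
    rw [← PowerSeries.coeff_map, hmap]
    have := PowerSeries.X_pow_dvd_iff.1 (coeff_prod_mul_partition (R := KK) A m) j (by omega)
    rw [map_sub, sub_eq_zero] at this
    rw [this, PowerSeries.coeff_one, if_neg hj.ne']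
  have hmain := IsLD.two_pow_dvd φ hφ2 constCoeff_two_dvd hLD
    (by rw [map_mul]; exact (congrArg₂ (· * ·) hD0 hQ0).trans (one_mul 1)) hUN hm le_rfl hk
  rw [map_add] at hmain
  have e1 : PowerSeries.coeff m (Multiset.map (fun i => ldTerm (1 : WW) (id i)) B.val).sum =
      -(sigA A m : WW) := by
    change PowerSeries.coeff m (∑ a ∈ B, ldTerm (1 : WW) a) = _
    have hset : (B.filter fun a => a ∣ m ∧ 0 < m) = m.divisors.filter (· ∈ A) := by
      ext a
      simp only [hB, Finset.mem_filter, Finset.mem_Icc, Nat.mem_divisors]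
      constructor
      · rintro ⟨⟨-, h2⟩, h3, -⟩; exact ⟨⟨h3, hm.ne'⟩, h2⟩
      · rintro ⟨⟨h1, -⟩, h2⟩
        exact ⟨⟨⟨Nat.pos_of_dvd_of_pos h1 hm, Nat.le_of_dvd hm h1⟩, h2⟩, h1, hm⟩
    rw [map_sum]
    simp only [ldTerm, PowerSeries.coeff_mk, one_pow, mul_one]
    rw [← Finset.sum_filter, hset, Finset.sum_neg_distrib, sigA, Nat.cast_sum]
  have e2 : PowerSeries.coeff m (Multiset.map (fun i => ldTerm (id i) 1) (s.map τ)).sum =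
      -((s.map τ).map fun ω => ω ^ m).sum := by
    generalize s.map τ = t
    rw [map_multiset_sum, Multiset.map_map,
      ← Multiset.sum_map_neg', Multiset.map_map]
    refine congrArg Multiset.sum (Multiset.map_congr rfl fun ω _ => ?_)
    simp [ldTerm, hm]
  rw [e1, e2, ← neg_add, dvd_neg] at hmain
  exact hmain

/-- Divisibility by powers of two of an integer can be tested in the Witt vectors, where `2` is a
nonunit and not a zero divisor. -/
lemma int_dvd_of_witt_dvd (j : ℕ) (z : ℤ) (h : (2 : WW) ^ j ∣ (z : WW)) : (2 : ℤ) ^ j ∣ z := by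
  induction j generalizing z with
  | zero => simp
  | succ j ih =>
    have h2 : (2 : ℤ) ∣ z := by
      obtain ⟨w, hw⟩ := (dvd_pow_self (2 : WW) (Nat.succ_ne_zero j)).trans h
      have := congrArg (WittVector.constantCoeff (p := 2) (R := KK)) hw
      rw [map_mul, map_ofNat, map_intCast, CharTwo.two_eq_zero (R := KK), zero_mul] at this
      exact_mod_cast (CharP.intCast_eq_zero_iff KK 2 z).1 this
    obtain ⟨y, rfl⟩ := h2
    have h20 : (2 : WW) ≠ 0 := by exact_mod_cast WittVector.p_nonzero 2 KK
    rw [pow_succ', Int.cast_mul, Int.cast_ofNat] at h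
    rw [pow_succ']
    exact mul_dvd_mul_left 2 (ih y ((mul_dvd_mul_iff_left h20).1 h))

/-- A divisor of `2 N` not dividing `N` has the same power of two as `2 N`. -/
lemma sigA_double (A : Set ℕ) {N k : ℕ} (hN : 0 < N) (hk : 2 ^ k ∣ N) :
    sigA A (2 * N) ≡ sigA A N [MOD 2 ^ (k + 1)] := by
  classical
  unfold sigA
  have hsub : (N.divisors.filter (· ∈ A)) ⊆ ((2 * N).divisors.filter (· ∈ A)) :=
    Finset.filter_subset_filter _ (Nat.divisors_subset_of_dvd (by omega) (Dvd.intro_left 2 rfl))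
  rw [← Finset.sum_sdiff hsub]
  have : 2 ^ (k + 1) ∣ ∑ d ∈ ((2 * N).divisors.filter (· ∈ A)) \ (N.divisors.filter (· ∈ A)), d := by
    refine Finset.dvd_sum fun d hd => ?_
    simp only [Finset.mem_sdiff, Finset.mem_filter, Nat.mem_divisors] at hd
    obtain ⟨⟨⟨⟨e, he⟩, -⟩, hdA⟩, hnd⟩ := hd
    have hdN : ¬ d ∣ N := fun h => hnd ⟨⟨h, hN.ne'⟩, hdA⟩
    have hodd : Odd e := by
      by_contra hcon
      rw [Nat.not_odd_iff_even] at hcon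
      obtain ⟨f, rfl⟩ := hcon
      exact hdN ⟨f, by linarith⟩
    have h1 : 2 ^ (k + 1) ∣ d * e := by
      rw [← he, pow_succ']; exact mul_dvd_mul_left 2 hk
    exact Nat.Coprime.dvd_of_dvd_mul_right (Nat.Coprime.pow_left _ hodd.coprime_two_left) h1
  simpa using (Nat.modEq_zero_iff_dvd.2 this).add_right (∑ d ∈ N.divisors with d ∈ A, d)

lemma sigA_two_pow_mul (A : Set ℕ) {N k : ℕ} (hN : 0 < N) (hk : 2 ^ k ∣ N) (a : ℕ) :
    sigA A (2 ^ a * N) ≡ sigA A N [MOD 2 ^ (k + 1)] := by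
  induction a with
  | zero => simp; rfl
  | succ a ih =>
    rw [pow_succ' 2 a, mul_assoc]
    exact (sigA_double A (by positivity) (hk.mul_left _)).trans ih

/-- Modulo `2 ^ (k + 1)`, the value of `σ(A, 2 ^ k n)` depends only on the class of `n` modulo `q`,
up to multiplication by powers of two. -/
lemma sigA_congr (P : Polynomial (ZMod 2)) (hP : P.coeff 0 = 1)
    (A : Set ℕ) (hA : ∀ n : ℕ, (partitionCount A n : ZMod 2) = P.coeff n) (hq : qOf P ≠ 0)
    (k : ℕ) {n n' a b : ℕ} (hn : 0 < n) (hn' : 0 < n')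
    (h : (2 : ZMod (qOf P)) ^ a * n = 2 ^ b * n') :
    sigA A (2 ^ k * n) ≡ sigA A (2 ^ k * n') [MOD 2 ^ (k + 1)] := by
  have h1 : ∀ a m, 0 < m → sigA A (2 ^ k * (2 ^ a * m)) ≡ sigA A (2 ^ k * m) [MOD 2 ^ (k + 1)] := by
    intro a m hm
    rw [mul_left_comm]
    exact sigA_two_pow_mul A (by positivity) (Dvd.intro _ rfl) a
  refine ((h1 a n hn).symm.trans ?_).trans (h1 b n' hn')
  obtain ⟨s, hs, hmain⟩ := sigA_add_powerSum P hP A hA hq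
  set u := 2 ^ a * n with hu
  set v := 2 ^ b * n' with hv
  have huv : u ≡ v [MOD qOf P] := by
    rw [← ZMod.natCast_eq_natCast_iff]
    simpa [hu, hv] using h
  have hsum : (s.map fun ω => ω ^ (2 ^ k * u)).sum = (s.map fun ω => ω ^ (2 ^ k * v)).sum := by
    refine congrArg Multiset.sum (Multiset.map_congr rfl fun ω hω => ?_)
    exact pow_eq_pow_of_modEq (huv.mul_left _) (hs ω hω)
  have hd := dvd_sub (hmain (2 ^ k * v) k (by positivity) (Dvd.intro _ rfl))
    (hmain (2 ^ k * u) k (by positivity) (Dvd.intro _ rfl))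
  rw [hsum, add_sub_add_right_eq_sub] at hd
  rw [Nat.modEq_iff_dvd]
  have := int_dvd_of_witt_dvd (k + 1) ((sigA A (2 ^ k * v) : ℤ) - sigA A (2 ^ k * u))
    (by push_cast; exact hd)
  exact_mod_cast this

end Witt

/-! ### Sieving by sets of primes -/

section Sieve
variable {R : Type*} [CommRing R]

/-- The sum of `f d` over the divisors `d` of `m` having, for each `p ∈ T`, the same `p`-adic
valuation as `m`: for `d ∣ m` and `p ∣ m` this amounts to `d ∤ m / p`. -/
def fullSum (f : ℕ → R) (T : Finset ℕ) (m : ℕ) : R :=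
  ∑ d ∈ m.divisors with ∀ p ∈ T, ¬ d ∣ m / p, f d

lemma dvd_div_div_iff {p p' m d : ℕ} (hp : p.Prime) (hp' : p'.Prime) (hne : p ≠ p')
    (h : p ∣ m) (h' : p' ∣ m) (hd : d ∣ m / p) : d ∣ m / p / p' ↔ d ∣ m / p' := by
  have hcop : Nat.Coprime p p' := (Nat.coprime_primes hp hp').2 hne
  obtain ⟨t, rfl⟩ := hcop.mul_dvd_of_dvd_of_dvd h h'
  have e1 : p * p' * t / p = p' * t := by
    rw [mul_assoc, Nat.mul_div_cancel_left _ hp.pos]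
  have e2 : p * p' * t / p' = p * t := by
    rw [mul_comm p p', mul_assoc, Nat.mul_div_cancel_left _ hp'.pos]
  rw [e1] at hd ⊢
  rw [e2, Nat.mul_div_cancel_left _ hp'.pos]
  refine ⟨fun hh => hh.mul_left p, fun hh => ?_⟩
  have := Nat.dvd_gcd hh hd
  rwa [Nat.gcd_mul_right, hcop.gcd_eq_one, one_mul] at this

lemma fullSum_insert (f : ℕ → R) {T : Finset ℕ} {p m : ℕ} (hp : p.Prime) (hpT : p ∉ T)
    (hT : ∀ p' ∈ T, p'.Prime) (hm : 0 < m) (hpm : p ∣ m) (hTm : ∀ p' ∈ T, p' ∣ m) :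
    fullSum f (insert p T) m = fullSum f T m - fullSum f T (m / p) := by
  unfold fullSum
  rw [eq_sub_iff_add_eq,
    ← Finset.sum_filter_add_sum_filter_not (m.divisors.filter fun d => ∀ p ∈ T, ¬ d ∣ m / p)
      (fun d => d ∣ m / p), add_comm]
  congr 1
  · refine Finset.sum_congr ?_ fun _ _ => rfl
    ext d
    simp only [Finset.mem_filter, Nat.mem_divisors]
    have hdm : d ∣ m / p → d ∣ m := fun h => h.trans (Nat.div_dvd_of_dvd hpm)
    have hmp : m / p ≠ 0 := (Nat.div_pos (Nat.le_of_dvd hm hpm) hp.pos).ne'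
    constructor
    · rintro ⟨⟨h1, -⟩, h2⟩
      exact ⟨⟨⟨hdm h1, hm.ne'⟩, fun p' hp' hh => h2 p' hp' ((dvd_div_div_iff hp (hT p' hp')
        (by rintro rfl; exact hpT hp') hpm (hTm p' hp') h1).2 hh)⟩, h1⟩
    · rintro ⟨⟨-, h2⟩, h1⟩
      exact ⟨⟨h1, hmp⟩, fun p' hp' hh => h2 p' hp' ((dvd_div_div_iff hp (hT p' hp')
        (by rintro rfl; exact hpT hp') hpm (hTm p' hp') h1).1 hh)⟩
  · refine Finset.sum_congr ?_ fun _ _ => rfl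
    ext d
    simp only [Finset.mem_filter, Finset.forall_mem_insert]
    tauto

lemma fullSum_empty (f : ℕ → R) (m : ℕ) : fullSum f ∅ m = ∑ d ∈ m.divisors, f d := by
  simp [fullSum]

/-- If all the sums `fullSum f T m` vanish then so does `f` at the odd multiples of the primes
in `T`. -/
lemma eq_zero_of_fullSum (f : ℕ → R) {T : Finset ℕ} (hT : ∀ p ∈ T, p.Prime)
    (hH : ∀ m, Odd m → (∀ p ∈ T, p ∣ m) → fullSum f T m = 0) (m : ℕ) (hm : Odd m)
    (hTm : ∀ p ∈ T, p ∣ m) : f m = 0 := by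
  induction m using Nat.strong_induction_on with
  | _ m ih =>
    have h := hH m hm hTm
    have hmem : m ∈ m.divisors.filter (fun d => ∀ p ∈ T, ¬ d ∣ m / p) := by
      simp only [Finset.mem_filter, Nat.mem_divisors]
      refine ⟨⟨dvd_rfl, hm.pos.ne'⟩, fun p hp hd => ?_⟩
      have h1 := Nat.le_of_dvd (Nat.div_pos (Nat.le_of_dvd hm.pos (hTm p hp)) (hT p hp).pos) hd
      have h2 := Nat.div_lt_self hm.pos (hT p hp).one_lt
      omega
    rw [fullSum, Finset.sum_eq_single_of_mem m hmem] at h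
    · exact h
    intro d hd hne
    simp only [Finset.mem_filter, Nat.mem_divisors] at hd
    obtain ⟨⟨hdm, -⟩, hd2⟩ := hd
    refine ih d (lt_of_le_of_ne (Nat.le_of_dvd hm.pos hdm) hne) (hm.of_dvd_nat hdm) fun p hp => ?_
    by_contra hpd
    have hcop : Nat.Coprime d p := ((Nat.Prime.coprime_iff_not_dvd (hT p hp)).2 hpd).symm
    apply hd2 p hp
    refine hcop.dvd_of_dvd_mul_left ?_
    rwa [Nat.mul_div_cancel' (hTm p hp)]

/-- If `g`, the summatory function of `f`, depends only on the parity of the number of primes of `T` removed from the argument,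
then the signed sum over the subsets of `T` collapses to `2 ^ (|T| - 1)` times a difference. -/
lemma fullSum_coherent (f g : ℕ → R) (hfg : ∀ n, Odd n → ∑ d ∈ n.divisors, f d = g n)
    (S : Set ℕ) (hS : ∀ p ∈ S, p.Prime)
    (h1 : ∀ p ∈ S, ∀ p' ∈ S, ∀ m, Odd m → g (p * (p' * m)) = g m)
    (h2 : ∀ p ∈ S, ∀ p' ∈ S, ∀ m, Odd m → g (p * m) = g (p' * m))
    (T : Finset ℕ) (hTne : T.Nonempty) (hTS : ∀ p ∈ T, p ∈ S) :
    ∃ p0 ∈ T, ∀ m, Odd m → (∀ p ∈ T, p ∣ m) →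
      fullSum f T m = 2 ^ (T.card - 1) * (g m - g (m / p0)) := by
  induction hTne using Finset.Nonempty.cons_induction with
  | singleton p =>
    refine ⟨p, by simp, fun m hm hpm => ?_⟩
    have hpm : p ∣ m := hpm p (by simp)
    have hp := hS p (hTS p (by simp))
    have := fullSum_insert f hp (Finset.notMem_empty p) (by simp) hm.pos hpm (by simp)
    rw [insert_empty_eq] at this
    rw [this, fullSum_empty, fullSum_empty, hfg m hm,
      hfg _ (hm.of_dvd_nat (Nat.div_dvd_of_dvd hpm))]
    simp
  | cons p T hpT hTne ih =>
    obtain ⟨p0, hp0, ih⟩ := ih fun p' hp' => hTS p' (by simp [hp'])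
    refine ⟨p0, by simp [hp0], fun m hm hdvd => ?_⟩
    have hpS := hTS p (by simp)
    have hp0S := hTS p0 (by simp [hp0])
    have hp := hS p hpS
    have hpm : p ∣ m := hdvd p (by simp)
    have hTm : ∀ p' ∈ T, p' ∣ m := fun p' hp' => hdvd p' (by simp [hp'])
    have hTp : ∀ p' ∈ T, p'.Prime := fun p' hp' => hS p' (hTS p' (by simp [hp']))
    have hne : ∀ p' ∈ T, p ≠ p' := by rintro p' hp' rfl; exact hpT hp'
    have hodd : Odd (m / p) := hm.of_dvd_nat (Nat.div_dvd_of_dvd hpm)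
    have hTmp : ∀ p' ∈ T, p' ∣ m / p := by
      intro p' hp'
      have hcop : Nat.Coprime p p' := (Nat.coprime_primes hp (hTp p' hp')).2 (hne p' hp')
      refine hcop.symm.dvd_of_dvd_mul_left ?_
      rw [Nat.mul_div_cancel' hpm]
      exact hTm p' hp'
    rw [Finset.cons_eq_insert, fullSum_insert f hp hpT hTp hm.pos hpm hTm, ih m hm hTm,
      ih (m / p) hodd hTmp, Finset.card_insert_of_notMem hpT]
    obtain ⟨u, rfl⟩ := hpm
    rw [Nat.mul_div_cancel_left _ hp.pos] at hTmp hodd ⊢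
    obtain ⟨t, rfl⟩ := hTmp p0 hp0
    have hp0pos := (hTp p0 hp0).pos
    have e1 : p * (p0 * t) / p0 = p * t := by
      rw [mul_left_comm, Nat.mul_div_cancel_left _ hp0pos]
    have hot : Odd t := hodd.of_dvd_nat (Dvd.intro_left _ rfl)
    rw [e1, Nat.mul_div_cancel_left _ hp0pos, h1 p hpS p0 hp0S t hot, h2 p hpS p0 hp0S t hot]
    have hc : T.card + 1 - 1 = (T.card - 1) + 1 := by
      have := Finset.card_pos.2 hTne; omega
    rw [hc]
    ring

end Sieve

/-! ### Splitting divisors by their odd part -/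

section Layers
open Classical in
/-- The contribution to `σ(A, 2 ^ k n)` of the divisors with odd part `d`. -/
noncomputable def layer (A : Set ℕ) (k d : ℕ) : ℕ :=
  d * ∑ i ∈ Finset.range (k + 1), if 2 ^ i * d ∈ A then 2 ^ i else 0

lemma sigA_eq_sum_layer (A : Set ℕ) (k : ℕ) {n : ℕ} (hn : Odd n) :
    sigA A (2 ^ k * n) = ∑ d ∈ n.divisors, layer A k d := by
  classical
  have hcop : Nat.Coprime (2 ^ k) n := Nat.Coprime.pow_left _ hn.coprime_two_left
  unfold sigA layer
  rw [Finset.sum_filter, hcop.divisors_mul, Finset.sum_map]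
  refine (Finset.sum_attach (Nat.divisors (2 ^ k) ×ˢ n.divisors)
    (fun p => if p.1 * p.2 ∈ A then p.1 * p.2 else 0)).trans ?_
  rw [Finset.sum_product_right,
    Nat.divisors_prime_pow Nat.prime_two]
  refine Finset.sum_congr rfl fun d _ => ?_
  rw [Finset.sum_map, Finset.mul_sum]
  refine Finset.sum_congr rfl fun i _ => ?_
  simp [mul_comm]

/-- The sum of distinct powers of two `2 ^ i`, `i ≤ k`, in `layer A k m` is less than
`2 ^ (k + 1)`, so it can only vanish modulo `2 ^ (k + 1)` when it is empty. -/
lemma notMem_of_layer_eq_zero (A : Set ℕ) (k : ℕ) {m : ℕ} (hm : Odd m)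
    (h : (layer A k m : ZMod (2 ^ (k + 1))) = 0) : 2 ^ k * m ∉ A := by
  classical
  intro hmem
  rw [ZMod.natCast_eq_zero_iff, layer] at h
  have hcop : Nat.Coprime (2 ^ (k + 1)) m := Nat.Coprime.pow_left _ hm.coprime_two_left
  have h := hcop.dvd_of_dvd_mul_left h
  have hle : 2 ^ k ≤ ∑ i ∈ Finset.range (k + 1), if 2 ^ i * m ∈ A then 2 ^ i else 0 := by
    have := Finset.single_le_sum (f := fun i => if 2 ^ i * m ∈ A then 2 ^ i else 0)
      (fun i _ => Nat.zero_le _) (Finset.mem_range.2 (Nat.lt_succ_self k))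
    simpa [hmem] using this
  have hlt : (∑ i ∈ Finset.range (k + 1), if 2 ^ i * m ∈ A then 2 ^ i else 0) < 2 ^ (k + 1) := by
    refine lt_of_le_of_lt (Finset.sum_le_sum (g := fun i => 2 ^ i) fun i _ => ?_)
      (Nat.geomSum_lt le_rfl (by simp))
    split_ifs <;> simp
  have := Nat.eq_zero_of_dvd_of_lt h hlt
  have := Nat.two_pow_pos k
  omega

end Layers

/-! ### Bad and semi-bad primes -/

/-- No element of `A` is divisible by a bad prime. -/
lemma notMem_of_badPrime (P : Polynomial (ZMod 2)) (hP : P.coeff 0 = 1)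
    (A : Set ℕ) (hA : ∀ n : ℕ, (partitionCount A n : ZMod 2) = P.coeff n) (hq : qOf P ≠ 0)
    {p m : ℕ} (hp : p.Prime) (hbad : (p : ZMod (qOf P)) ∈ badE (qOf P)) (hpm : p ∣ m) (k : ℕ)
    (hm : Odd m) : 2 ^ k * m ∉ A := by
  refine notMem_of_layer_eq_zero A k hm ?_
  refine eq_zero_of_fullSum (fun d => (layer A k d : ZMod (2 ^ (k + 1)))) (T := {p}) (by simpa)
    ?_ m hm (by simpa)
  clear hpm hm m
  intro m hm hpm
  have hpm : p ∣ m := hpm p (by simp)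
  have := fullSum_insert (fun d => (layer A k d : ZMod (2 ^ (k + 1)))) hp
    (Finset.notMem_empty p) (by simp) hm.pos hpm (by simp)
  rw [insert_empty_eq] at this
  rw [this, fullSum_empty, fullSum_empty, ← Nat.cast_sum, ← Nat.cast_sum,
    ← sigA_eq_sum_layer A k hm,
    ← sigA_eq_sum_layer A k (hm.of_dvd_nat (Nat.div_dvd_of_dvd hpm)), sub_eq_zero,
    ZMod.natCast_eq_natCast_iff]
  obtain ⟨t, rfl⟩ := hpm
  rw [Nat.mul_div_cancel_left _ hp.pos]
  obtain ⟨i, -, hi⟩ := hbad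
  refine sigA_congr P hP A hA hq k (a := 0) (b := i) hm.pos (Nat.pos_of_mul_pos_left hm.pos) ?_
  push_cast
  rw [hi]; ring

/-- If `2 ^ k m ∈ A` with `m` odd, then at most `k + 1` primes of a coherent set divide `m`. -/
lemma notMem_of_coherent (P : Polynomial (ZMod 2)) (hP : P.coeff 0 = 1)
    (A : Set ℕ) (hA : ∀ n : ℕ, (partitionCount A n : ZMod 2) = P.coeff n) (hq : qOf P ≠ 0)
    (C : Set (ZMod (qOf P))) (hC : Coherent (qOf P) C)
    (T : Finset ℕ) (hTp : ∀ p ∈ T, p.Prime ∧ (p : ZMod (qOf P)) ∈ C) {k m : ℕ}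
    (hT : k + 2 ≤ T.card) (hTm : ∀ p ∈ T, p ∣ m) (hm : Odd m) : 2 ^ k * m ∉ A := by
  refine notMem_of_layer_eq_zero A k hm ?_
  refine eq_zero_of_fullSum (fun d => (layer A k d : ZMod (2 ^ (k + 1))))
    (fun p hp => (hTp p hp).1) ?_ m hm hTm
  clear hTm hm m
  intro m hm hTm
  have hmul := hC.2.2
  set S : Set ℕ := {p : ℕ | p.Prime ∧ (p : ZMod (qOf P)) ∈ C} with hS
  obtain ⟨p0, -, h⟩ := fullSum_coherent (fun d => (layer A k d : ZMod (2 ^ (k + 1))))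
    (fun n => (sigA A (2 ^ k * n) : ZMod (2 ^ (k + 1))))
    (fun n hn => by rw [sigA_eq_sum_layer A k hn, Nat.cast_sum]) S (fun p hp => hp.1)
    (fun p hp p' hp' t ht => by
      rw [ZMod.natCast_eq_natCast_iff]
      obtain ⟨i, -, hi⟩ := hmul _ hp.2 _ hp'.2
      refine sigA_congr P hP A hA hq k (a := 0) (b := i)
        (Nat.mul_pos hp.1.pos (Nat.mul_pos hp'.1.pos ht.pos)) ht.pos ?_
      push_cast
      rw [← hi]; ring)
    (fun p hp p' hp' t ht => by
      rw [ZMod.natCast_eq_natCast_iff]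
      -- `p p' = 2 ^ i` and `p p = 2 ^ j` give `2 ^ i p = p p' p = 2 ^ j p'`
      obtain ⟨i, -, hi⟩ := hmul _ hp.2 _ hp'.2
      obtain ⟨j, -, hj⟩ := hmul _ hp.2 _ hp.2
      refine sigA_congr P hP A hA hq k (a := i) (b := j)
        (Nat.mul_pos hp.1.pos ht.pos) (Nat.mul_pos hp'.1.pos ht.pos) ?_
      push_cast
      rw [← hi, ← hj]; ring)
    T (Finset.card_pos.1 (by omega)) hTp
  rw [h m hm hTm]
  have h0 : (2 : ZMod (2 ^ (k + 1))) ^ (T.card - 1) = 0 := by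
    have : 2 ^ (k + 1) ∣ 2 ^ (T.card - 1) := pow_dvd_pow 2 (by omega)
    exact_mod_cast (ZMod.natCast_eq_zero_iff _ _).2 this
  rw [h0, zero_mul]

lemma omegaS_finite (S : Set ℕ) {n : ℕ} (hn : 0 < n) :
    {p | p.Prime ∧ p ∣ n ∧ p ∈ S}.Finite :=
  (Set.finite_Iic n).subset fun _ hp => Nat.le_of_dvd hn hp.2.1

/-- Provided `2 ∉ S`, the value of `omegaS` only depends on the odd part. -/
lemma omegaS_two_pow_mul (S : Set ℕ) (hS : 2 ∉ S) (k m : ℕ) :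
    omegaS S (2 ^ k * m) = omegaS S m := by
  unfold omegaS
  congr 1
  ext p
  simp only [Set.mem_ofPred_eq]
  constructor
  · rintro ⟨hp, hd, hpS⟩
    refine ⟨hp, ?_, hpS⟩
    rcases hp.dvd_mul.1 hd with h | h
    · have := (Nat.prime_dvd_prime_iff_eq hp Nat.prime_two).1 (hp.dvd_of_dvd_pow h)
      exact absurd (this ▸ hpS) hS
    · exact h
  · rintro ⟨hp, hd, hpS⟩
    exact ⟨hp, hd.mul_left _, hpS⟩

/-- If `E'(q) ≠ ∅` and `𝒞` is a coherent set of semi-bad classes with `|𝒞| = r`, with `𝒮`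
the associated set of primes, then `A(P,x) ≤ V(2x)` for all `x > 1`. -/
theorem stmt11 (P : Polynomial (ZMod 2)) (hP : P.coeff 0 = 1)
    (A : Set ℕ) (hApos : ∀ a ∈ A, 0 < a)
    (hA : ∀ n : ℕ, (partitionCount A n : ZMod 2) = P.coeff n)
    (hE' : semiBadE (qOf P) ≠ ∅)
    (C : Set (ZMod (qOf P))) (hC : Coherent (qOf P) C)
    (hcard : C.ncard = orderOf (2 : ZMod (qOf P))) :
    ∀ x : ℝ, 1 < x →
      countA A x ≤ Vq (qOf P) {p : ℕ | p.Prime ∧ (p : ZMod (qOf P)) ∈ C} (2 * x) := by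
  intro x hx
  obtain ⟨c, hc⟩ := hC.1
  obtain ⟨-, -, i, hi, -⟩ := hC.2.1 c hc
  have hord : 0 < orderOf (2 : ZMod (qOf P)) := by omega
  -- in `ZMod 0 = ℤ` the element `2` has infinite order
  have hq : qOf P ≠ 0 := by
    intro h0
    rw [orderOf_pos_iff, isOfFinOrder_iff_pow_eq_one] at hord
    obtain ⟨n, hn, h⟩ := hord
    rw [h0] at h
    have h' : (2 : ℤ) ^ n = 1 := h
    have := one_lt_pow₀ (one_lt_two (α := ℤ)) hn.ne'
    omega
  set S : Set ℕ := {p : ℕ | p.Prime ∧ (p : ZMod (qOf P)) ∈ C} with hS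
  have h2S : 2 ∉ S := by
    intro h
    refine (hC.2.1 _ h.2).2.1 ⟨1 % orderOf (2 : ZMod (qOf P)), Nat.mod_lt _ hord, ?_⟩
    rw [pow_mod_orderOf]; simp
  -- `2 n / 2 ^ ω` is an integer `n'` with the same odd part, hence the same `ω`, as `n`
  have key : ∀ n ∈ A, ∃ n' : ℕ, 1 ≤ n' ∧ n' * 2 ^ omegaS S n' = 2 * n ∧
      ∀ p : ℕ, p.Prime → p ∣ n' → ¬ IsBadPrime (qOf P) p := by
    intro n hn
    obtain ⟨k, m, hm, rfl⟩ := Nat.exists_eq_two_pow_mul_odd (hApos n hn).ne'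
    have hw : omegaS S m ≤ k + 1 := by
      by_contra hcon
      have hfin := omegaS_finite S hm.pos
      refine notMem_of_coherent P hP A hA hq C hC hfin.toFinset ?_ (k := k) (m := m) ?_ ?_ hm hn
      · intro p hp
        exact ((Set.Finite.mem_toFinset _).1 hp).2.2
      · rw [← Set.ncard_eq_toFinset_card _ hfin]
        change k + 2 ≤ omegaS S m
        omega
      · intro p hp
        exact ((Set.Finite.mem_toFinset _).1 hp).2.1
    refine ⟨2 ^ (k + 1 - omegaS S m) * m, Nat.mul_pos (Nat.two_pow_pos _) hm.pos, ?_, ?_⟩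
    · rw [omegaS_two_pow_mul S h2S]
      calc 2 ^ (k + 1 - omegaS S m) * m * 2 ^ omegaS S m
          = 2 ^ (k + 1 - omegaS S m + omegaS S m) * m := by rw [pow_add]; ring
        _ = 2 * (2 ^ k * m) := by rw [Nat.sub_add_cancel hw, pow_succ]; ring
    · rintro p hp hd ⟨-, hp2, hbad⟩
      rcases hp.dvd_mul.1 hd with h | h
      · exact hp2 ((Nat.prime_dvd_prime_iff_eq hp Nat.prime_two).1 (hp.dvd_of_dvd_pow h))
      · exact notMem_of_badPrime P hP A hA hq hp hbad h k hm hn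
  choose! φ hφ1 hφ2 hφ3 using key
  refine Set.ncard_le_ncard_of_injOn φ ?_ ?_ ?_
  · rintro n ⟨hn, -, hnx⟩
    refine ⟨hφ1 n hn, ?_, hφ3 n hn⟩
    rw [hφ2 n hn]
    push_cast
    linarith
  · rintro n ⟨hn, -⟩ n' ⟨hn', -⟩ h
    have e1 := hφ2 n hn
    have e2 := hφ2 n' hn'
    rw [h] at e1
    omega
  · refine (Set.finite_Iic ⌊2 * x⌋₊).subset ?_
    rintro n ⟨-, hn, -⟩
    refine Nat.le_floor (le_trans ?_ hn)
    exact_mod_cast Nat.le_mul_of_pos_right n (Nat.two_pow_pos _)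
end

section
/- Let q be an odd integer ≥ 3, r the multiplicative order of 2 modulo q, 𝒞 a coherent set of semi-bad classes modulo q with |𝒞| = r, and 𝒮 the set of primes whose class modulo q lies in 𝒞. With δ(n) the indicator that n has no bad prime factor and V(x) = Σ_{n ≥ 1, n·2^{ω_𝒮(n)} ≤ x} δ(n), one has V(x) = O_q( x/(log x)^{c(q)·r/φ(q)} ) as x → ∞, where c(q) = 3/2 if E'(q) ≠ ∅ and c(q) = 1 otherwise. -/
open scoped Classical in
/-- The constant `c(q)`: `3/2` if `E'(q) ≠ ∅` and `1` otherwise. -/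
noncomputable def cq (q : ℕ) : ℝ := if semiBadE q ≠ ∅ then 3 / 2 else 1

/-! ### Primes in a residue class -/

/-- Primes in a unit class `a` satisfy `∑_{p ≡ a} p^{-s} ≤ φ(q)⁻¹ log (1/(s-1)) + O(1)` for
`1 < s ≤ 2`, uniformly in the truncation. The derivative of `∑_{n ≡ a} Λ(n) / (n^s log n)`
differs from that of `-φ(q)⁻¹ log (s-1)` by a function continuous up to `s = 1`. -/
theorem primeSum_class_le {q : ℕ} [NeZero q] {a : ZMod q} (ha : IsUnit a) :
    ∃ C : ℝ, ∀ s ∈ Set.Ioc (1 : ℝ) 2, ∀ N : ℕ,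
      ∑ p ∈ (Nat.primesBelow N).filter (fun p : ℕ => (p : ZMod q) = a), (p : ℝ) ^ (-s) ≤
        (q.totient : ℝ)⁻¹ * -Real.log (s - 1) + C := by
  set w : ℕ → ℝ := fun n =>
    ArithmeticFunction.vonMangoldt.residueClass a n / Real.log n with hw
  have hw0 : ∀ n, 0 ≤ w n := fun n =>
    div_nonneg (ArithmeticFunction.vonMangoldt.residueClass_nonneg a n) (Real.log_natCast_nonneg n)
  have hw1 : ∀ n, w n ≤ 1 := fun n =>
    div_le_one_of_le₀ ((ArithmeticFunction.vonMangoldt.residueClass_le a n).trans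
      ArithmeticFunction.vonMangoldt_le_log) (Real.log_natCast_nonneg n)
  set f : ℕ → ℂ := fun n => (w n : ℂ) with hf
  have habs : LSeries.abscissaOfAbsConv f ≤ 1 :=
    LSeries.abscissaOfAbsConv_le_of_le_const ⟨1, fun n _ => by
      simpa [hf, abs_of_nonneg (hw0 n)] using hw1 n⟩
  have hlt : ∀ s : ℝ, 1 < s → LSeries.abscissaOfAbsConv f < ((s : ℂ).re : EReal) := fun s hs =>
    habs.trans_lt (by rw [Complex.ofReal_re]; exact_mod_cast hs)
  have hlog : LSeries.logMul f =
      fun n => (ArithmeticFunction.vonMangoldt.residueClass a n : ℂ) := by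
    funext n
    have : Real.log n * w n = ArithmeticFunction.vonMangoldt.residueClass a n := by
      rcases eq_or_ne (Real.log n) 0 with h | h
      · have h1 : ArithmeticFunction.vonMangoldt.residueClass a n ≤ 0 :=
          ((ArithmeticFunction.vonMangoldt.residueClass_le a n).trans
            ArithmeticFunction.vonMangoldt_le_log).trans h.le
        rw [h, zero_mul]
        exact le_antisymm (ArithmeticFunction.vonMangoldt.residueClass_nonneg a n) h1
      · simp only [hw]; field_simp
    rw [← this, LSeries.logMul]
    simp only [hf]
    push_cast
    rfl
  -- the real L-series and its derivative
  set G : ℝ → ℝ := fun s => (LSeries f s).re with hG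
  have hGd : ∀ s : ℝ, 1 < s → HasDerivAt G
      (-((ArithmeticFunction.vonMangoldt.LFunctionResidueClassAux a s).re
        + (q.totient : ℝ)⁻¹ / (s - 1))) s := by
    intro s hs
    have h := (LSeries_hasDerivAt (hlt s hs)).real_of_complex
    convert h using 1
    rw [hlog, ArithmeticFunction.vonMangoldt.eqOn_LFunctionResidueClassAux ha (by simpa using hs)]
    have : (q.totient : ℂ)⁻¹ / ((s : ℂ) - 1) = (((q.totient : ℝ)⁻¹ / (s - 1) : ℝ) : ℂ) := by
      push_cast; rfl
    simp only [this, Complex.sub_re, Complex.neg_re, Complex.ofReal_re]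
    ring
  obtain ⟨K, hK⟩ : ∃ K, ∀ s ∈ Set.Icc (1 : ℝ) 2,
      ‖(ArithmeticFunction.vonMangoldt.LFunctionResidueClassAux a s).re‖ ≤ K := by
    apply isCompact_Icc.exists_bound_of_continuousOn
    refine Complex.continuous_re.comp_continuousOn
      ((ArithmeticFunction.vonMangoldt.continuousOn_LFunctionResidueClassAux a).comp
        Complex.continuous_ofReal.continuousOn ?_)
    intro s hs
    simpa using hs.1
  refine ⟨G 2 + K, fun s hs N => ?_⟩
  have hs0 : 0 < s - 1 := by linarith [hs.1]
  have hK0 : 0 ≤ K := (norm_nonneg _).trans (hK 2 (by norm_num))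
  have hmv : G s + (q.totient : ℝ)⁻¹ * Real.log (s - 1) ≤ G 2 + K := by
    have := (convex_Icc s 2).norm_image_sub_le_of_norm_hasDerivWithin_le
      (f := fun t => G t + (q.totient : ℝ)⁻¹ * Real.log (t - 1))
      (f' := fun t => -(ArithmeticFunction.vonMangoldt.LFunctionResidueClassAux a t).re)
      (C := K) (x := 2) (y := s) (fun t ht => by
        have ht1 : 1 < t := hs.1.trans_le ht.1
        have h2 := ((hasDerivAt_id t).sub_const 1).log (by simp; linarith)
        have h3 := (hGd t ht1).add (h2.const_mul (q.totient : ℝ)⁻¹)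
        refine HasDerivAt.hasDerivWithinAt ?_
        refine h3.congr_deriv ?_
        simp only [id]
        ring)
      (fun t ht => by
        rw [norm_neg]; exact hK t ⟨hs.1.le.trans ht.1, ht.2⟩)
      ⟨hs.2, le_rfl⟩ ⟨le_rfl, hs.2⟩
    have h1 : ‖s - 2‖ ≤ 1 := by
      rw [Real.norm_eq_abs, abs_le]; constructor <;> linarith [hs.1, hs.2]
    have h2 := (le_abs_self _).trans (this.trans (mul_le_of_le_one_right hK0 h1))
    norm_num at h2
    linarith
  have hsum : LSeriesSummable f s :=
    LSeriesSummable_of_abscissaOfAbsConv_lt_re (hlt s hs.1)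
  have hterm : ∀ n, (LSeries.term f s n).re = w n * (n : ℝ) ^ (-s) := by
    intro n
    rcases eq_or_ne n 0 with rfl | hn
    · simp [hw]
    · rw [LSeries.term_of_ne_zero hn]
      have : f n / (n : ℂ) ^ (s : ℂ) = ((w n / (n : ℝ) ^ s : ℝ) : ℂ) := by
        rw [Complex.ofReal_div, Complex.ofReal_cpow (Nat.cast_nonneg n)]; simp [hf]
      rw [this, Complex.ofReal_re, Real.rpow_neg (Nat.cast_nonneg n), div_eq_mul_inv]
  have hGs : HasSum (fun n => w n * (n : ℝ) ^ (-s)) (G s) := by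
    have := Complex.hasSum_re hsum.hasSum
    simp only [hterm] at this
    exact this
  have hle : ∑ p ∈ (Nat.primesBelow N).filter (fun p : ℕ => (p : ZMod q) = a), (p : ℝ) ^ (-s)
      ≤ G s := by
    calc _ = ∑ p ∈ (Nat.primesBelow N).filter (fun p : ℕ => (p : ZMod q) = a),
            w p * (p : ℝ) ^ (-s) := by
          refine Finset.sum_congr rfl fun p hp => ?_
          rw [Finset.mem_filter, Nat.mem_primesBelow] at hp
          have hl : Real.log p ≠ 0 := (Real.log_pos (by exact_mod_cast hp.1.2.one_lt)).ne'
          have : w p = 1 := by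
            simp only [hw, ArithmeticFunction.vonMangoldt.residueClass]
            rw [Set.indicator_of_mem (by exact hp.2),
              ArithmeticFunction.vonMangoldt_apply_prime hp.1.2, div_self hl]
          rw [this, one_mul]
      _ ≤ G s := sum_le_hasSum _ (fun n _ => mul_nonneg (hw0 n) (by positivity)) hGs
  linarith

/-! ### Euler products -/

/-- The left side is the Euler factor `1 + g ∑_{k ≥ 1} y^k` when `0 ≤ y`. -/
theorem eulerFactor_le {g y : ℝ} (hg0 : 0 ≤ g) (hg1 : g ≤ 1) (hy : y ≤ 1 / 2) :
    1 + g * (y / (1 - y)) ≤ Real.exp (g * y + 2 * y ^ 2) := by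
  have h1 : y / (1 - y) ≤ y + 2 * y ^ 2 := by
    rw [div_le_iff₀ (by linarith)]
    nlinarith [mul_nonneg (sq_nonneg y) (sub_nonneg.2 hy)]
  have h2 : g * (y / (1 - y)) ≤ g * y + 2 * y ^ 2 := by
    have := mul_le_mul_of_nonneg_left h1 hg0
    nlinarith [sq_nonneg y]
  linarith [Real.add_one_le_exp (g * y + 2 * y ^ 2)]

theorem summable_weight (g : ℕ → ℝ) (hg0 : ∀ p, 0 ≤ g p) (hg1 : ∀ p, g p ≤ 1)
    {s : ℝ} (hs : 1 < s) :
    Summable fun n : ℕ => (∏ p ∈ n.primeFactors, g p) * (n : ℝ) ^ (-s) := by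
  refine Summable.of_nonneg_of_le (fun n => ?_) (fun n => ?_)
    (Real.summable_nat_rpow (p := -s) |>.2 (by linarith))
  · exact mul_nonneg (Finset.prod_nonneg fun p _ => hg0 p) (by positivity)
  · exact mul_le_of_le_one_left (by positivity)
      (Finset.prod_le_one (fun p _ => hg0 p) fun p _ => hg1 p)

/-- Euler product bound for the multiplicative function `∏_{p ∣ n} g(p)` with `0 ≤ g ≤ 1`. -/
theorem tsum_weight_le (g : ℕ → ℝ) (hg0 : ∀ p, 0 ≤ g p) (hg1 : ∀ p, g p ≤ 1)
    {s B : ℝ} (hs : 1 < s) (hB : ∀ N, ∑ p ∈ Nat.primesBelow N, g p * (p : ℝ) ^ (-s) ≤ B) :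
    ∑' n : ℕ, (∏ p ∈ n.primeFactors, g p) * (n : ℝ) ^ (-s) ≤
      Real.exp (B + 2 * ∑' n : ℕ, ((n : ℝ) ^ 2)⁻¹) := by
  have hsum := summable_weight g hg0 hg1 hs
  set F : ℕ → ℝ := fun n => (∏ p ∈ n.primeFactors, g p) * (n : ℝ) ^ (-s) with hF
  have hF0 : ∀ n, 0 ≤ F n := fun n =>
    mul_nonneg (Finset.prod_nonneg fun p _ => hg0 p) (by positivity)
  have hmul : ∀ {m n : ℕ}, Nat.Coprime m n → F (m * n) = F m * F n := by
    intro m n h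
    simp only [hF]
    rw [h.primeFactors_mul, Finset.prod_union h.disjoint_primeFactors, Nat.cast_mul,
      Real.mul_rpow (by positivity) (by positivity)]
    ring
  have hlim := EulerProduct.eulerProduct (f := F) (by simp [hF]) hmul
    (by simpa only [Real.norm_eq_abs, abs_of_nonneg (hF0 _)] using hsum)
    (by simp only [hF]; rw [Nat.cast_zero, Real.zero_rpow (by linarith), mul_zero])
  refine le_of_tendsto' hlim fun N => ?_
  have hfac : ∀ p ∈ Nat.primesBelow N, ∑' e, F (p ^ e) ≤
      Real.exp (g p * (p : ℝ) ^ (-s) + 2 * ((p : ℝ) ^ 2)⁻¹) := by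
    intro p hp
    have hpp := (Nat.mem_primesBelow.1 hp).2
    have hp2 : (2 : ℝ) ≤ p := by exact_mod_cast hpp.two_le
    set y : ℝ := (p : ℝ) ^ (-s) with hy
    have hy0 : 0 ≤ y := by positivity
    have hyp : y ≤ (p : ℝ)⁻¹ := by
      rw [hy, ← Real.rpow_neg_one]
      exact Real.rpow_le_rpow_of_exponent_le (by linarith) (by linarith)
    have hy2 : y ≤ 1 / 2 := hyp.trans (by
      rw [one_div]; exact inv_anti₀ (by norm_num) hp2)
    have hpow : ∀ e, F (p ^ (e + 1)) = g p * y * y ^ e := by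
      intro e
      simp only [hF]
      rw [Nat.primeFactors_prime_pow (Nat.succ_ne_zero e) hpp, Finset.prod_singleton, Nat.cast_pow,
        ← Real.rpow_natCast, ← Real.rpow_mul (by positivity), mul_comm _ (-s),
        Real.rpow_mul (by positivity), ← hy, Real.rpow_natCast]
      ring
    have hgeo : Summable fun e : ℕ => g p * y * y ^ e :=
      (summable_geometric_of_lt_one hy0 (by linarith)).mul_left _
    have : ∑' e, F (p ^ e) = 1 + g p * (y / (1 - y)) := by
      rw [Summable.tsum_eq_zero_add]
      · simp only [hpow]
        rw [tsum_mul_left, tsum_geometric_of_lt_one hy0 (by linarith)]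
        simp [hF]; ring
      · rw [← summable_nat_add_iff 1]; simpa only [hpow] using hgeo
    rw [this]
    refine (eulerFactor_le (hg0 p) (hg1 p) hy2).trans (Real.exp_le_exp.2 ?_)
    have : y ^ 2 ≤ ((p : ℝ) ^ 2)⁻¹ := by
      rw [← inv_pow]; exact pow_le_pow_left₀ hy0 hyp 2
    linarith
  refine (Finset.prod_le_prod (fun p _ => tsum_nonneg fun e => hF0 _) hfac).trans ?_
  rw [← Real.exp_sum, Finset.sum_add_distrib, ← Finset.mul_sum]
  refine Real.exp_le_exp.2 (add_le_add (hB N) ?_)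
  have h2 : Summable fun n : ℕ => ((n : ℝ) ^ 2)⁻¹ := Real.summable_nat_pow_inv.2 (by norm_num)
  gcongr
  exact h2.sum_le_tsum _ fun n _ => by positivity

/-! ### The elementary counting bound -/

/-- The Chebyshev step, for a divisor-closed set `A` and a size `h` with `h(dm) ≥ d h(m)`: the pairs
`(n, d)` with `d ∣ n` inject into the pairs `(m, d)` with `d ≤ x / h(m)`, via `m = n / d`. -/
theorem sum_log_le (A : Set ℕ) (h : ℕ → ℕ) (hA : ∀ n ∈ A, ∀ m, m ∣ n → m ∈ A)
    (hn : ∀ n, n ≤ h n)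
    (hmul : ∀ d m, 1 ≤ d → 1 ≤ m → d * h m ≤ h (d * m))
    {x : ℝ} (hx : 0 ≤ x) (T : Finset ℕ) (hT : ∀ n, n ∈ T ↔ n ∈ A ∧ (h n : ℝ) ≤ x) :
    ∑ n ∈ T, Real.log n ≤ (Real.log 4 + 4) * x * ∑ m ∈ T, (h m : ℝ)⁻¹ := by
  have hΛ : ∀ d, 0 ≤ ArithmeticFunction.vonMangoldt d := fun d =>
    ArithmeticFunction.vonMangoldt_nonneg
  calc ∑ n ∈ T, Real.log n
      = ∑ n ∈ T, ∑ d ∈ n.divisors, ArithmeticFunction.vonMangoldt d := by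
        simp only [ArithmeticFunction.vonMangoldt_sum]
    _ = ∑ z ∈ T.sigma fun n => n.divisors, ArithmeticFunction.vonMangoldt z.2 := by
        rw [Finset.sum_sigma]
    _ = ∑ z ∈ (T.sigma fun n => n.divisors).image
          (fun z => (⟨z.1 / z.2, z.2⟩ : (_ : ℕ) × ℕ)), ArithmeticFunction.vonMangoldt z.2 := by
        rw [Finset.sum_image]
        rintro ⟨n, d⟩ hz ⟨n', d'⟩ hz' he
        simp only [Finset.coe_sigma, Set.mem_sigma_iff, Finset.mem_coe, Nat.mem_divisors] at hz hz'
        simp only [Sigma.mk.injEq, heq_eq_eq] at he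
        obtain ⟨h1, rfl⟩ := he
        have := Nat.div_mul_cancel hz.2.1
        have := Nat.div_mul_cancel hz'.2.1
        simp only [Sigma.mk.injEq, heq_eq_eq, and_true]
        rw [← Nat.div_mul_cancel hz.2.1, h1, Nat.div_mul_cancel hz'.2.1]
    _ ≤ ∑ z ∈ T.sigma fun m => Finset.Ioc 0 ⌊x / h m⌋₊, ArithmeticFunction.vonMangoldt z.2 := by
        refine Finset.sum_le_sum_of_subset_of_nonneg ?_ fun z _ _ => hΛ _
        rintro ⟨m, d⟩ hz
        simp only [Finset.mem_image, Finset.mem_sigma, Nat.mem_divisors] at hz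
        obtain ⟨⟨n, d'⟩, ⟨hnT, hd, hn0⟩, he⟩ := hz
        simp only [Sigma.mk.injEq, heq_eq_eq] at he hd hnT hn0
        obtain ⟨rfl, rfl⟩ := he
        obtain ⟨m, rfl⟩ := hd
        obtain ⟨hd0, hm0⟩ := Nat.mul_ne_zero_iff.1 hn0
        rw [Nat.mul_div_cancel_left _ (Nat.pos_of_ne_zero hd0)]
        obtain ⟨hnA, hnx⟩ := (hT _).1 hnT
        have hmu : (d' : ℝ) * h m ≤ h (d' * m) := by
          exact_mod_cast hmul d' m (Nat.pos_of_ne_zero hd0) (Nat.pos_of_ne_zero hm0)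
        have hd1 : (1 : ℝ) ≤ d' := by exact_mod_cast Nat.pos_of_ne_zero hd0
        have hhm : (0 : ℝ) < h m := by
          exact_mod_cast (Nat.pos_of_ne_zero hm0).trans_le (hn m)
        simp only [Finset.mem_sigma, Finset.mem_Ioc]
        refine ⟨(hT _).2 ⟨hA _ hnA _ (dvd_mul_left _ _), ?_⟩, Nat.pos_of_ne_zero hd0, ?_⟩
        · nlinarith
        · apply Nat.le_floor
          rw [le_div_iff₀ hhm]; linarith
    _ = ∑ m ∈ T, Chebyshev.psi (x / h m) := by
        rw [Finset.sum_sigma]; rfl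
    _ ≤ ∑ m ∈ T, (Real.log 4 + 4) * (x / h m) :=
        Finset.sum_le_sum fun m _ => Chebyshev.psi_le_const_mul_self (by positivity)
    _ = _ := by
        rw [Finset.mul_sum]; refine Finset.sum_congr rfl fun m _ => by ring

/-- At most `√x` elements of `T` are `≤ √x`; each of the others has `log n ≥ (log x) / 2`. -/
theorem card_le_of_sum_log (T : Finset ℕ) {x : ℝ} (hx : 1 < x) (hpos : ∀ n ∈ T, 1 ≤ n) :
    (T.card : ℝ) ≤ √x + 2 / Real.log x * ∑ n ∈ T, Real.log n := by
  have hl : 0 < Real.log x := Real.log_pos hx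
  rw [← Finset.card_filter_add_card_filter_not (s := T) (fun n : ℕ => (n : ℝ) ≤ √x), Nat.cast_add]
  refine add_le_add ?_ ?_
  · have : T.filter (fun n : ℕ => (n : ℝ) ≤ √x) ⊆ Finset.Ioc 0 ⌊√x⌋₊ := by
      intro n hn
      rw [Finset.mem_filter] at hn
      exact Finset.mem_Ioc.2 ⟨hpos n hn.1, Nat.le_floor hn.2⟩
    have h2 := Finset.card_le_card this
    rw [Nat.card_Ioc, Nat.sub_zero] at h2
    exact (by exact_mod_cast h2 : _ ≤ (⌊√x⌋₊ : ℝ)).trans (Nat.floor_le (Real.sqrt_nonneg x))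
  · rw [Finset.mul_sum, ← nsmul_one, ← Finset.sum_const]
    refine (Finset.sum_le_sum (f := fun _ => (1 : ℝ)) fun n hn => ?_).trans
      (Finset.sum_le_sum_of_subset_of_nonneg (Finset.filter_subset _ T) fun n _ _ => ?_)
    · rw [Finset.mem_filter, not_le] at hn
      have hs : 0 < √x := Real.sqrt_pos.2 (by linarith)
      have := Real.log_le_log hs hn.2.le
      rw [Real.log_sqrt (by linarith)] at this
      rw [div_mul_eq_mul_div, le_div_iff₀ hl]; linarith
    · exact mul_nonneg (by positivity) (Real.log_natCast_nonneg n)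

/-! ### Weights of classes and primes -/

open scoped Classical in
/-- The weight of a residue class: `0` on bad classes, `1/2` on `C`, `1` elsewhere. -/
noncomputable def classWeight (q : ℕ) (C : Set (ZMod q)) (a : ZMod q) : ℝ :=
  if a ∈ badE q then 0 else if a ∈ C then 1 / 2 else 1

open scoped Classical in
/-- The weight of a prime: `0` on bad primes, `1/2` on primes with class in `C`, `1` elsewhere. -/
noncomputable def primeWeight (q : ℕ) (C : Set (ZMod q)) (p : ℕ) : ℝ :=
  if IsBadPrime q p then 0 else if p.Prime ∧ (p : ZMod q) ∈ C then 1 / 2 else 1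

theorem classWeight_nonneg (q : ℕ) (C : Set (ZMod q)) (a : ZMod q) : 0 ≤ classWeight q C a := by
  unfold classWeight; split_ifs <;> norm_num

theorem primeWeight_nonneg (q : ℕ) (C : Set (ZMod q)) (p : ℕ) : 0 ≤ primeWeight q C p := by
  unfold primeWeight; split_ifs <;> norm_num

theorem primeWeight_le_one (q : ℕ) (C : Set (ZMod q)) (p : ℕ) : primeWeight q C p ≤ 1 := by
  unfold primeWeight; split_ifs <;> norm_num

theorem primeWeight_le_classWeight {q : ℕ} (C : Set (ZMod q)) {p : ℕ} (hp : p.Prime) (h2 : p ≠ 2) :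
    primeWeight q C p ≤ classWeight q C p := by
  have hE : IsBadPrime q p ↔ (p : ZMod q) ∈ badE q := ⟨fun h => h.2.2, fun h => ⟨hp, h2, h⟩⟩
  have hC : (p.Prime ∧ (p : ZMod q) ∈ C) ↔ (p : ZMod q) ∈ C := ⟨fun h => h.2, fun h => ⟨hp, h⟩⟩
  rw [primeWeight, classWeight]
  split_ifs <;> first | (exfalso; tauto) | norm_num

theorem ncard_badE (q : ℕ) :
    (badE q).ncard = orderOf (2 : ZMod q) := by
  have : badE q = (fun i => (2 : ZMod q) ^ i) '' (Finset.range (orderOf (2 : ZMod q)) : Set ℕ) := by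
    ext x
    simp only [badE, Set.mem_ofPred_eq, Set.mem_image, Finset.coe_range, Set.mem_Iio, eq_comm]
  rw [this, Set.InjOn.ncard_image, Set.ncard_coe_finset, Finset.card_range]
  rw [Finset.coe_range]
  exact pow_injOn_Iio_orderOf

open scoped Classical in
/-- The total weight of the unit classes. This is where `|C| = r` and the disjointness of `C`
from `E(q)` enter. -/
theorem sum_classWeight {q : ℕ} [NeZero q] (hodd : Odd q) {C : Set (ZMod q)} (hC : Coherent q C)
    (hcard : C.ncard = orderOf (2 : ZMod q)) :
    ∑ a ∈ Finset.univ.filter (fun a : ZMod q => IsUnit a), classWeight q C a =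
      q.totient - 3 / 2 * (orderOf (2 : ZMod q) : ℝ) := by
  have h2 : IsUnit (2 : ZMod q) := by
    have := (ZMod.isUnit_iff_coprime 2 q).2 (Nat.coprime_two_left.2 hodd)
    simpa using this
  have hEu : ∀ a ∈ badE q, IsUnit a := by
    rintro a ⟨i, _, rfl⟩; exact h2.pow i
  have hCu : ∀ a ∈ C, IsUnit a := fun a ha => (hC.2.1 a ha).1
  have hdisj : ∀ a ∈ C, a ∉ badE q := fun a ha => (hC.2.1 a ha).2.1
  have key : ∀ a, classWeight q C a =
      1 - (if a ∈ badE q then (1 : ℝ) else 0) - 1 / 2 * (if a ∈ C then (1 : ℝ) else 0) := by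
    intro a
    unfold classWeight
    by_cases hE : a ∈ badE q
    · have : a ∉ C := fun h => hdisj a h hE
      simp [hE, this]
    · by_cases hCa : a ∈ C <;> simp [hE, hCa]; norm_num
  have hU : (Finset.univ.filter (fun a : ZMod q => IsUnit a)).card = q.totient := by
    rw [← ZMod.card_units_eq_totient, ← Finset.card_univ,
      ← Finset.card_image_of_injective Finset.univ (Units.val_injective (α := ZMod q))]
    congr 1
    ext a
    rw [Finset.mem_filter, Finset.mem_image]
    exact ⟨fun ⟨_, u, hu⟩ => ⟨u, Finset.mem_univ u, hu⟩,
      fun ⟨u, _, hu⟩ => ⟨Finset.mem_univ a, u, hu⟩⟩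
  have hset : ∀ D : Set (ZMod q), (∀ a ∈ D, IsUnit a) →
      ∑ a ∈ Finset.univ.filter (fun a : ZMod q => IsUnit a), (if a ∈ D then (1 : ℝ) else 0) =
        D.ncard := by
    intro D hD
    rw [Finset.sum_boole, Set.ncard_eq_toFinset_card']
    congr 2
    ext a
    simp only [Finset.mem_filter, Finset.mem_univ, true_and, Set.mem_toFinset]
    exact ⟨fun h => h.2, fun h => ⟨hD a h, h⟩⟩
  simp only [key]
  rw [Finset.sum_sub_distrib, Finset.sum_sub_distrib, ← Finset.mul_sum, hset _ hEu, hset _ hCu,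
    ncard_badE q, hcard, Finset.sum_const, hU]
  simp
  ring

/-- Weighted prime sums near `s = 1`: `∑ g(p) p^{-s} ≤ (1 - (3/2) r/φ(q)) log (1/(s-1)) + O(1)`. -/
theorem primeSum_weight_le {q : ℕ} (hq : 3 ≤ q) (hodd : Odd q) {C : Set (ZMod q)}
    (hC : Coherent q C) (hcard : C.ncard = orderOf (2 : ZMod q)) :
    ∃ K : ℝ, ∀ s ∈ Set.Ioc (1 : ℝ) 2, ∀ N : ℕ,
      ∑ p ∈ Nat.primesBelow N, primeWeight q C p * (p : ℝ) ^ (-s) ≤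
        (1 - 3 / 2 * (orderOf (2 : ZMod q) : ℝ) / q.totient) * -Real.log (s - 1) + K := by
  classical
  have : NeZero q := ⟨by omega⟩
  have hφ : (0 : ℝ) < q.totient := by exact_mod_cast Nat.totient_pos.2 (by omega)
  have hcl : ∀ a : ZMod q, ∃ K : ℝ, IsUnit a → ∀ s ∈ Set.Ioc (1 : ℝ) 2, ∀ N : ℕ,
      ∑ p ∈ (Nat.primesBelow N).filter (fun p : ℕ => (p : ZMod q) = a), (p : ℝ) ^ (-s) ≤
        (q.totient : ℝ)⁻¹ * -Real.log (s - 1) + K := by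
    intro a
    by_cases ha : IsUnit a
    · obtain ⟨K, hK⟩ := primeSum_class_le ha
      exact ⟨K, fun _ => hK⟩
    · exact ⟨0, fun h => absurd h ha⟩
  choose K hK using hcl
  set U := Finset.univ.filter (fun a : ZMod q => IsUnit a) with hU
  refine ⟨(q + 1 : ℕ) + ∑ a ∈ U, classWeight q C a * K a, fun s hs N => ?_⟩
  -- primes `p ≤ q` (among them `2` and the divisors of `q`) contribute `O(1)`
  have hpt : ∀ p ∈ Nat.primesBelow N, primeWeight q C p * (p : ℝ) ^ (-s) ≤
      (if p ∈ Finset.range (q + 1) then (1 : ℝ) else 0) +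
        if IsUnit (p : ZMod q) then classWeight q C p * (p : ℝ) ^ (-s) else 0 := by
    intro p hp
    have hpp := (Nat.mem_primesBelow.1 hp).2
    have hp1 : (1 : ℝ) ≤ p := by exact_mod_cast hpp.one_lt.le
    have hnn : 0 ≤ if IsUnit (p : ZMod q) then classWeight q C p * (p : ℝ) ^ (-s) else 0 := by
      split_ifs
      · exact mul_nonneg (classWeight_nonneg _ _ _) (by positivity)
      · exact le_rfl
    by_cases hpq : p ≤ q
    · rw [if_pos (Finset.mem_range.2 (by omega))]
      have h1 : primeWeight q C p * (p : ℝ) ^ (-s) ≤ 1 :=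
        mul_le_one₀ (primeWeight_le_one _ _ _) (by positivity)
          (Real.rpow_le_one_of_one_le_of_nonpos hp1 (by linarith [hs.1]))
      linarith
    · have hu : IsUnit (p : ZMod q) := by
        rw [ZMod.isUnit_iff_coprime, hpp.coprime_iff_not_dvd]
        exact fun h => hpq (Nat.le_of_dvd (by omega) h)
      rw [if_pos hu, if_neg (by rw [Finset.mem_range]; omega), zero_add]
      exact mul_le_mul_of_nonneg_right (primeWeight_le_classWeight C hpp (by omega))
        (by positivity)
  refine (Finset.sum_le_sum hpt).trans ?_
  rw [Finset.sum_add_distrib]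
  have hA : ∑ p ∈ Nat.primesBelow N, (if p ∈ Finset.range (q + 1) then (1 : ℝ) else 0) ≤
      (q + 1 : ℕ) := by
    rw [Finset.sum_boole]
    have : ((Nat.primesBelow N).filter (· ∈ Finset.range (q + 1))).card ≤ q + 1 := by
      refine (Finset.card_le_card (t := Finset.range (q + 1)) fun p hp => ?_).trans_eq
        (Finset.card_range _)
      exact (Finset.mem_filter.1 hp).2
    exact_mod_cast this
  have hB : ∑ p ∈ Nat.primesBelow N,
        (if IsUnit (p : ZMod q) then classWeight q C p * (p : ℝ) ^ (-s) else 0) ≤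
      ∑ a ∈ U, classWeight q C a * ((q.totient : ℝ)⁻¹ * -Real.log (s - 1) + K a) := by
    rw [← Finset.sum_filter, ← Finset.sum_fiberwise_of_maps_to (t := U)
      (g := fun p : ℕ => (p : ZMod q))
      (fun p hp => by simpa [hU] using (Finset.mem_filter.1 hp).2)]
    refine Finset.sum_le_sum fun a ha => ?_
    have hau : IsUnit a := (Finset.mem_filter.1 ha).2
    refine le_trans (le_of_eq ?_)
      (mul_le_mul_of_nonneg_left (hK a hau s hs N) (classWeight_nonneg q C a))
    rw [Finset.mul_sum, Finset.filter_filter]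
    refine Finset.sum_congr ?_ fun p hp => ?_
    · ext p
      simp only [Finset.mem_filter]
      constructor
      · rintro ⟨h1, _, h3⟩; exact ⟨h1, h3⟩
      · rintro ⟨h1, h3⟩; exact ⟨h1, h3 ▸ hau, h3⟩
    · rw [(Finset.mem_filter.1 hp).2]
  refine (add_le_add hA hB).trans (le_of_eq ?_)
  simp only [mul_add, Finset.sum_add_distrib]
  rw [← Finset.sum_mul, sum_classWeight hodd hC hcard]
  field_simp
  ring

/-! ### The count `V(x)` -/

theorem omegaS_eq_card (S : Set ℕ) [DecidablePred (· ∈ S)] {n : ℕ} (hn : n ≠ 0) :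
    omegaS S n = (n.primeFactors.filter (· ∈ S)).card := by
  rw [omegaS, ← Set.ncard_coe_finset]
  congr 1
  ext p
  simp [hn, and_assoc]

theorem prod_primeWeight {q : ℕ} {C : Set (ZMod q)} {n : ℕ} (hn : n ≠ 0)
    (hbad : ∀ p : ℕ, p.Prime → p ∣ n → ¬ IsBadPrime q p) :
    ∏ p ∈ n.primeFactors, primeWeight q C p =
      ((2 : ℝ) ^ omegaS {p : ℕ | p.Prime ∧ (p : ZMod q) ∈ C} n)⁻¹ := by
  classical
  rw [omegaS_eq_card _ hn, ← inv_pow, ← Finset.prod_const, Finset.prod_filter]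
  refine Finset.prod_congr rfl fun p hp => ?_
  rw [Nat.mem_primeFactors] at hp
  simp [primeWeight, hbad p hp.1 hp.2.1]

theorem omegaS_le_mul (S : Set ℕ) {d m : ℕ} (hd : 1 ≤ d) (hm : 1 ≤ m) :
    omegaS S m ≤ omegaS S (d * m) := by
  classical
  have h : d * m ≠ 0 := (Nat.mul_pos hd hm).ne'
  rw [omegaS_eq_card _ (by omega), omegaS_eq_card _ h]
  exact Finset.card_le_card (Finset.filter_subset_filter _
    (Nat.primeFactors_mono (dvd_mul_left m d) h))

/-- `V(x) = O_q(x / (log x)^{c(q)·r/φ(q)})` as `x → ∞`, where `𝒮` is the set of primes whose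
class modulo `q` lies in a coherent set `𝒞` of semi-bad classes with `|𝒞| = r`. -/
theorem stmt12 (q : ℕ) (hq : 3 ≤ q) (hodd : Odd q)
    (C : Set (ZMod q)) (hC : Coherent q C)
    (hcard : C.ncard = orderOf (2 : ZMod q)) :
    (fun x : ℝ => (Vq q {p : ℕ | p.Prime ∧ (p : ZMod q) ∈ C} x : ℝ)) =O[Filter.atTop]
      fun x : ℝ =>
        x / Real.log x ^ (cq q * (orderOf (2 : ZMod q) : ℝ) / (q.totient : ℝ)) := by
  classical
  -- the members of `C` are semi-bad, so `E'(q)` is nonempty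
  have hcq : cq q = 3 / 2 := by
    obtain ⟨c, hc⟩ := hC.1
    exact if_pos (Set.Nonempty.ne_empty ⟨c, hC.2.1 c hc⟩)
  rw [hcq]
  obtain ⟨K, hK⟩ := primeSum_weight_le hq hodd hC hcard
  set θ : ℝ := 3 / 2 * (orderOf (2 : ZMod q) : ℝ) / q.totient with hθ
  set S : Set ℕ := {p : ℕ | p.Prime ∧ (p : ZMod q) ∈ C} with hS
  set Z : ℝ := ∑' n : ℕ, ((n : ℝ) ^ 2)⁻¹ with hZ
  set M : ℝ := 2 * (Real.log 4 + 4) * Real.exp 1 * Real.exp (K + 2 * Z) with hM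
  have hsqrt : ∀ᶠ x : ℝ in Filter.atTop, √x ≤ x / Real.log x ^ θ := by
    have h := isLittleO_log_rpow_rpow_atTop θ (show (0 : ℝ) < 1 / 2 by norm_num)
    filter_upwards [h.bound one_pos, Filter.eventually_gt_atTop 1] with x hx hx1
    have hl : 0 < Real.log x ^ θ := Real.rpow_pos_of_pos (Real.log_pos hx1) _
    rw [one_mul, Real.norm_of_nonneg hl.le, ← Real.sqrt_eq_rpow,
      Real.norm_of_nonneg (Real.sqrt_nonneg x)] at hx
    rw [le_div_iff₀ hl]
    calc √x * Real.log x ^ θ ≤ √x * √x := by gcongr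
      _ = x := Real.mul_self_sqrt (by linarith)
  refine Asymptotics.IsBigO.of_bound (1 + M) ?_
  filter_upwards [hsqrt, Filter.eventually_ge_atTop (Real.exp 1)] with x hxs hxe
  have hx1 : 1 < x := lt_of_lt_of_le (by simp) hxe
  have hx0 : 0 < x := by linarith
  set L : ℝ := Real.log x with hL
  have hL1 : 1 ≤ L := by rw [hL, Real.le_log_iff_exp_le hx0]; exact hxe
  have hL0 : 0 < L := by linarith
  rw [Real.norm_of_nonneg (by positivity), Real.norm_of_nonneg (by positivity)]
  set A : Set ℕ := {n | 1 ≤ n ∧ ∀ p : ℕ, p.Prime → p ∣ n → ¬ IsBadPrime q p} with hA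
  set h : ℕ → ℕ := fun n => n * 2 ^ omegaS S n with hh
  have hnh : ∀ n, n ≤ h n := fun n => Nat.le_mul_of_pos_right n (by positivity)
  set T : Finset ℕ := (Finset.range (⌊x⌋₊ + 1)).filter fun n => n ∈ A ∧ (h n : ℝ) ≤ x with hTdef
  have hT : ∀ n, n ∈ T ↔ n ∈ A ∧ (h n : ℝ) ≤ x := by
    intro n
    rw [hTdef, Finset.mem_filter, and_iff_right_iff_imp, Finset.mem_range, Nat.lt_succ_iff]
    exact fun hn => Nat.le_floor ((Nat.cast_le.2 (hnh n)).trans hn.2)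
  have hV : Vq q S x = T.card := by
    rw [Vq, ← Set.ncard_coe_finset]
    congr 1
    ext n
    rw [Finset.mem_coe, hT]
    simp only [Set.mem_ofPred_eq, hA, hh]
    tauto
  have hlogsum := sum_log_le A h
    (fun n hn m hm => ⟨Nat.pos_of_dvd_of_pos hm hn.1,
      fun p hp hpm => hn.2 p hp (hpm.trans hm)⟩) hnh
    (fun d m hd hm => by
      simp only [hh]
      rw [mul_assoc]
      exact Nat.mul_le_mul_left d (Nat.mul_le_mul_left m
        (Nat.pow_le_pow_right (by norm_num) (omegaS_le_mul S hd hm))))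
    hx0.le T hT
  -- Rankin's exponent
  set s : ℝ := 1 + 1 / L with hs
  have hs1 : 1 < s := by rw [hs]; linarith [one_div_pos.2 hL0]
  have hs2 : s ≤ 2 := by
    have : 1 / L ≤ 1 := by rw [div_le_one hL0]; exact hL1
    linarith
  have hlogs : -Real.log (s - 1) = Real.log L := by
    rw [hs, add_sub_cancel_left, one_div, Real.log_inv, neg_neg]
  have hw := tsum_weight_le (primeWeight q C) (primeWeight_nonneg q C) (primeWeight_le_one q C)
    hs1 (hK s ⟨hs1, hs2⟩)
  have hwsum := summable_weight (primeWeight q C) (primeWeight_nonneg q C)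
    (primeWeight_le_one q C) hs1
  have hexp : Real.exp ((1 - θ) * -Real.log (s - 1) + K + 2 * Z) =
      L / L ^ θ * Real.exp (K + 2 * Z) := by
    rw [hlogs, add_assoc, Real.exp_add, mul_comm (1 - θ), ← Real.rpow_def_of_pos hL0,
      Real.rpow_sub hL0, Real.rpow_one]
  rw [hexp] at hw
  have hrankin : ∑ m ∈ T, (h m : ℝ)⁻¹ ≤
      Real.exp 1 * (L / L ^ θ * Real.exp (K + 2 * Z)) := by
    refine le_trans ?_ (mul_le_mul_of_nonneg_left
      ((hwsum.sum_le_tsum T fun n _ => ?_).trans hw) (Real.exp_pos 1).le)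
    · rw [Finset.mul_sum]
      refine Finset.sum_le_sum fun n hn => ?_
      obtain ⟨⟨hn1, hbad⟩, hnx⟩ := (hT n).1 hn
      have hn0 : (0 : ℝ) < n := by exact_mod_cast hn1
      have hnx' : (n : ℝ) ≤ x := (Nat.cast_le.2 (hnh n)).trans hnx
      rw [prod_primeWeight (by omega) hbad]
      have h1 : (n : ℝ)⁻¹ ≤ Real.exp 1 * (n : ℝ) ^ (-s) := by
        have h2 : (n : ℝ) ^ (1 / L) ≤ Real.exp 1 := by
          calc (n : ℝ) ^ (1 / L) ≤ x ^ (1 / L) := by gcongr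
            _ = Real.exp 1 := by
              rw [Real.rpow_def_of_pos hx0, ← hL, mul_one_div_cancel hL0.ne']
        have h3 : (n : ℝ)⁻¹ = (n : ℝ) ^ (1 / L) * (n : ℝ) ^ (-s) := by
          rw [← Real.rpow_add hn0, hs, ← Real.rpow_neg_one]
          congr 1; ring
        rw [h3]
        gcongr
      have h4 : (h n : ℝ)⁻¹ = ((2 : ℝ) ^ omegaS S n)⁻¹ * (n : ℝ)⁻¹ := by
        simp only [hh]; push_cast; rw [mul_inv]; ring
      rw [h4, mul_left_comm]
      gcongr
    · exact mul_nonneg (Finset.prod_nonneg fun p _ => primeWeight_nonneg q C p) (by positivity)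
  have hcardT := card_le_of_sum_log T hx1 fun n hn => ((hT n).1 hn).1.1
  rw [hV]
  calc (T.card : ℝ) ≤ √x + 2 / L * ∑ n ∈ T, Real.log n := hcardT
    _ ≤ x / L ^ θ + 2 / L * ((Real.log 4 + 4) * x *
          (Real.exp 1 * (L / L ^ θ * Real.exp (K + 2 * Z)))) := by
        have h4 : 0 ≤ Real.log 4 := Real.log_nonneg (by norm_num)
        gcongr
        exact hlogsum.trans (by gcongr)
    _ = (1 + M) * (x / L ^ θ) := by
        rw [hM]; field_simp
end

section
/- Let P ∈ F₂[z] with P(0) = 1 and P = P₁·P₂···P_j a product of irreducible polynomials in F₂[z]. For 1 ≤ i ≤ j let q_i be the order of P_i, r_i the multiplicative order of 2 modulo q_i, and set c = min_{1 ≤ i ≤ j} c(q_i)·r_i/φ(q_i), where c(q_i) = 3/2 if E'(q_i) ≠ ∅ and c(q_i) = 1 otherwise. Then, as x → ∞, A(P,x) ≪ x/(log x)^c, where the implied constant depends on q₁,…,q_j. -/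
/-!
Let `Pᵢ` have order `qᵢ`. The proof has an arithmetic half, which confines `A` to integers of a
special multiplicative shape, and an analytic half, which counts such integers.

*Arithmetic.* Work in the Witt vectors `W` of an algebraic closure of `𝔽₂`. Both `∏ (1 - X ^ a)⁻¹`
(over `a ∈ A`) and the Teichmüller lift of `P = ∏ Pᵢ` reduce to `P` modulo `2`. If two series are
congruent modulo `2`, the `n`-th coefficients of their logarithmic derivatives agree modulo
`2 ^ (e + 1)` as soon as `2 ^ e ∣ n`. Hence `∑_{a ∣ n, a ∈ A} a ≡ -∑ᵢ sᵢ(n)` modulo `2 ^ (e + 1)`,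
where `sᵢ(n)` is the sum of the `n`-th powers of the Teichmüller lifts of the inverse roots of `Pᵢ`
(`divisor_sum_congr`). The function `sᵢ` depends on `n` modulo `qᵢ` only and satisfies
`sᵢ(2 n) = sᵢ(n)`. Take `n = 2 ^ k d` with `d ∣ m`, `m` odd, and apply Möbius inversion in `d`: the
left side becomes `m` times the number with binary digits `[2 ^ a m ∈ A]`, `a ≤ k`. The Möbius
transform of `sᵢ` at `m` vanishes if `m` has a prime factor in `E(qᵢ)`. If `u² ∈ E(qᵢ)`, all primes
in `u E(qᵢ)` act on `sᵢ` by the same involution, and the transform is divisible by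
`2 ^ (ω - 1)`, where `ω` is the number of prime factors of `m` in that coset. So `2 ^ k m ∈ A`
forces, for some `i`, that `m` has no prime factor in `E(qᵢ)` and at most `k + 1` in `u E(qᵢ)`
(`exists_of_mem`).

*Analysis.* Fix `q = qᵢ`, `E = E(q)`, and `V = u E(q)` with `u` semi-bad, or `V = ∅` if there is no
semi-bad class. Then `c = (|E| + |V| / 2) / φ(q)` equals `c(q) r / φ(q)`. Let `F` be multiplicative
with value `0`, `1 / 2` or `1` at the powers of a prime in `E`, in `V`, or in neither. The simple
pole of the Dirichlet series of the von Mangoldt function in residue classes gives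
`∑ p ^ (-σ) = log (1 / (σ - 1)) / φ(q) + O(1)` over primes in one class (`primeSum_bound`), and the
Euler product at `σ = 1 + 1 / log x` gives `∑_{m ≤ x} F(m) / m ≪ (log x) ^ (1 - c)`
(`weightMul_sum_bound`). If `n = 2 ^ k m ≤ x` has the shape above then `2 n = 2 ^ t * (2 ^ ω m)` for
some `t ≥ 0`, so for each `t` one counts the `m` free of primes in `E` with
`2 ^ ω m ≤ 2 x / 2 ^ t`. Chebyshev's trick, which expands `log m = ∑_{d ∣ m} Λ(d)` and uses
`ψ(y) ≪ y`, bounds `∑ log m` over the `m` with `2 ^ ω m ≤ y` by `y ∑ F(m) / m`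
(`sum_log_goodSet_le`). The sum over `t` is geometric, and dividing by `log x` gives
`x / (log x) ^ c`; the integers with odd part below `√x` are negligible.
-/

open Polynomial

/-- The order of a polynomial `Q ∈ F₂[z]` with `Q(0) = 1`: the least `β > 0` such that
`Q` divides `X ^ β - 1` (equivalently, `1 + z^β`). -/
noncomputable def polyOrder (Q : Polynomial (ZMod 2)) : ℕ :=
  sInf {m | 0 < m ∧ Q ∣ X ^ m - 1}

/-! ### Logarithmic derivatives modulo powers of two -/

namespace PartSet

open PowerSeries in
/-- The ideal of power series whose coefficients up to degree `n` are divisible by `2 ^ e`. -/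
def lowIdeal (R : Type*) [CommRing R] (n e : ℕ) : Ideal R⟦X⟧ where
  carrier := {f | ∀ i ≤ n, (2 : R) ^ e ∣ PowerSeries.coeff i f}
  add_mem' := by
    intro f g hf hg i hi
    rw [map_add]
    exact dvd_add (hf i hi) (hg i hi)
  zero_mem' := by
    intro i hi
    simp
  smul_mem' := by
    intro c f hf i hi
    rw [smul_eq_mul, PowerSeries.coeff_mul]
    refine Finset.dvd_sum fun p hp => Dvd.dvd.mul_left (hf _ ?_) _
    have := Finset.HasAntidiagonal.mem_antidiagonal.1 hp
    omega

lemma mem_lowIdeal {R : Type*} [CommRing R] {n e : ℕ} {f : PowerSeries R} :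
    f ∈ lowIdeal R n e ↔ ∀ i ≤ n, (2 : R) ^ e ∣ PowerSeries.coeff i f := Iff.rfl

lemma lowIdeal_mul {R : Type*} [CommRing R] {n a b : ℕ} {f g : PowerSeries R}
    (hf : f ∈ lowIdeal R n a) (hg : g ∈ lowIdeal R n b) : f * g ∈ lowIdeal R n (a + b) := by
  intro i hi
  rw [PowerSeries.coeff_mul, pow_add]
  refine Finset.dvd_sum fun p hp => ?_
  have := Finset.HasAntidiagonal.mem_antidiagonal.1 hp
  exact mul_dvd_mul (hf _ (by omega)) (hg _ (by omega))

lemma lowIdeal_mono {R : Type*} [CommRing R] {n a b : ℕ} (hab : a ≤ b) {f : PowerSeries R}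
    (hf : f ∈ lowIdeal R n b) : f ∈ lowIdeal R n a :=
  fun i hi => (pow_dvd_pow _ hab).trans (hf i hi)

/-- Squaring improves a congruence `f ≡ 1` modulo a power of `2` by one more power of `2`. -/
lemma pow_two_pow_sub_one_mem {R : Type*} [CommRing R] {n : ℕ} {f : PowerSeries R}
    (hf : f - 1 ∈ lowIdeal R n 1) (k : ℕ) : f ^ 2 ^ k - 1 ∈ lowIdeal R n (k + 1) := by
  induction k with
  | zero => simpa using hf
  | succ k ih =>
    set g := f ^ 2 ^ k with hg
    have h1 : f ^ 2 ^ (k + 1) - 1 = (g - 1) * (g - 1) + PowerSeries.C 2 * (g - 1) := by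
      rw [pow_succ, pow_mul, ← hg]
      have : (PowerSeries.C (2 : R)) = 2 := map_ofNat _ 2
      rw [this]; ring
    rw [h1]
    refine Ideal.add_mem _ (lowIdeal_mono (by omega) (lowIdeal_mul ih ih)) ?_
    intro i hi
    rw [PowerSeries.coeff_C_mul, pow_succ']
    exact mul_dvd_mul_left _ (ih i hi)

open PowerSeries in
/-- `Y` is the logarithmic derivative `X H' / H` of the power series `H`. -/
def IsLogDeriv {R : Type*} [CommRing R] (H Y : R⟦X⟧) : Prop :=
  PowerSeries.X * PowerSeries.derivative R H = H * Y

lemma IsLogDeriv.mul {R : Type*} [CommRing R] {H₁ H₂ Y₁ Y₂ : PowerSeries R}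
    (h₁ : IsLogDeriv H₁ Y₁) (h₂ : IsLogDeriv H₂ Y₂) : IsLogDeriv (H₁ * H₂) (Y₁ + Y₂) := by
  unfold IsLogDeriv at *
  rw [Derivation.leibniz, smul_eq_mul, smul_eq_mul]
  linear_combination H₁ * h₂ + H₂ * h₁

lemma IsLogDeriv.one {R : Type*} [CommRing R] : IsLogDeriv (1 : PowerSeries R) 0 := by
  simp [IsLogDeriv]

lemma IsLogDeriv.prod {R ι : Type*} [CommRing R] (s : Finset ι) (H Y : ι → PowerSeries R)
    (h : ∀ i ∈ s, IsLogDeriv (H i) (Y i)) : IsLogDeriv (∏ i ∈ s, H i) (∑ i ∈ s, Y i) := by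
  classical
  induction s using Finset.induction_on with
  | empty => simpa using IsLogDeriv.one
  | insert a s ha ih =>
    rw [Finset.prod_insert ha, Finset.sum_insert ha]
    exact (h a (by simp)).mul (ih fun i hi => h i (by simp [hi]))

/-- If `H ≡ 1` modulo `2` up to degree `n`, and `2 ^ k` divides `n`, then the `n`-th coefficient
of `X H' / H` is divisible by `2 ^ (k + 1)`: compare the `n`-th coefficients in
`X (H ^ 2 ^ k)' = 2 ^ k H ^ 2 ^ k (X H' / H)`, where `H ^ 2 ^ k ≡ 1` modulo `2 ^ (k + 1)`. -/
lemma logDeriv_coeff_dvd {R : Type*} [CommRing R] [IsDomain R] (h2 : (2 : R) ≠ 0) {n k : ℕ}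
    (hn : 0 < n) (hk : 2 ^ k ∣ n) {H Y : PowerSeries R} (hH : H - 1 ∈ lowIdeal R n 1)
    (hY : IsLogDeriv H Y) : (2 : R) ^ (k + 1) ∣ PowerSeries.coeff n Y := by
  have hp := pow_two_pow_sub_one_mem hH k
  set G := H ^ 2 ^ k with hG
  have hGY : PowerSeries.X * PowerSeries.derivative R G = PowerSeries.C ((2 : R) ^ k) * (G * Y) := by
    rw [hG, Derivation.leibniz_pow, nsmul_eq_mul, smul_eq_mul]
    have e : H ^ 2 ^ k = H ^ (2 ^ k - 1) * H := by
      rw [← pow_succ, Nat.sub_add_cancel Nat.one_le_two_pow]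
    have e2 : (PowerSeries.C ((2 : R) ^ k)) = ((2 ^ k : ℕ) : PowerSeries R) := by
      push_cast; rw [map_pow]; rfl
    rw [e2, e]
    unfold IsLogDeriv at hY
    linear_combination ((2 ^ k : ℕ) : PowerSeries R) * H ^ (2 ^ k - 1) * hY
  obtain ⟨m, rfl⟩ := Nat.exists_eq_succ_of_ne_zero hn.ne'
  have hc := congrArg (PowerSeries.coeff (m + 1)) hGY
  rw [PowerSeries.coeff_succ_X_mul, PowerSeries.coeff_derivative, PowerSeries.coeff_C_mul] at hc
  have hc1 : (2 : R) ^ (k + 1) ∣ PowerSeries.coeff (m + 1) G := by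
    have := hp (m + 1) le_rfl
    rw [map_sub] at this
    simpa [PowerSeries.coeff_one] using this
  have hc2 : (2 : R) ^ k ∣ ((m : R) + 1) := by
    have := (Nat.cast_dvd_cast (α := R) hk)
    push_cast at this
    exact this
  have hc3 : (2 : R) ^ k * 2 ^ (k + 1) ∣ 2 ^ k * PowerSeries.coeff (m + 1) (G * Y) := by
    rw [← hc, mul_comm]
    exact mul_dvd_mul hc1 hc2
  have hc4 : (2 : R) ^ (k + 1) ∣ PowerSeries.coeff (m + 1) (G * Y) :=
    (mul_dvd_mul_iff_left (pow_ne_zero k h2)).1 hc3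
  have hc5 : (2 : R) ^ (k + 1) ∣ PowerSeries.coeff (m + 1) ((G - 1) * Y) :=
    (lowIdeal R (m + 1) (k + 1)).mul_mem_right Y hp (m + 1) le_rfl
  have : PowerSeries.coeff (m + 1) Y
      = PowerSeries.coeff (m + 1) (G * Y) - PowerSeries.coeff (m + 1) ((G - 1) * Y) := by
    rw [← map_sub]; congr 1; ring
  rw [this]
  exact dvd_sub hc4 hc5

lemma isLogDeriv_one_sub_X_pow {R : Type*} [CommRing R] {a : ℕ} (ha : 0 < a) :
    IsLogDeriv (1 - PowerSeries.X ^ a : PowerSeries R)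
      (PowerSeries.mk fun n => if n ≠ 0 ∧ a ∣ n then -(a : R) else 0) := by
  unfold IsLogDeriv
  ext n
  rw [sub_mul, one_mul, map_sub (PowerSeries.coeff n), PowerSeries.coeff_mk, PowerSeries.coeff_X_pow_mul']
  rcases n with _ | m
  · simp [ha.ne']
  · rw [PowerSeries.coeff_succ_X_mul, PowerSeries.coeff_derivative, map_sub,
      PowerSeries.coeff_X_pow, PowerSeries.coeff_mk, PowerSeries.coeff_one]
    rcases lt_trichotomy (m + 1) a with h | h | h
    · have h1 : ¬ a ∣ m + 1 := fun h' => by have := Nat.le_of_dvd (by omega) h'; omega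
      simp [h.ne, h1, not_le.2 h]
    · subst h; simp
    · have h1 : a ∣ m + 1 - a ↔ a ∣ m + 1 := (Nat.dvd_sub_iff_left h.le dvd_rfl)
      have h2 : m + 1 - a ≠ 0 := by omega
      simp [h.ne', h.le, h1, h2]

lemma isLogDeriv_one_sub_C_mul_X {R : Type*} [CommRing R] (b : R) :
    IsLogDeriv (1 - PowerSeries.C b * PowerSeries.X : PowerSeries R)
      (PowerSeries.mk fun n => if n ≠ 0 then -b ^ n else 0) := by
  unfold IsLogDeriv
  ext n
  rw [sub_mul, one_mul, map_sub (PowerSeries.coeff n), PowerSeries.coeff_mk, mul_assoc, PowerSeries.coeff_C_mul]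
  rcases n with _ | m
  · simp
  · rw [PowerSeries.coeff_succ_X_mul, PowerSeries.coeff_derivative, map_sub,
      PowerSeries.coeff_succ_X_mul, PowerSeries.coeff_one, PowerSeries.coeff_C_mul,
      PowerSeries.coeff_X, PowerSeries.coeff_mk]
    rcases m with _ | m
    · simp
    · simp [pow_succ]; ring

end PartSet

/-! ### The generating function of partitions -/

namespace PartSet

lemma partitionCount_congr {A B : Set ℕ} {n : ℕ} (h : ∀ i ≤ n, i ∈ A ↔ i ∈ B) :
    partitionCount A n = partitionCount B n := by
  unfold partitionCount
  have : ∀ p : n.Partition, (∀ i ∈ p.parts, i ∈ A) ↔ (∀ i ∈ p.parts, i ∈ B) := fun p =>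
    forall₂_congr fun i hi => h i (p.parts_sum ▸ Multiset.le_sum_of_mem hi)
  simp only [this]

lemma partitionCount_empty (n : ℕ) : partitionCount ∅ n = if n = 0 then 1 else 0 := by
  unfold partitionCount
  split_ifs with h
  · subst h
    rw [Nat.card_eq_one_iff_unique]
    refine ⟨⟨fun a b => Subtype.ext (Subsingleton.elim _ _)⟩, ⟨⟨default, ?_⟩⟩⟩
    intro i hi
    have h1 := (default : Nat.Partition 0).parts_pos hi
    have h2 : i ≤ 0 := by
      have := Multiset.le_sum_of_mem hi
      rwa [(default : Nat.Partition 0).parts_sum] at this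
    omega
  · rw [Nat.card_eq_zero]
    left
    refine ⟨fun p => h ?_⟩
    have : p.1.parts = 0 := Multiset.eq_zero_of_forall_notMem fun i hi => p.2 i hi
    have h2 := p.1.parts_sum
    rw [this] at h2
    simpa using h2.symm

/-- Partitions with parts in `{a} ∪ B` either avoid `a`, or come from adding a part `a`. -/
lemma partitionCount_insert {B : Set ℕ} {a : ℕ} (ha : 0 < a) (haB : a ∉ B) (n : ℕ) :
    partitionCount (insert a B) n
      = partitionCount B n + if a ≤ n then partitionCount (insert a B) (n - a) else 0 := by
  classical
  have key : ∀ (C : Set ℕ) (m : ℕ), partitionCount C m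
      = (Finset.univ.filter fun p : m.Partition => ∀ i ∈ p.parts, i ∈ C).card := by
    intro C m
    unfold partitionCount
    rw [Nat.card_eq_fintype_card, Fintype.card_subtype]
  rw [key (insert a B) n, key B n,
    ← Finset.card_filter_add_card_filter_not (p := fun p : n.Partition => a ∉ p.parts)]
  congr 1
  · congr 1
    ext p
    simp only [Finset.mem_filter, Finset.mem_univ, true_and, Set.mem_insert_iff]
    constructor
    · rintro ⟨h1, h2⟩ i hi
      rcases h1 i hi with rfl | h
      · exact absurd hi h2
      · exact h
    · exact fun h => ⟨fun i hi => Or.inr (h i hi), fun h' => haB (h a h')⟩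
  · split_ifs with han
    · rw [key]
      symm
      refine Finset.card_bij (fun q _ => ⟨a ::ₘ q.parts, ?_, ?_⟩) ?_ ?_ ?_
      · intro i hi
        rcases Multiset.mem_cons.1 hi with rfl | h
        · exact ha
        · exact q.parts_pos h
      · rw [Multiset.sum_cons, q.parts_sum]; omega
      · intro q hq
        simp only [Finset.mem_filter, Finset.mem_univ, true_and, not_not, Multiset.mem_cons,
          true_or, and_true] at hq ⊢
        rintro i (rfl | h)
        · simp
        · exact hq i h
      · intro q _ q' _ h
        have := congrArg Nat.Partition.parts h
        exact Nat.Partition.ext ((Multiset.cons_inj_right a).1 this)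
      · intro p hp
        simp only [Finset.mem_filter, Finset.mem_univ, true_and, not_not] at hp
        obtain ⟨t, ht⟩ := Multiset.exists_cons_of_mem hp.2
        have hs := p.parts_sum
        rw [ht, Multiset.sum_cons] at hs
        refine ⟨⟨t, fun {i} hi => p.parts_pos (by rw [ht]; exact Multiset.mem_cons_of_mem hi),
          by omega⟩, ?_, ?_⟩
        · simp only [Finset.mem_filter, Finset.mem_univ, true_and]
          exact fun i hi => hp.1 i (by rw [ht]; exact Multiset.mem_cons_of_mem hi)
        · exact Nat.Partition.ext ht.symm
    · rw [Finset.card_eq_zero, Finset.filter_eq_empty_iff]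
      intro p _ h
      rw [not_not] at h
      have := Multiset.le_sum_of_mem h
      rw [p.parts_sum] at this
      exact han this

lemma mk_partitionCount_mul_prod (R : Type*) [CommRing R] (s : Finset ℕ) (hs : ∀ a ∈ s, 0 < a) :
    (PowerSeries.mk fun n => (partitionCount (s : Set ℕ) n : R)) *
      ∏ a ∈ s, (1 - PowerSeries.X ^ a) = 1 := by
  classical
  induction s using Finset.induction_on with
  | empty =>
    ext n
    simp [partitionCount_empty, PowerSeries.coeff_one]
  | insert a s ha ih =>
    rw [Finset.prod_insert ha, ← mul_assoc]
    refine Eq.trans ?_ (ih fun b hb => hs b (by simp [hb]))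
    congr 1
    ext n
    rw [mul_sub, mul_one, map_sub, PowerSeries.coeff_mul_X_pow', PowerSeries.coeff_mk,
      PowerSeries.coeff_mk, Finset.coe_insert,
      partitionCount_insert (hs a (by simp)) (by simpa using ha)]
    split_ifs <;> simp

end PartSet

/-! ### Teichmüller lifts and power sums of roots -/

namespace PartSet

/-- An algebraic closure of the field with two elements. -/
abbrev KK := AlgebraicClosure (ZMod 2)

/-- The Witt vectors of `KK`: a domain of characteristic zero in which `2` is prime, with residue
field `KK`. -/
abbrev WW := WittVector 2 KK

lemma two_dvd_iff (x : WW) : (2 : WW) ∣ x ↔ WittVector.constantCoeff x = 0 := by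
  rw [← RingHom.mem_ker, WittVector.ker_constantCoeff, Ideal.mem_span_singleton]
  norm_cast

lemma WW_two_ne_zero : (2 : WW) ≠ 0 := by
  have := WittVector.p_nonzero 2 KK
  exact_mod_cast this

lemma WW_odd_not_dvd {u : ℕ} (hu : ¬ 2 ∣ u) : ¬ (2 : WW) ∣ (u : WW) := by
  rw [two_dvd_iff, map_natCast]
  intro h
  exact hu ((CharP.cast_eq_zero_iff KK 2 u).1 h)

lemma two_pow_dvd_of_WW {e z : ℕ} (h : (2 : WW) ^ e ∣ (z : WW)) : 2 ^ e ∣ z := by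
  induction e generalizing z with
  | zero => simp
  | succ e ih =>
    have h2 : 2 ∣ z := by
      by_contra hz
      exact WW_odd_not_dvd hz ((dvd_pow_self _ (Nat.succ_ne_zero e)).trans h)
    obtain ⟨y, rfl⟩ := h2
    rw [pow_succ']
    refine Nat.mul_dvd_mul_left 2 (ih ?_)
    rw [pow_succ'] at h
    push_cast at h
    exact (mul_dvd_mul_iff_left WW_two_ne_zero).1 h

open scoped Classical in
/-- The set of roots of `Q` in `KK`. -/
noncomputable def rootFin (Q : (ZMod 2)[X]) : Finset KK := (Q.aroots KK).toFinset

lemma mem_rootFin {Q : (ZMod 2)[X]} {α : KK} :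
    α ∈ rootFin Q ↔ Q.map (algebraMap (ZMod 2) KK) ≠ 0 ∧ aeval α Q = 0 := by
  classical rw [rootFin, Multiset.mem_toFinset, mem_aroots']

/-- The power sum `∑ τ(α⁻¹) ^ n` over the roots `α` of `Q`, where `τ` is the Teichmüller lift. -/
noncomputable def powerSum (Q : (ZMod 2)[X]) (n : ℕ) : WW :=
  ∑ α ∈ rootFin Q, (WittVector.teichmuller 2 α⁻¹) ^ n

lemma powerSum_congr {Q : (ZMod 2)[X]} {q n n' : ℕ} (hQ : Q ∣ X ^ q - 1) (h : n ≡ n' [MOD q]) :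
    powerSum Q n = powerSum Q n' := by
  unfold powerSum
  refine Finset.sum_congr rfl fun α hα => ?_
  rw [mem_rootFin] at hα
  have h1 : α ^ q = 1 := by
    obtain ⟨T, hT⟩ := hQ
    have := congrArg (aeval α) hT
    rw [map_mul, hα.2, zero_mul] at this
    simpa [sub_eq_zero] using this
  have h2 : (WittVector.teichmuller 2 α⁻¹ : WW) ^ q = 1 := by
    rw [← map_pow, inv_pow, h1, inv_one, map_one]
  rw [← Nat.mod_add_div n q, ← Nat.mod_add_div n' q, pow_add, pow_add, pow_mul, pow_mul, h2,
    one_pow, one_pow, show n % q = n' % q from h]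

/-- The roots of `Q` are permuted by the Frobenius. -/
lemma powerSum_two_mul (Q : (ZMod 2)[X]) (n : ℕ) : powerSum Q (2 * n) = powerSum Q n := by
  classical
  unfold powerSum
  set S := rootFin Q with hS
  have hinj : Set.InjOn (fun α : KK => α ^ 2) S := fun a _ b _ h => frobenius_inj KK 2 h
  have himg : S.image (fun α : KK => α ^ 2) = S := by
    refine Finset.eq_of_subset_of_card_le ?_ (Finset.card_image_of_injOn hinj).ge
    intro β hβ
    obtain ⟨α, hα, rfl⟩ := Finset.mem_image.1 hβ
    rw [hS, mem_rootFin] at hα ⊢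
    refine ⟨hα.1, ?_⟩
    rw [← expand_aeval, ZMod.expand_card, map_pow, hα.2]
    simp
  conv_rhs => rw [← himg]
  rw [Finset.sum_image hinj]
  refine Finset.sum_congr rfl fun α _ => ?_
  rw [pow_mul, ← map_pow, inv_pow]

/-- The Teichmüller lift `∏ (1 - τ(α⁻¹) X)` of `Q = ∏ (1 - α⁻¹ X)`. -/
noncomputable def teichLift (Q : (ZMod 2)[X]) : PowerSeries WW :=
  ∏ α ∈ rootFin Q,
    (1 - PowerSeries.C (WittVector.teichmuller 2 α⁻¹) * PowerSeries.X)

lemma map_teichLift {Q : (ZMod 2)[X]} (hQ : Irreducible Q) (h0 : Q.coeff 0 = 1) :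
    PowerSeries.map WittVector.constantCoeff (teichLift Q)
      = PowerSeries.map (algebraMap (ZMod 2) KK) (Q : PowerSeries (ZMod 2)) := by
  have hsep : Q.Separable := PerfectField.separable_of_irreducible hQ
  have hnd : (Q.aroots KK).Nodup :=
    (nodup_aroots_iff_of_splits hQ.ne_zero (IsAlgClosed.splits _)).2 hsep
  have hsp := (IsAlgClosed.splits (Q.map (algebraMap (ZMod 2) KK))).eq_prod_roots
  set S := rootFin Q with hS
  set M := Q.map (algebraMap (ZMod 2) KK) with hM
  classical
  have hprod : M = C M.leadingCoeff * ∏ α ∈ S, (X - C α) := by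
    conv_lhs => rw [hsp]
    congr 1
    rw [Finset.prod, hS, rootFin, Multiset.toFinset_val, hnd.dedup]
  have hne : ∀ α ∈ S, α ≠ 0 := by
    intro α hα h
    rw [hS, mem_rootFin, h] at hα
    have := hα.2
    rw [aeval_def, eval₂_at_zero, h0] at this
    simp at this
  have hfac : ∀ α ∈ S, (X - C α : KK[X]) = C (-α) * (1 - C α⁻¹ * X) := by
    intro α hα
    rw [mul_sub, ← mul_assoc, ← C_mul, neg_mul, mul_inv_cancel₀ (hne α hα)]
    simp; ring
  rw [Finset.prod_congr rfl hfac, Finset.prod_mul_distrib, ← mul_assoc, ← map_prod, ← C_mul]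
    at hprod
  have hc : M.leadingCoeff * ∏ α ∈ S, (-α) = 1 := by
    have := congrArg (eval 0) hprod
    rw [eval_mul, eval_C, eval_prod] at this
    simp only [eval_sub, eval_one, eval_mul, eval_C, eval_X, mul_zero, sub_zero,
      Finset.prod_const_one, mul_one] at this
    rw [← this, hM, ← coeff_zero_eq_eval_zero, coeff_map, h0, map_one]
  rw [hc, C_1, one_mul] at hprod
  have hco : PowerSeries.map (algebraMap (ZMod 2) KK) (Q : PowerSeries (ZMod 2)) = (M : PowerSeries KK) := by
    ext n; simp [hM]
  rw [hco, hprod, teichLift, map_prod, ← coeToPowerSeries.ringHom_apply, map_prod]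
  refine Finset.prod_congr rfl fun α _ => ?_
  rw [map_sub, map_one, map_mul, PowerSeries.map_C, PowerSeries.map_X, map_sub, map_one, map_mul]
  simp

lemma teichLift_isLogDeriv (Q : (ZMod 2)[X]) :
    IsLogDeriv (teichLift Q) (PowerSeries.mk fun n => if n ≠ 0 then -powerSum Q n else 0) := by
  have := IsLogDeriv.prod (rootFin Q) _ _
    fun α _ => isLogDeriv_one_sub_C_mul_X (R := WW) (WittVector.teichmuller 2 α⁻¹)
  unfold teichLift
  convert this using 1
  ext1 n
  rw [map_sum]
  simp only [PowerSeries.coeff_mk]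
  split_ifs
  · rw [powerSum, Finset.sum_neg_distrib]
  · simp

/-- The congruence `∑_{a ∣ n, a ∈ A} a ≡ - ∑ᵢ powerSum (Pᵢ) n` modulo `2 ^ (e + 1)` when
`2 ^ e ∣ n`. -/
lemma divisor_sum_congr {j : ℕ} (Ps : Fin j → (ZMod 2)[X]) (hirr : ∀ i, Irreducible (Ps i))
    (h0 : ∀ i, (Ps i).coeff 0 = 1) (A : Set ℕ) (hApos : ∀ a ∈ A, 0 < a)
    (hA : ∀ n : ℕ, (partitionCount A n : ZMod 2) = (∏ i, Ps i).coeff n)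
    {n e : ℕ} (hn : 0 < n) (he : 2 ^ e ∣ n) [DecidablePred (· ∈ A)] :
    (2 : WW) ^ (e + 1) ∣ ((∑ a ∈ n.divisors with a ∈ A, a : ℕ) : WW) + ∑ i, powerSum (Ps i) n := by
  classical
  set s := (Finset.range (n + 1)).filter (· ∈ A) with hs
  have hspos : ∀ a ∈ s, 0 < a := fun a ha => hApos a (Finset.mem_filter.1 ha).2
  have hlog := (IsLogDeriv.prod s _ _ fun a ha =>
    isLogDeriv_one_sub_X_pow (R := WW) (hspos a ha)).mul
    (IsLogDeriv.prod Finset.univ _ _ fun i _ => teichLift_isLogDeriv (Ps i))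
  have hmem : (∏ a ∈ s, (1 - PowerSeries.X ^ a)) * ∏ i, teichLift (Ps i) - 1 ∈ lowIdeal WW n 1 := by
    intro i hi
    rw [pow_one, two_dvd_iff, ← PowerSeries.coeff_map, map_sub, map_mul, map_prod, map_prod,
      map_one]
    simp only [map_teichLift (hirr _) (h0 _), map_sub (PowerSeries.map WittVector.constantCoeff),
      map_one (PowerSeries.map WittVector.constantCoeff), map_pow, PowerSeries.map_X]
    have hP : ∏ i, PowerSeries.map (algebraMap (ZMod 2) KK) (Ps i : PowerSeries (ZMod 2))
        = PowerSeries.mk fun n => (partitionCount A n : KK) := by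
      rw [← map_prod]
      ext m
      have := congrArg (algebraMap (ZMod 2) KK) (hA m)
      rw [map_natCast] at this
      rw [PowerSeries.coeff_mk, this, PowerSeries.coeff_map]
      congr 1
      rw [← Polynomial.coeff_coe]
      congr 1
      simp only [← coeToPowerSeries.ringHom_apply, map_prod]
    have hU1 := mk_partitionCount_mul_prod KK s hspos
    generalize hV : ∏ a ∈ s, (1 - PowerSeries.X ^ a : PowerSeries KK) = V at hU1 ⊢
    rw [hP, mul_comm, ← hU1, ← sub_mul, PowerSeries.coeff_mul]
    refine Finset.sum_eq_zero fun x hx => ?_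
    have hx' := Finset.HasAntidiagonal.mem_antidiagonal.1 hx
    rw [map_sub, PowerSeries.coeff_mk, PowerSeries.coeff_mk,
      partitionCount_congr (A := A) (B := (s : Set ℕ)), sub_self, zero_mul]
    intro t ht
    simp only [hs, Finset.coe_filter, Finset.mem_range, Set.mem_ofPred_eq]
    constructor
    · exact fun h => ⟨by omega, h⟩
    · exact fun h => h.2
  have hdvd := logDeriv_coeff_dvd WW_two_ne_zero hn he hmem hlog
  rw [← dvd_neg]
  convert hdvd using 1
  rw [map_add, map_sum, map_sum]
  simp only [PowerSeries.coeff_mk, if_pos hn.ne', Finset.sum_neg_distrib, neg_add]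
  congr 1
  rw [← Finset.sum_filter, Finset.sum_neg_distrib, Nat.cast_sum]
  congr 1
  refine Finset.sum_congr ?_ fun _ _ => rfl
  ext a
  simp only [hs, Finset.mem_filter, Nat.mem_divisors, Finset.mem_range]
  constructor
  · rintro ⟨⟨h1, h2⟩, h3⟩
    exact ⟨⟨by have := Nat.le_of_dvd hn h1; omega, h3⟩, h2, h1⟩
  · rintro ⟨⟨h1, h2⟩, h3, h4⟩
    exact ⟨⟨h4, h3⟩, h2⟩

end PartSet

/-! ### Möbius transforms and the shape of the elements of `A` -/

namespace PartSet

lemma sum_divisors_mul_coprime {M : Type*} [AddCommMonoid M] {a b : ℕ} (hab : a.Coprime b)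
    (f : ℕ → M) :
    ∑ d ∈ (a * b).divisors, f d = ∑ x ∈ a.divisors, ∑ y ∈ b.divisors, f (x * y) := by
  rw [Nat.divisors_mul, Finset.mul_def, Finset.sum_image hab.mul_injOn_divisors,
    Finset.sum_product]

/-- The Möbius transform `∑_{d ∣ m} μ(d) s(m / d)`. -/
def mobSum {R : Type*} [CommRing R] (s : ℕ → R) (m : ℕ) : R :=
  ∑ d ∈ m.divisors, (ArithmeticFunction.moebius d : R) * s (m / d)

/-- Only `1` and `p` contribute to the Möbius transform among the powers of a prime `p`. -/
lemma mobSum_prime_pow_mul {R : Type*} [CommRing R] (s : ℕ → R) {p a m : ℕ} (hp : p.Prime)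
    (hpm : ¬ p ∣ m) :
    mobSum s (p ^ (a + 1) * m) = mobSum (fun n => s (p ^ (a + 1) * n) - s (p ^ a * n)) m := by
  unfold mobSum
  have hcop : (p ^ (a + 1)).Coprime m := Nat.Coprime.pow_left _ ((Nat.Prime.coprime_iff_not_dvd hp).2 hpm)
  rw [sum_divisors_mul_coprime hcop, Nat.sum_divisors_prime_pow hp, Finset.sum_range_succ',
    Finset.sum_range_succ']
  have hz : ∀ i ∈ Finset.range a, ∑ y ∈ m.divisors,
      (ArithmeticFunction.moebius (p ^ (i + 1 + 1) * y) : R)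
        * s (p ^ (a + 1) * m / (p ^ (i + 1 + 1) * y)) = 0 := by
    intro i _
    refine Finset.sum_eq_zero fun y _ => ?_
    rw [ArithmeticFunction.moebius_eq_zero_of_not_squarefree, Int.cast_zero, zero_mul]
    intro h
    have h1 : p * p ∣ p ^ (i + 1 + 1) * y := ⟨p ^ i * y, by ring⟩
    exact hp.one_lt.ne' (Nat.isUnit_iff.1 (h p h1))
  rw [Finset.sum_eq_zero hz, zero_add, ← Finset.sum_add_distrib]
  refine Finset.sum_congr rfl fun y hy => ?_
  obtain ⟨hy1, hm0⟩ := Nat.mem_divisors.1 hy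
  have hpy : p.Coprime y := (Nat.Prime.coprime_iff_not_dvd hp).2 fun h => hpm (h.trans hy1)
  have hmu : ArithmeticFunction.moebius (p * y) = - ArithmeticFunction.moebius y := by
    rw [ArithmeticFunction.isMultiplicative_moebius.map_mul_of_coprime hpy,
      ArithmeticFunction.moebius_apply_prime hp]; ring
  have hd : p ^ (a + 1) * m / (p * y) = p ^ a * (m / y) := by
    rw [pow_succ', mul_assoc, Nat.mul_div_mul_left _ _ hp.pos, Nat.mul_div_assoc _ hy1]
  rw [zero_add, pow_one, pow_zero, one_mul, hmu, hd, Nat.mul_div_assoc _ hy1]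
  push_cast
  ring

lemma mobSum_congr {R : Type*} [CommRing R] {s s' : ℕ → R} (h : ∀ n, s n = s' n) (m : ℕ) :
    mobSum s m = mobSum s' m := by
  rw [funext h]

lemma mobSum_const_mul {R : Type*} [CommRing R] (c : R) (s : ℕ → R) (m : ℕ) :
    mobSum (fun n => c * s n) m = c * mobSum s m := by
  unfold mobSum
  rw [Finset.mul_sum]
  exact Finset.sum_congr rfl fun _ _ => by ring

lemma exists_eq_prime_pow_succ_mul {p m : ℕ} (hp : p.Prime) (hm : m ≠ 0) (hpm : p ∣ m) :
    ∃ a m', m = p ^ (a + 1) * m' ∧ ¬ p ∣ m' ∧ m' ≠ 0 := by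
  obtain ⟨b, m', h1, h2⟩ := Nat.exists_eq_pow_mul_and_not_dvd hm p hp.ne_one
  rcases b with _ | a
  · rw [pow_zero, one_mul] at h2
    exact absurd (h2 ▸ hpm) h1
  · exact ⟨a, m', h2, h1, by rintro rfl; simp at h1⟩

lemma mobSum_eq_zero {R : Type*} [CommRing R] (s : ℕ → R) {p m : ℕ} (hp : p.Prime) (hm : m ≠ 0)
    (hpm : p ∣ m) (hs : ∀ n, s (p * n) = s n) : mobSum s m = 0 := by
  obtain ⟨a, m', rfl, h1, _⟩ := exists_eq_prime_pow_succ_mul hp hm hpm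
  rw [mobSum_prime_pow_mul s hp h1]
  have : ∀ n, s (p ^ (a + 1) * n) - s (p ^ a * n) = 0 := fun n => by
    rw [pow_succ', mul_assoc, hs, sub_self]
  simp [mobSum, this]

open scoped Classical in
/-- The number of distinct prime factors of `m` lying in `T`. -/
noncomputable def omegaT (T : Set ℕ) (m : ℕ) : ℕ := (m.primeFactors.filter (· ∈ T)).card

lemma omegaT_prime_pow_mul {T : Set ℕ} {p a m : ℕ} (hp : p.Prime) (hpT : p ∈ T) (hm : m ≠ 0)
    (hpm : ¬ p ∣ m) : omegaT T (p ^ (a + 1) * m) = omegaT T m + 1 := by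
  classical
  unfold omegaT
  rw [Nat.primeFactors_mul (pow_ne_zero _ hp.ne_zero) hm, Nat.primeFactors_prime_pow (by omega) hp,
    Finset.filter_union, Finset.filter_singleton, if_pos hpT, Finset.singleton_union,
    Finset.card_insert_of_notMem]
  simp [hpm]

lemma exists_of_omegaT_pos {T : Set ℕ} {m : ℕ} (h : 0 < omegaT T m) :
    ∃ p, p.Prime ∧ p ∈ T ∧ p ∣ m := by
  classical
  obtain ⟨p, hp⟩ := Finset.card_pos.1 h
  rw [Finset.mem_filter, Nat.mem_primeFactors] at hp
  exact ⟨p, hp.1.1, hp.2, hp.1.2.1⟩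

/-- If `s` changes sign under multiplication by primes of `T`, each such prime dividing `m`
contributes a factor `2` to the Möbius transform. -/
lemma two_pow_dvd_mobSum_of_anti {R : Type*} [CommRing R] {T : Set ℕ} (s : ℕ → R)
    (hs : ∀ p, p.Prime → p ∈ T → ∀ n, s (p * n) = -s n) (w : ℕ) :
    ∀ m, m ≠ 0 → omegaT T m = w → (2 : R) ^ w ∣ mobSum s m := by
  induction w with
  | zero => intro m _ _; simp
  | succ w ih =>
    intro m hm hw
    obtain ⟨p, hp, hpT, hpm⟩ := exists_of_omegaT_pos (by omega : 0 < omegaT T m)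
    obtain ⟨a, m', rfl, h1, h2⟩ := exists_eq_prime_pow_succ_mul hp hm hpm
    rw [omegaT_prime_pow_mul hp hpT h2 h1] at hw
    rw [mobSum_prime_pow_mul s hp h1]
    have hpow : ∀ b n, s (p ^ b * n) = (-1) ^ b * s n := by
      intro b
      induction b with
      | zero => simp
      | succ b ihb => intro n; rw [pow_succ', mul_assoc, hs p hp hpT, ihb]; ring
    rw [mobSum_congr (s' := fun n => (-2 * (-1) ^ a) * s n)
      (fun n => by rw [hpow, hpow]; ring), mobSum_const_mul, pow_succ']
    exact mul_dvd_mul ⟨-(-1) ^ a, by ring⟩ (ih m' h2 (by omega))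

/-- If primes of `T` act on `s` by one and the same involution, then after removing one such prime
the sequence changes sign under the remaining ones. -/
lemma two_pow_dvd_mobSum {R : Type*} [CommRing R] {T : Set ℕ} (s : ℕ → R)
    (h1 : ∀ p p', p ∈ T → p' ∈ T → ∀ n, s (p * n) = s (p' * n))
    (h2 : ∀ p p', p ∈ T → p' ∈ T → ∀ n, s (p * (p' * n)) = s n) {m k : ℕ} (hm : m ≠ 0)
    (hk : k + 1 ≤ omegaT T m) : (2 : R) ^ k ∣ mobSum s m := by
  obtain ⟨p, hp, hpT, hpm⟩ := exists_of_omegaT_pos (by omega : 0 < omegaT T m)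
  obtain ⟨a, m', rfl, hpm', hm'⟩ := exists_eq_prime_pow_succ_mul hp hm hpm
  rw [omegaT_prime_pow_mul hp hpT hm' hpm'] at hk
  rw [mobSum_prime_pow_mul s hp hpm']
  refine (pow_dvd_pow _ (by omega : k ≤ omegaT T m')).trans
    (two_pow_dvd_mobSum_of_anti (T := T) _ ?_ _ m' hm' rfl)
  intro p' _ hp'T n
  have e1 : s (p ^ (a + 1) * (p' * n)) = s (p ^ a * n) := by
    have := h2 p p' hpT hp'T (p ^ a * n)
    rw [← this]; congr 1; ring
  have e2 : s (p ^ a * (p' * n)) = s (p ^ (a + 1) * n) := by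
    have := h1 p p' hpT hp'T (p ^ a * n)
    rw [show p ^ (a + 1) * n = p * (p ^ a * n) by ring, this]; congr 1; ring
  rw [e1, e2]; ring

/-- Möbius inversion over the odd part: the Möbius transform of `n ↦ ∑_{d ∣ 2 ^ k n, d ∈ A} d` at
an odd `m` is `m` times the integer whose binary digits record which `2 ^ a m` lie in `A`. -/
lemma mobSum_divisor_sum {R : Type*} [CommRing R] (A : Set ℕ) [DecidablePred (· ∈ A)] (k m : ℕ)
    (hm : ¬ 2 ∣ m) :
    mobSum (fun n => ((∑ a ∈ (2 ^ k * n).divisors with a ∈ A, a : ℕ) : R)) m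
      = ((m * ∑ a ∈ Finset.range (k + 1), if 2 ^ a * m ∈ A then 2 ^ a else 0 : ℕ) : R) := by
  have hm0 : 0 < m := Nat.pos_of_ne_zero (by rintro rfl; simp at hm)
  have := (ArithmeticFunction.sum_eq_iff_sum_mul_moebius_eq_on (R := R)
    (f := fun d => ((d * ∑ a ∈ Finset.range (k + 1), if 2 ^ a * d ∈ A then 2 ^ a else 0 : ℕ) : R))
    (g := fun n => ((∑ a ∈ (2 ^ k * n).divisors with a ∈ A, a : ℕ) : R))
    {n | ¬ 2 ∣ n} (fun a b hab hb h => hb (h.trans hab))).1 ?_ m hm0 hm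
  · rw [← this, mobSum, Nat.sum_divisorsAntidiagonal
      (f := fun x y => (ArithmeticFunction.moebius x : R) *
        ((∑ a ∈ (2 ^ k * y).divisors with a ∈ A, a : ℕ) : R))]
  · intro n hn hn2
    have hcop : (2 ^ k).Coprime n :=
      Nat.Coprime.pow_left _ ((Nat.Prime.coprime_iff_not_dvd Nat.prime_two).2 hn2)
    rw [Finset.sum_filter, sum_divisors_mul_coprime hcop, Finset.sum_comm, ← Nat.cast_sum]
    congr 1
    refine Finset.sum_congr rfl fun d _ => ?_
    rw [Nat.sum_divisors_prime_pow Nat.prime_two, Finset.mul_sum]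
    refine Finset.sum_congr rfl fun a _ => ?_
    split_ifs <;> ring

/-- The arithmetic shape of the elements `2 ^ k m` of `A`, `m` odd: for some `i` the number `m` has
no prime factor in a bad class modulo `q i`, and at most `k + 1` prime factors in the coset
`u i E(q i)`. Otherwise every `mobSum (powerSum (Ps i)) m` is divisible by `2 ^ (k + 1)`, hence so
is the integer whose binary digits, up to the `k`-th, record which `2 ^ a m` lie in `A`. -/
lemma exists_of_mem {j : ℕ} (Ps : Fin j → (ZMod 2)[X]) (hirr : ∀ i, Irreducible (Ps i))
    (h0 : ∀ i, (Ps i).coeff 0 = 1) (A : Set ℕ) (hApos : ∀ a ∈ A, 0 < a)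
    (hA : ∀ n : ℕ, (partitionCount A n : ZMod 2) = (∏ i, Ps i).coeff n)
    (q : Fin j → ℕ) (hq : ∀ i, Ps i ∣ X ^ q i - 1) (u : ∀ i, ZMod (q i))
    (hu : ∀ i, u i ^ 2 ∈ badE (q i)) {k m : ℕ} (hm : ¬ 2 ∣ m) (hmem : 2 ^ k * m ∈ A) :
    ∃ i, (∀ p, p.Prime → p ∣ m → (p : ZMod (q i)) ∉ badE (q i)) ∧
      omegaT {p | ∃ l : ℕ, (p : ZMod (q i)) = u i * 2 ^ l} m ≤ k + 1 := by
  classical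
  by_contra! hcon
  have hm0 : m ≠ 0 := by rintro rfl; simp at hm
  have htwo : ∀ (i : Fin j) (l n : ℕ), powerSum (Ps i) (2 ^ l * n) = powerSum (Ps i) n := by
    intro i l
    induction l with
    | zero => simp
    | succ l ih => intro n; rw [pow_succ', mul_assoc, powerSum_two_mul, ih]
  have hinv : ∀ (i : Fin j) (l l' n n' : ℕ), (2 : ZMod (q i)) ^ l * n = 2 ^ l' * n' →
      powerSum (Ps i) n = powerSum (Ps i) n' := by
    intro i l l' n n' h
    rw [← htwo i l n, ← htwo i l' n']
    refine powerSum_congr (hq i) ((ZMod.natCast_eq_natCast_iff _ _ _).1 ?_)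
    push_cast
    exact h
  have hdvd : ∀ i, (2 : WW) ^ (k + 1) ∣ mobSum (powerSum (Ps i)) m := by
    intro i
    by_cases hb : ∀ p, p.Prime → p ∣ m → (p : ZMod (q i)) ∉ badE (q i)
    · have hw := hcon i hb
      refine two_pow_dvd_mobSum _ ?_ ?_ hm0 hw
      · rintro p p' ⟨l, hl⟩ ⟨l', hl'⟩ n
        refine hinv i l' l _ _ ?_
        push_cast
        rw [hl, hl']; ring
      · rintro p p' ⟨l, hl⟩ ⟨l', hl'⟩ n
        obtain ⟨t, _, ht⟩ := hu i
        refine hinv i 0 (t + l + l') _ _ ?_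
        push_cast
        rw [hl, hl']
        linear_combination 2 ^ l * 2 ^ l' * (n : ZMod (q i)) * ht
    · push Not at hb
      obtain ⟨p, hp, hpm, t, _, ht⟩ := hb
      rw [mobSum_eq_zero _ hp hm0 hpm fun n => hinv i 0 t _ _ (by push_cast; rw [ht]; ring)]
      exact dvd_zero _
  -- `2 ^ (k + 1)` will divide `N < 2 ^ (k + 1)`, so `N = 0`, although the digit `2 ^ k` of `N` is `1`
  set N := ∑ a ∈ Finset.range (k + 1), if 2 ^ a * m ∈ A then 2 ^ a else 0 with hN
  have h1 : (2 : WW) ^ (k + 1) ∣ ((m * N : ℕ) : WW) := by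
    rw [hN, ← mobSum_divisor_sum A k m hm]
    have h2 : (2 : WW) ^ (k + 1) ∣
        mobSum (fun n => ((∑ a ∈ (2 ^ k * n).divisors with a ∈ A, a : ℕ) : WW)) m
        + ∑ i, mobSum (powerSum (Ps i)) m := by
      unfold mobSum
      rw [Finset.sum_comm, ← Finset.sum_add_distrib]
      refine Finset.dvd_sum fun d hd => ?_
      rw [← Finset.mul_sum, ← mul_add]
      refine Dvd.dvd.mul_left ?_ _
      have hpos : 0 < 2 ^ k * (m / d) := by
        have := Nat.div_pos (Nat.divisor_le hd) (Nat.pos_of_mem_divisors hd)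
        positivity
      have := divisor_sum_congr Ps hirr h0 A hApos hA hpos (Dvd.intro _ rfl)
      simpa only [htwo] using this
    exact (dvd_add_left (Finset.dvd_sum fun i _ => hdvd i)).1 h2
  have h3 : 2 ^ (k + 1) ∣ N := by
    have hcop : (2 ^ (k + 1)).Coprime m :=
      Nat.Coprime.pow_left _ ((Nat.Prime.coprime_iff_not_dvd Nat.prime_two).2 hm)
    exact hcop.dvd_of_dvd_mul_left (two_pow_dvd_of_WW h1)
  have h4 : N < 2 ^ (k + 1) := by
    refine lt_of_le_of_lt (Finset.sum_le_sum (g := fun a => 2 ^ a) fun a _ => ?_) ?_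
    · split_ifs <;> simp
    · have := Nat.geomSum_lt (m := 2) (n := k + 1) (s := Finset.range (k + 1)) le_rfl
        fun x hx => Finset.mem_range.1 hx
      exact this
  have h5 : 2 ^ k ≤ N := by
    have := Finset.single_le_sum (f := fun a => if 2 ^ a * m ∈ A then 2 ^ a else 0)
      (fun a _ => Nat.zero_le _) (Finset.mem_range.2 (Nat.lt_succ_self k))
    simpa [hmem] using this
  have h6 := Nat.eq_zero_of_dvd_of_lt h3 h4
  have : 0 < 2 ^ k := by positivity
  omega

end PartSet

/-! ### Orders of polynomials and cosets of the bad classes -/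

namespace PartSet

lemma exists_dvd_X_pow_sub_one {Q : (ZMod 2)[X]} (hQ : Irreducible Q) (h0 : Q.coeff 0 = 1) :
    ∃ n, 0 < n ∧ Q ∣ X ^ n - 1 := by
  have : Fact (Irreducible Q) := ⟨hQ⟩
  have : Module.Finite (ZMod 2) (AdjoinRoot Q) := (AdjoinRoot.powerBasis hQ.ne_zero).finite
  have : Finite (AdjoinRoot Q) := Module.finite_of_finite (ZMod 2)
  have hr : AdjoinRoot.root Q ≠ 0 := by
    intro h
    rw [← AdjoinRoot.mk_X, AdjoinRoot.mk_eq_zero] at h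
    have := X_dvd_iff.not.2 (by rw [h0]; exact one_ne_zero : Q.coeff 0 ≠ 0)
    exact this ((hQ.dvd_comm prime_X.irreducible).1 h)
  obtain ⟨n, hn, hn'⟩ := isOfFinOrder_iff_pow_eq_one.1
    (isOfFinOrder_of_finite (Units.mk0 (AdjoinRoot.root Q) hr))
  refine ⟨n, hn, ?_⟩
  rw [← AdjoinRoot.mk_eq_zero]
  have := congrArg Units.val hn'
  simp only [Units.val_pow_eq_pow_val, Units.val_mk0, Units.val_one] at this
  simp [this]

lemma polyOrder_spec {Q : (ZMod 2)[X]} (hQ : Irreducible Q) (h0 : Q.coeff 0 = 1) :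
    0 < polyOrder Q ∧ Q ∣ X ^ polyOrder Q - 1 :=
  Nat.sInf_mem (s := {m | 0 < m ∧ Q ∣ X ^ m - 1}) (exists_dvd_X_pow_sub_one hQ h0)

lemma polyOrder_odd {Q : (ZMod 2)[X]} (hQ : Irreducible Q) (h0 : Q.coeff 0 = 1) :
    Odd (polyOrder Q) := by
  by_contra h
  rw [Nat.not_odd_iff_even] at h
  obtain ⟨k, hk⟩ := h
  obtain ⟨hpos, hd⟩ := polyOrder_spec hQ h0
  have e : (X : (ZMod 2)[X]) ^ polyOrder Q - 1 = (X ^ k - 1) ^ 2 := by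
    rw [hk, sub_sq, one_pow, mul_one]
    have : (2 : (ZMod 2)[X]) = 0 := CharTwo.two_eq_zero
    linear_combination (X ^ k - 1) * this
  rw [e] at hd
  have := Nat.sInf_le (s := {m | 0 < m ∧ Q ∣ X ^ m - 1})
    ⟨(by omega : 0 < k), hQ.prime.dvd_of_dvd_pow hd⟩
  change polyOrder Q ≤ k at this
  omega

lemma isUnit_two {q : ℕ} (hq : Odd q) : IsUnit (2 : ZMod q) :=
  (ZMod.isUnit_iff_coprime 2 q).2 (Nat.coprime_two_left.2 hq)

lemma orderOf_two_pos {q : ℕ} (hq : Odd q) : 0 < orderOf (2 : ZMod q) := by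
  have : NeZero q := ⟨hq.pos.ne'⟩
  rw [orderOf_pos_iff, ← (isUnit_two hq).unit_spec, Units.isOfFinOrder_val]
  exact isOfFinOrder_of_finite _

lemma mem_badE_iff {q : ℕ} (hq : Odd q) {x : ZMod q} : x ∈ badE q ↔ ∃ l : ℕ, x = 2 ^ l := by
  constructor
  · rintro ⟨l, _, h⟩
    exact ⟨l, h⟩
  · rintro ⟨l, h⟩
    exact ⟨l % orderOf 2, Nat.mod_lt _ (orderOf_two_pos hq), by rw [pow_mod_orderOf, h]⟩

/-- The coset `u E(q)` of the group of bad classes, as a finite set. -/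
noncomputable def cosetE (q : ℕ) (u : ZMod q) : Finset (ZMod q) :=
  (Finset.range (orderOf (2 : ZMod q))).image fun l => u * 2 ^ l

lemma mem_cosetE {q : ℕ} (hq : Odd q) {u x : ZMod q} :
    x ∈ cosetE q u ↔ ∃ l : ℕ, x = u * 2 ^ l := by
  simp only [cosetE, Finset.mem_image, Finset.mem_range]
  constructor
  · rintro ⟨l, _, h⟩
    exact ⟨l, h.symm⟩
  · rintro ⟨l, h⟩
    exact ⟨l % orderOf 2, Nat.mod_lt _ (orderOf_two_pos hq), by rw [pow_mod_orderOf, h]⟩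

lemma mem_cosetE_one {q : ℕ} (hq : Odd q) {x : ZMod q} : x ∈ cosetE q 1 ↔ x ∈ badE q := by
  rw [mem_cosetE hq, mem_badE_iff hq]
  simp

lemma isUnit_of_mem_cosetE {q : ℕ} (hq : Odd q) {u x : ZMod q} (hu : IsUnit u)
    (hx : x ∈ cosetE q u) : IsUnit x := by
  obtain ⟨l, rfl⟩ := (mem_cosetE hq).1 hx
  exact hu.mul ((isUnit_two hq).pow l)

lemma card_cosetE {q : ℕ} {u : ZMod q} (hu : IsUnit u) :
    (cosetE q u).card = orderOf (2 : ZMod q) := by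
  rw [cosetE, Finset.card_image_of_injOn, Finset.card_range]
  intro a ha b hb h
  exact pow_injOn_Iio_orderOf (by simpa using ha) (by simpa using hb) (hu.mul_left_cancel h)

lemma disjoint_cosetE {q : ℕ} (hq : Odd q) {u : ZMod q} (hu : u ∉ badE q) :
    Disjoint (cosetE q 1) (cosetE q u) := by
  rw [Finset.disjoint_left]
  intro x h1 h2
  obtain ⟨l, hl⟩ := (mem_cosetE hq).1 h1
  obtain ⟨l', hl'⟩ := (mem_cosetE hq).1 h2
  refine hu ((mem_badE_iff hq).2 ⟨l + l' * (orderOf (2 : ZMod q) - 1), ?_⟩)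
  have h2 : (2 : ZMod q) ^ l' * 2 ^ (l' * (orderOf (2 : ZMod q) - 1)) = 1 := by
    rw [← pow_add, ← mul_one_add, add_comm, Nat.sub_add_cancel (show 1 ≤ orderOf (2 : ZMod q) from orderOf_two_pos hq), mul_comm,
      pow_mul, pow_orderOf_eq_one, one_pow]
  rw [pow_add]
  rw [hl'] at hl
  linear_combination 2 ^ (l' * (orderOf (2 : ZMod q) - 1)) * hl - u * h2

end PartSet

/-! ### Primes in arithmetic progressions -/

namespace PartSet

open ArithmeticFunction ArithmeticFunction.vonMangoldt LSeries Complex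

/-- `∑ 1 / p ^ σ` over the primes `p ≡ a (mod q)`. -/
noncomputable def primeSum (q : ℕ) (a : ZMod q) (σ : ℝ) : ℝ :=
  ∑' n : ℕ, {p : ℕ | p.Prime ∧ (p : ZMod q) = a}.indicator (1 : ℕ → ℝ) n / (n : ℝ) ^ σ

lemma abscissa_indicator_le_one (s : Set ℕ) :
    abscissaOfAbsConv (fun n => ((s.indicator (1 : ℕ → ℝ) n : ℝ) : ℂ)) ≤ 1 := by
  refine abscissaOfAbsConv_le_of_le_const ⟨1, fun n _ => ?_⟩
  by_cases hn : n ∈ s <;> simp [hn]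

lemma summable_indicator_div (s : Set ℕ) {σ : ℝ} (hσ : 1 < σ) :
    Summable fun n : ℕ => s.indicator (1 : ℕ → ℝ) n / (n : ℝ) ^ σ :=
  summable_real_of_abscissaOfAbsConv_lt
    ((abscissa_indicator_le_one s).trans_lt (by exact_mod_cast hσ))

lemma LSeries_ofReal_eq {f : ℕ → ℝ} (hf : f 0 = 0) (σ : ℝ) :
    LSeries (fun n => (f n : ℂ)) σ = ((∑' n : ℕ, f n / (n : ℝ) ^ σ : ℝ) : ℂ) := by
  rw [ofReal_tsum, LSeries]
  refine tsum_congr fun n => ?_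
  rcases eq_or_ne n 0 with rfl | hn
  · simp [hf]
  · rw [term_of_ne_zero hn]
    push_cast
    rw [ofReal_cpow (Nat.cast_nonneg _)]
    simp

lemma residueClass_sum_bound {q : ℕ} [NeZero q] {a : ZMod q} (ha : IsUnit a) :
    ∃ C : ℝ, ∀ σ ∈ Set.Ioc (1 : ℝ) 2,
      |∑' n : ℕ, residueClass a n / (n : ℝ) ^ σ - (q.totient : ℝ)⁻¹ / (σ - 1)| ≤ C := by
  have H {x : ℝ} (hx : 1 < x) : ∑' n : ℕ, residueClass a n / (n : ℝ) ^ x =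
      (LFunctionResidueClassAux a x).re + (q.totient : ℝ)⁻¹ / (x - 1) := by
    refine ofReal_injective ?_
    rw [← LSeries_ofReal_eq (residueClass_apply_zero a)]
    simp only [ofReal_div, ofReal_add, ofReal_inv, ofReal_sub, ofReal_one, ofReal_natCast]
    rw [← LFunctionResidueClassAux_real ha hx,
      eqOn_LFunctionResidueClassAux ha <| Set.mem_ofPred.mpr (ofReal_re x ▸ hx), sub_add_cancel]
  have hc : ContinuousOn (fun x : ℝ => (LFunctionResidueClassAux a x).re) (Set.Icc 1 2) :=
    continuous_re.continuousOn.comp (t := Set.univ) (continuousOn_LFunctionResidueClassAux a)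
      (fun _ _ => trivial) |>.comp continuous_ofReal.continuousOn fun x hx => by
        simpa only [Set.mem_ofPred_eq, ofReal_re] using hx.1
  obtain ⟨C, hC⟩ := isCompact_Icc.exists_bound_of_continuousOn hc
  refine ⟨C, fun σ hσ => ?_⟩
  rw [H hσ.1, add_sub_cancel_right]
  exact hC σ (Set.Ioc_subset_Icc_self hσ)

/-- Mertens' estimate in arithmetic progressions, in the Dirichlet series form. It follows by
integrating in `σ` the estimate for `∑ Λ(n) / n ^ σ` over `n ≡ a`. -/
lemma primeSum_bound {q : ℕ} [NeZero q] {a : ZMod q} (ha : IsUnit a) :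
    ∃ C : ℝ, ∀ σ ∈ Set.Ioc (1 : ℝ) 2,
      |primeSum q a σ + (q.totient : ℝ)⁻¹ * Real.log (σ - 1)| ≤ C := by
  obtain ⟨C, hC⟩ := residueClass_sum_bound ha
  set s : Set ℕ := {p : ℕ | p.Prime ∧ (p : ZMod q) = a} with hs
  set f : ℕ → ℂ := fun n => ((s.indicator (1 : ℕ → ℝ) n : ℝ) : ℂ) with hf
  have hf0 : s.indicator (1 : ℕ → ℝ) 0 = 0 := by simp [hs, Nat.not_prime_zero]
  set g : ℕ → ℝ := fun n => Real.log n * s.indicator (1 : ℕ → ℝ) n with hg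
  -- `g` is the restriction of `Λ` to the primes `≡ a`, and `w` the contribution of the proper prime
  -- powers, whose Dirichlet series is bounded near `σ = 1`
  set w : ℕ → ℝ := fun n => if n.Prime then 0 else residueClass a n with hw
  have hgw : ∀ n, g n = residueClass a n - w n := by
    intro n
    by_cases hp : n.Prime
    · by_cases hn : (n : ZMod q) = a
      · simp [hg, hw, hs, hp, hn, vonMangoldt_apply_prime hp]
      · simp [hg, hw, hs, hp, hn]
    · simp [hg, hw, hs, hp]
  have hw0 : ∀ n, 0 ≤ w n := fun n => by
    simp only [hw]; split_ifs; exacts [le_rfl, residueClass_nonneg a n]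
  have hws := summable_residueClass_non_primes_div (a := a)
  set K := ∑' n : ℕ, w n / n with hK
  have hwle : ∀ σ : ℝ, 1 < σ → ∀ n : ℕ, w n / (n : ℝ) ^ σ ≤ w n / n := by
    intro σ hσ n
    rcases n.eq_zero_or_pos with rfl | hn
    · simp [hw]
    · refine div_le_div_of_nonneg_left (hw0 n) (mod_cast hn) ?_
      conv_lhs => rw [← Real.rpow_one n]
      exact Real.rpow_le_rpow_of_exponent_le (by norm_cast) hσ.le
  have hwn : ∀ σ : ℝ, ∀ n : ℕ, 0 ≤ w n / (n : ℝ) ^ σ := fun σ n =>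
    div_nonneg (hw0 n) (Real.rpow_nonneg (Nat.cast_nonneg _) _)
  have hder : ∀ σ : ℝ, 1 < σ → HasDerivAt (fun x : ℝ => primeSum q a x)
      (-∑' n : ℕ, g n / (n : ℝ) ^ σ) σ := by
    intro σ hσ
    have h1 := (LSeries_hasDerivAt (f := f) (s := (σ : ℂ))
      ((abscissa_indicator_le_one s).trans_lt (by exact_mod_cast hσ))).real_of_complex
    have h2 : ∀ x : ℝ, (LSeries f x).re = primeSum q a x := by
      intro x
      rw [hf, LSeries_ofReal_eq hf0, ofReal_re, primeSum]
    have h3 : logMul f = fun n => ((g n : ℝ) : ℂ) := by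
      funext n
      simp [logMul, hf, hg, natCast_log]
    rw [h3, LSeries_ofReal_eq (by simp [hg]), neg_re, ofReal_re] at h1
    simpa only [h2] using h1
  have hderv : ∀ σ ∈ Set.Ioc (1 : ℝ) 2,
      |-(∑' n : ℕ, g n / (n : ℝ) ^ σ) + (q.totient : ℝ)⁻¹ * (1 / (σ - 1))| ≤ C + K := by
    intro σ hσ
    have hsw : Summable fun n : ℕ => w n / (n : ℝ) ^ σ :=
      Summable.of_nonneg_of_le (hwn σ) (hwle σ hσ.1) hws
    have e : ∑' n : ℕ, g n / (n : ℝ) ^ σ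
        = ∑' n : ℕ, residueClass a n / (n : ℝ) ^ σ - ∑' n : ℕ, w n / (n : ℝ) ^ σ := by
      rw [← Summable.tsum_sub (summable_real_of_abscissaOfAbsConv_lt <|
        (abscissaOfAbsConv_residueClass_le_one a).trans_lt <| mod_cast hσ.1) hsw]
      exact tsum_congr fun n => by rw [hgw, sub_div]
    have b1 : ∑' n : ℕ, w n / (n : ℝ) ^ σ ≤ K := hsw.tsum_le_tsum (hwle σ hσ.1) hws
    have b2 : 0 ≤ ∑' n : ℕ, w n / (n : ℝ) ^ σ := tsum_nonneg (hwn σ)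
    have b3 := abs_le.1 (hC σ hσ)
    have e2 : (q.totient : ℝ)⁻¹ * (1 / (σ - 1)) = (q.totient : ℝ)⁻¹ / (σ - 1) := by ring
    rw [e, e2, abs_le]
    constructor <;> linarith [b3.1, b3.2]
  -- `Φ` has bounded derivative on `(1, 2]`, hence is bounded there
  set Φ : ℝ → ℝ := fun σ => primeSum q a σ + (q.totient : ℝ)⁻¹ * Real.log (σ - 1) with hΦ
  have hΦd : ∀ σ ∈ Set.Ioc (1 : ℝ) 2, HasDerivWithinAt Φ
      (-(∑' n : ℕ, g n / (n : ℝ) ^ σ) + (q.totient : ℝ)⁻¹ * (1 / (σ - 1))) (Set.Ioc 1 2) σ := by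
    intro σ hσ
    refine HasDerivAt.hasDerivWithinAt ((hder σ hσ.1).add (HasDerivAt.const_mul _ ?_))
    exact ((hasDerivAt_id' σ).sub_const 1).log (by linarith [hσ.1])
  refine ⟨(C + K) + |Φ 2|, fun σ hσ => ?_⟩
  have h2 : (2 : ℝ) ∈ Set.Ioc (1 : ℝ) 2 := by norm_num
  have := (convex_Ioc (1 : ℝ) 2).norm_image_sub_le_of_norm_hasDerivWithin_le hΦd hderv h2 hσ
  rw [Real.norm_eq_abs, Real.norm_eq_abs] at this
  have hCK : 0 ≤ C + K := (abs_nonneg _).trans (hderv 2 h2)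
  have h3 : |σ - 2| ≤ 1 := by rw [abs_le]; constructor <;> linarith [hσ.1, hσ.2]
  have h4 : (C + K) * |σ - 2| ≤ C + K := by nlinarith
  have h5 : |Φ σ| ≤ |Φ σ - Φ 2| + |Φ 2| := by
    have := abs_add_le (Φ σ - Φ 2) (Φ 2)
    rwa [sub_add_cancel] at this
  linarith

end PartSet

/-! ### An Euler product bound -/

namespace PartSet

section Weight

variable {q : ℕ} (E V : Finset (ZMod q))

/-- The weight of a prime `p`: `0` if its class is in `E`, `1 / 2` if it is in `V`, `1` otherwise. -/
noncomputable def weight (p : ℕ) : ℝ :=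
  if (p : ZMod q) ∈ E then 0 else if (p : ZMod q) ∈ V then 1 / 2 else 1

lemma weight_nonneg (p : ℕ) : 0 ≤ weight E V p := by unfold weight; split_ifs <;> norm_num

lemma weight_le_one (p : ℕ) : weight E V p ≤ 1 := by unfold weight; split_ifs <;> norm_num

/-- The multiplicative function with value `weight p` at all powers `p ^ a`, `a > 0`. -/
noncomputable def weightMul (m : ℕ) : ℝ := ∏ p ∈ m.primeFactors, weight E V p

lemma weightMul_nonneg (m : ℕ) : 0 ≤ weightMul E V m :=
  Finset.prod_nonneg fun p _ => weight_nonneg E V p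

/-- The weighted sum `∑ weight p / p ^ σ` has the density of `weight` as the coefficient of
`log (1 / (σ - 1))`. -/
lemma weight_sum_bound [NeZero q] (hE : ∀ a ∈ E, IsUnit a) (hV : ∀ a ∈ V, IsUnit a)
    (hEV : Disjoint E V) :
    ∃ C : ℝ, ∀ σ ∈ Set.Ioc (1 : ℝ) 2,
      Summable (fun n : ℕ => (if n.Prime then weight E V n else 0) / (n : ℝ) ^ σ) ∧
      ∑' n : ℕ, (if n.Prime then weight E V n else 0) / (n : ℝ) ^ σ
        ≤ (1 - (E.card + V.card / 2) / q.totient) * -Real.log (σ - 1) + C := by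
  have h : ∀ a : ZMod q, ∃ C : ℝ, IsUnit a → ∀ σ ∈ Set.Ioc (1 : ℝ) 2,
      |primeSum q a σ + (q.totient : ℝ)⁻¹ * Real.log (σ - 1)| ≤ C := by
    intro a
    by_cases ha : IsUnit a
    · obtain ⟨C, hC⟩ := primeSum_bound ha
      exact ⟨C, fun _ => hC⟩
    · exact ⟨0, fun h => absurd h ha⟩
  choose C hC using h
  obtain ⟨C₁, hC₁⟩ := primeSum_bound (q := 1) (a := 1) isUnit_one
  refine ⟨C₁ + ∑ a ∈ E, C a + 1 / 2 * ∑ a ∈ V, C a, fun σ hσ => ?_⟩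
  -- the modulus `1` gives the sum over all primes, from which the classes of `E` and half of those
  -- of `V` are subtracted
  set t : ∀ (q : ℕ), ZMod q → ℕ → ℝ := fun q a n =>
    {p : ℕ | p.Prime ∧ (p : ZMod q) = a}.indicator (1 : ℕ → ℝ) n / (n : ℝ) ^ σ with ht
  have hts : ∀ (q : ℕ) (a : ZMod q), HasSum (t q a) (primeSum q a σ) := fun q a =>
    (summable_indicator_div _ hσ.1).hasSum
  have e : ∀ n : ℕ, (if n.Prime then weight E V n else 0) / (n : ℝ) ^ σ =
      t 1 1 n - ∑ a ∈ E, t q a n - 1 / 2 * ∑ a ∈ V, t q a n := by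
    intro n
    simp only [ht, ← Finset.sum_div]
    rw [mul_div_assoc', ← sub_div, ← sub_div]
    congr 1
    by_cases hn : n.Prime
    · have hs : ∀ W : Finset (ZMod q), ∑ a ∈ W, {p : ℕ | p.Prime ∧ (p : ZMod q) = a}.indicator
          (1 : ℕ → ℝ) n = if (n : ZMod q) ∈ W then 1 else 0 := by
        intro W
        simp [Set.indicator_apply, hn]
      have h1 : {p : ℕ | p.Prime ∧ (p : ZMod 1) = 1}.indicator (1 : ℕ → ℝ) n = 1 := by
        simp [hn, eq_iff_true_of_subsingleton]
      rw [hs, hs, h1, if_pos hn, weight]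
      by_cases h1 : (n : ZMod q) ∈ E
      · simp [h1, Finset.disjoint_left.1 hEV h1]
      · by_cases h2 : (n : ZMod q) ∈ V
        · simp [h1, h2]; norm_num
        · simp [h1, h2]
    · simp [hn]
  have hsum : HasSum (fun n : ℕ => (if n.Prime then weight E V n else 0) / (n : ℝ) ^ σ)
      (primeSum 1 1 σ - ∑ a ∈ E, primeSum q a σ - 1 / 2 * ∑ a ∈ V, primeSum q a σ) := by
    simp only [e]
    exact ((hts 1 1).sub (hasSum_sum fun a _ => hts q a)).sub
      ((hasSum_sum fun a _ => hts q a).mul_left _)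
  refine ⟨hsum.summable, ?_⟩
  rw [hsum.tsum_eq]
  have b1 : primeSum 1 1 σ ≤ -Real.log (σ - 1) + C₁ := by
    have := (abs_le.1 (hC₁ σ hσ)).2
    simp only [Nat.totient_one, Nat.cast_one, inv_one, one_mul] at this
    linarith
  have b2 : ∀ W : Finset (ZMod q), (∀ a ∈ W, IsUnit a) →
      W.card * ((q.totient : ℝ)⁻¹ * -Real.log (σ - 1)) - ∑ a ∈ W, C a
        ≤ ∑ a ∈ W, primeSum q a σ := by
    intro W hW
    rw [← nsmul_eq_mul, ← Finset.sum_const, ← Finset.sum_sub_distrib]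
    refine Finset.sum_le_sum fun a ha => ?_
    linarith [(abs_le.1 (hC a (hW a ha) σ hσ)).1]
  have b3 := b2 E hE
  have b4 := b2 V hV
  have e2 : (1 - (E.card + V.card / 2) / q.totient) * -Real.log (σ - 1) =
      -Real.log (σ - 1) - E.card * ((q.totient : ℝ)⁻¹ * -Real.log (σ - 1))
        - 1 / 2 * (V.card * ((q.totient : ℝ)⁻¹ * -Real.log (σ - 1))) := by ring
  rw [e2]
  linarith

/-- The factor is `1 + w y / (1 - y)` with `w = weight p` and `y = p ^ (-σ) ≤ 1 / 2`, and
`y / (1 - y) ≤ y + 2 y ^ 2`. -/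
lemma euler_factor_le {p : ℕ} (hp : p.Prime) {σ : ℝ} (hσ : 1 < σ) :
    Summable (fun n : ℕ => ‖weightMul E V (p ^ n) * ((p ^ n : ℕ) : ℝ) ^ (-σ)‖) ∧
    ∑' n : ℕ, weightMul E V (p ^ n) * ((p ^ n : ℕ) : ℝ) ^ (-σ)
      ≤ Real.exp (weight E V p / (p : ℝ) ^ σ + 2 * (1 / (p : ℝ) ^ 2)) := by
  set y : ℝ := (p : ℝ) ^ (-σ) with hy
  have hp0 : (0 : ℝ) < p := mod_cast hp.pos
  have hp2 : (2 : ℝ) ≤ p := mod_cast hp.two_le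
  have hy0 : 0 < y := Real.rpow_pos_of_pos hp0 _
  have hyp : y ≤ 1 / p := by
    rw [hy, one_div, ← Real.rpow_neg_one]
    exact Real.rpow_le_rpow_of_exponent_le (by linarith) (by linarith)
  have hy2 : y ≤ 1 / 2 := hyp.trans (one_div_le_one_div_of_le (by norm_num) hp2)
  have hpow : ∀ n : ℕ, ((p ^ n : ℕ) : ℝ) ^ (-σ) = y ^ n := by
    intro n
    rw [hy, Nat.cast_pow, ← Real.rpow_natCast, ← Real.rpow_natCast, ← Real.rpow_mul hp0.le,
      ← Real.rpow_mul hp0.le, mul_comm]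
  have hw : ∀ n : ℕ, weightMul E V (p ^ (n + 1)) = weight E V p := by
    intro n
    rw [weightMul, Nat.primeFactors_prime_pow n.succ_ne_zero hp, Finset.prod_singleton]
  have hs1 : HasSum (fun n : ℕ => weightMul E V (p ^ (n + 1)) * ((p ^ (n + 1) : ℕ) : ℝ) ^ (-σ))
      (weight E V p * y * (1 - y)⁻¹) := by
    have e : ∀ n : ℕ, weightMul E V (p ^ (n + 1)) * ((p ^ (n + 1) : ℕ) : ℝ) ^ (-σ)
        = weight E V p * y * y ^ n := fun n => by rw [hw, hpow]; ring
    simp only [e]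
    exact (hasSum_geometric_of_lt_one hy0.le (by linarith)).mul_left _
  have hs := (hasSum_nat_add_iff (f := fun n : ℕ =>
    weightMul E V (p ^ n) * ((p ^ n : ℕ) : ℝ) ^ (-σ)) 1).1 hs1
  have hone : weightMul E V (p ^ 0) * ((p ^ 0 : ℕ) : ℝ) ^ (-σ) = 1 := by simp [weightMul]
  rw [Finset.sum_range_one, hone] at hs
  refine ⟨hs.summable.norm, ?_⟩
  rw [hs.tsum_eq]
  refine le_trans ?_ (Real.add_one_le_exp _)
  have hy' : weight E V p / (p : ℝ) ^ σ = weight E V p * y := by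
    rw [hy, Real.rpow_neg hp0.le, div_eq_mul_inv]
  have e : weight E V p * y * (1 - y)⁻¹ = weight E V p * y + weight E V p * (y ^ 2 * (1 - y)⁻¹) := by
    have : 1 - y ≠ 0 := by linarith
    field_simp
    ring
  have h1 : (1 - y)⁻¹ ≤ 2 := by
    rw [inv_le_comm₀ (by linarith) (by norm_num)]
    linarith
  have h2 : y ^ 2 ≤ 1 / (p : ℝ) ^ 2 := by
    rw [← one_div_pow]
    exact pow_le_pow_left₀ hy0.le hyp 2
  have h3 : 0 ≤ (1 - y)⁻¹ := inv_nonneg.2 (by linarith)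
  have h4 : weight E V p * (y ^ 2 * (1 - y)⁻¹) ≤ 2 * (1 / (p : ℝ) ^ 2) := by
    calc weight E V p * (y ^ 2 * (1 - y)⁻¹) ≤ 1 * (y ^ 2 * (1 - y)⁻¹) :=
          mul_le_mul_of_nonneg_right (weight_le_one E V p) (by positivity)
      _ ≤ 1 / (p : ℝ) ^ 2 * 2 := by
          rw [one_mul]
          exact mul_le_mul h2 h1 h3 (by positivity)
      _ = _ := by ring
  rw [hy', e]
  linarith

/-- Rankin's trick: a truncated sum of `weightMul m / m` is bounded, up to the factor `e`, by the
Euler product at `σ = 1 + 1 / log x`. -/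
lemma weightMul_sum_bound [NeZero q] (hE : ∀ a ∈ E, IsUnit a) (hV : ∀ a ∈ V, IsUnit a)
    (hEV : Disjoint E V) :
    ∃ C : ℝ, 0 ≤ C ∧ ∀ x : ℝ, Real.exp 1 ≤ x →
      ∑ m ∈ Finset.Icc 1 ⌊x⌋₊, weightMul E V m / m
        ≤ C * Real.log x ^ (1 - (E.card + V.card / 2) / q.totient : ℝ) := by
  obtain ⟨C, hC⟩ := weight_sum_bound E V hE hV hEV
  set K : ℝ := ∑' n : ℕ, 2 * (1 / (n : ℝ) ^ 2) with hK
  have hKs : Summable fun n : ℕ => 2 * (1 / (n : ℝ) ^ 2) :=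
    (Real.summable_one_div_nat_pow.2 one_lt_two).mul_left 2
  refine ⟨Real.exp 1 * Real.exp (C + K), by positivity, fun x hx => ?_⟩
  have hx0 : 0 < x := (Real.exp_pos 1).trans_le hx
  have hl1 : 1 ≤ Real.log x := (Real.le_log_iff_exp_le hx0).2 hx
  have hl0 : 0 < Real.log x := by linarith
  set σ : ℝ := 1 + 1 / Real.log x with hσdef
  have hinv : 1 / Real.log x ≤ 1 := by rw [div_le_one hl0]; exact hl1
  have hinv0 : 0 < 1 / Real.log x := by positivity
  have hσ : σ ∈ Set.Ioc (1 : ℝ) 2 := ⟨by linarith, by linarith⟩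
  obtain ⟨hCs, hCb⟩ := hC σ hσ
  set N := ⌊x⌋₊ + 1 with hN
  set f : ℕ → ℝ := fun m => weightMul E V m * (m : ℝ) ^ (-σ) with hf
  have hf0 : ∀ m, 0 ≤ f m := fun m =>
    mul_nonneg (weightMul_nonneg E V m) (Real.rpow_nonneg (Nat.cast_nonneg _) _)
  have hmul : ∀ {m n : ℕ}, m.Coprime n → f (m * n) = f m * f n := by
    intro m n hmn
    simp only [hf, weightMul]
    rw [hmn.primeFactors_mul, Finset.prod_union hmn.disjoint_primeFactors, Nat.cast_mul,
      Real.mul_rpow (Nat.cast_nonneg _) (Nat.cast_nonneg _)]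
    ring
  have hf1 : f 1 = 1 := by simp [hf, weightMul]
  obtain ⟨hsm, hsum⟩ := EulerProduct.summable_and_hasSum_smoothNumbers_prod_primesBelow_tsum hf1
    hmul (fun {p} hp => (euler_factor_le E V hp hσ.1).1) N
  have hprod : ∏ p ∈ N.primesBelow, ∑' n : ℕ, f (p ^ n) ≤
      Real.exp ((1 - (E.card + V.card / 2) / q.totient) * -Real.log (σ - 1) + C + K) := by
    calc ∏ p ∈ N.primesBelow, ∑' n : ℕ, f (p ^ n)
        ≤ ∏ p ∈ N.primesBelow,
            Real.exp (weight E V p / (p : ℝ) ^ σ + 2 * (1 / (p : ℝ) ^ 2)) :=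
          Finset.prod_le_prod (fun p _ => tsum_nonneg fun n => hf0 _) fun p hp =>
            (euler_factor_le E V (Nat.prime_of_mem_primesBelow hp) hσ.1).2
      _ = Real.exp (∑ p ∈ N.primesBelow,
            (if p.Prime then weight E V p else 0) / (p : ℝ) ^ σ
            + ∑ p ∈ N.primesBelow, 2 * (1 / (p : ℝ) ^ 2)) := by
          rw [← Real.exp_sum, Finset.sum_add_distrib]
          congr 2
          exact Finset.sum_congr rfl fun p hp => by rw [if_pos (Nat.prime_of_mem_primesBelow hp)]
      _ ≤ _ := by
          refine Real.exp_le_exp.2 (add_le_add ((hCs.sum_le_tsum _ fun n _ => ?_).trans hCb)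
            (hKs.sum_le_tsum _ fun n _ => by positivity))
          refine div_nonneg ?_ (Real.rpow_nonneg (Nat.cast_nonneg _) _)
          split_ifs
          exacts [weight_nonneg E V n, le_rfl]
  have hfin : ∑ m ∈ Finset.Icc 1 ⌊x⌋₊, f m ≤ ∏ p ∈ N.primesBelow, ∑' n : ℕ, f (p ^ n) := by
    have hmem : ∀ m ∈ Finset.Icc 1 ⌊x⌋₊, m ∈ N.smoothNumbers := by
      intro m hm
      rw [Finset.mem_Icc] at hm
      exact Nat.mem_smoothNumbers_of_lt (by omega) (by omega)
    rw [← hsum.tsum_eq, ← Finset.sum_subtype_of_mem f hmem]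
    exact hsum.summable.sum_le_tsum _ fun m _ => hf0 m
  have hterm : ∀ m ∈ Finset.Icc 1 ⌊x⌋₊, weightMul E V m / m ≤ Real.exp 1 * f m := by
    intro m hm
    rw [Finset.mem_Icc] at hm
    have hm0 : (0 : ℝ) < m := by exact_mod_cast hm.1
    have hmx : (m : ℝ) ≤ x := (Nat.cast_le.2 hm.2).trans (Nat.floor_le hx0.le)
    have h1 : (m : ℝ) ^ (-σ) = (m : ℝ)⁻¹ * ((m : ℝ) ^ (1 / Real.log x))⁻¹ := by
      rw [hσdef, neg_add, Real.rpow_add hm0, Real.rpow_neg_one, Real.rpow_neg hm0.le]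
    -- `m ^ (σ - 1) ≤ x ^ (1 / log x) = e`
    have h2 : (m : ℝ) ^ (1 / Real.log x) ≤ Real.exp 1 := by
      refine (Real.rpow_le_rpow hm0.le hmx hinv0.le).trans (le_of_eq ?_)
      rw [Real.rpow_def_of_pos hx0, mul_one_div_cancel hl0.ne']
    have h3 : 1 ≤ Real.exp 1 * ((m : ℝ) ^ (1 / Real.log x))⁻¹ := by
      rw [← div_eq_mul_inv, one_le_div (Real.rpow_pos_of_pos hm0 _)]
      exact h2
    simp only [hf]
    rw [h1, div_eq_mul_inv]
    have h4 : 0 ≤ weightMul E V m * (m : ℝ)⁻¹ :=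
      mul_nonneg (weightMul_nonneg E V m) (by positivity)
    calc weightMul E V m * (m : ℝ)⁻¹ = weightMul E V m * (m : ℝ)⁻¹ * 1 := by ring
      _ ≤ weightMul E V m * (m : ℝ)⁻¹ * (Real.exp 1 * ((m : ℝ) ^ (1 / Real.log x))⁻¹) :=
          mul_le_mul_of_nonneg_left h3 h4
      _ = _ := by ring
  have hlog : -Real.log (σ - 1) = Real.log (Real.log x) := by
    rw [hσdef, add_sub_cancel_left, one_div, Real.log_inv, neg_neg]
  calc ∑ m ∈ Finset.Icc 1 ⌊x⌋₊, weightMul E V m / m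
      ≤ Real.exp 1 * ∑ m ∈ Finset.Icc 1 ⌊x⌋₊, f m := by
        rw [Finset.mul_sum]; exact Finset.sum_le_sum hterm
    _ ≤ Real.exp 1 * Real.exp ((1 - (E.card + V.card / 2) / q.totient) * -Real.log (σ - 1)
          + C + K) := mul_le_mul_of_nonneg_left (hfin.trans hprod) (Real.exp_pos _).le
    _ = _ := by
        rw [hlog, Real.rpow_def_of_pos hl0]
        simp only [← Real.exp_add]
        congr 1
        ring

end Weight

end PartSet

/-! ### The trick of Chebyshev -/

namespace PartSet

section Count

variable {q : ℕ} (E V : Finset (ZMod q))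

/-- No prime factor of `m` lies in a class of `E`. -/
def Good (m : ℕ) : Prop := ∀ p, p.Prime → p ∣ m → (p : ZMod q) ∉ E

/-- `m * 2 ^ ω`, where `ω` is the number of prime factors of `m` whose class is in `V`. -/
noncomputable def level (m : ℕ) : ℕ := 2 ^ omegaT {p | (p : ZMod q) ∈ V} m * m

open Classical in
/-- The `m ≥ 1` without prime factors in `E` and with `level m ≤ y`. -/
noncomputable def goodSet (y : ℝ) : Finset ℕ :=
  {m ∈ Finset.Icc 1 ⌊y⌋₊ | Good E m ∧ (level V m : ℝ) ≤ y}

lemma le_level (m : ℕ) : m ≤ level V m := Nat.le_mul_of_pos_left m (by positivity)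

lemma mem_goodSet {y : ℝ} {m : ℕ} :
    m ∈ goodSet E V y ↔ 0 < m ∧ Good E m ∧ (level V m : ℝ) ≤ y := by
  simp only [goodSet, Finset.mem_filter, Finset.mem_Icc]
  constructor
  · rintro ⟨⟨h1, _⟩, h2⟩
    exact ⟨h1, h2⟩
  · rintro ⟨h1, h2, h3⟩
    exact ⟨⟨h1, Nat.le_floor ((Nat.cast_le.2 (le_level V m)).trans h3)⟩, h2, h3⟩

open Classical in
lemma half_pow_omegaT (T : Set ℕ) (m : ℕ) :
    (1 / 2 : ℝ) ^ omegaT T m = ∏ p ∈ m.primeFactors, if p ∈ T then 1 / 2 else 1 := by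
  rw [omegaT, ← Finset.prod_const, Finset.prod_filter]

lemma weightMul_of_good {m : ℕ} (h : Good E m) :
    weightMul E V m / m = 1 / level V m := by
  have h1 : weightMul E V m = (1 / 2) ^ omegaT {p | (p : ZMod q) ∈ V} m := by
    rw [weightMul, half_pow_omegaT]
    refine Finset.prod_congr rfl fun p hp => ?_
    have := h p (Nat.prime_of_mem_primeFactors hp) (Nat.dvd_of_mem_primeFactors hp)
    simp [weight, this]
  rw [h1, level]
  push_cast
  rw [one_div_pow, div_div]

open Classical in
lemma omegaT_mono (T : Set ℕ) {e m : ℕ} (h : e ∣ m) (hm : m ≠ 0) : omegaT T e ≤ omegaT T m :=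
  Finset.card_le_card (Finset.filter_subset_filter _ (Nat.primeFactors_mono h hm))

lemma level_mul_le (d : ℕ) {e : ℕ} (h : d * e ≠ 0) : d * level V e ≤ level V (d * e) := by
  have : omegaT {p | (p : ZMod q) ∈ V} e ≤ omegaT {p | (p : ZMod q) ∈ V} (d * e) :=
    omegaT_mono _ (Dvd.intro_left _ rfl) h
  calc d * level V e = 2 ^ omegaT {p | (p : ZMod q) ∈ V} e * (d * e) := by rw [level]; ring
    _ ≤ _ := Nat.mul_le_mul_right _ (Nat.pow_le_pow_right (by norm_num) this)

/-- Chebyshev's trick: writing `log m = ∑_{d e = m} Λ(d)` and using `d * level e ≤ level (d e)`, the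
sum of `log m` is controlled by `∑ ψ(y / level e)`. -/
lemma sum_log_goodSet_le {y : ℝ} (hy : 0 ≤ y) :
    ∑ m ∈ goodSet E V y, Real.log m
      ≤ (Real.log 4 + 4) * y * ∑ m ∈ Finset.Icc 1 ⌊y⌋₊, weightMul E V m / m := by
  classical
  set S := goodSet E V y with hS
  have hpos : ∀ m ∈ S, 0 < m := fun m hm => ((mem_goodSet E V).1 hm).1
  -- the set is closed under divisors, so the inner sum over `e` may run over `S`
  have hdown : ∀ m ∈ S, ∀ e, e ∣ m → e ∈ S := by
    rintro m hm e ⟨d, rfl⟩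
    obtain ⟨h1, h2, h3⟩ := (mem_goodSet E V).1 hm
    have he : 0 < e := Nat.pos_of_mul_pos_right h1
    have hd : 0 < d := Nat.pos_of_mul_pos_left h1
    refine (mem_goodSet E V).2 ⟨he, fun p hp hpe => h2 p hp (hpe.mul_right d), le_trans ?_ h3⟩
    have := level_mul_le V d (e := e) (by positivity)
    rw [mul_comm d e] at this
    exact_mod_cast (Nat.le_mul_of_pos_left _ hd).trans this
  have h1 : ∀ m ∈ S, Real.log m
      = ∑ e ∈ S, if e ∣ m then ArithmeticFunction.vonMangoldt (m / e) else 0 := by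
    intro m hm
    rw [← ArithmeticFunction.vonMangoldt_sum, ← Nat.sum_div_divisors, ← Finset.sum_filter]
    refine Finset.sum_congr ?_ fun _ _ => rfl
    ext e
    rw [Nat.mem_divisors, Finset.mem_filter]
    exact ⟨fun h => ⟨hdown m hm e h.1, h.1⟩, fun h => ⟨h.2, (hpos m hm).ne'⟩⟩
  have h2 : ∀ e ∈ S, ∑ m ∈ S, (if e ∣ m then ArithmeticFunction.vonMangoldt (m / e) else 0)
      ≤ (Real.log 4 + 4) * y * (weightMul E V e / e) := by
    intro e he
    obtain ⟨he0, he1, he2⟩ := (mem_goodSet E V).1 he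
    have hl0 : (0 : ℝ) < level V e := by
      exact_mod_cast he0.trans_le (le_level V e)
    have hy : 0 ≤ y / level V e := div_nonneg hy hl0.le
    have h3 : ∑ m ∈ S, (if e ∣ m then ArithmeticFunction.vonMangoldt (m / e) else 0)
        ≤ Chebyshev.psi (y / level V e) := by
      rw [← Finset.sum_filter, Chebyshev.psi]
      rw [← Finset.sum_image (s := S.filter (e ∣ ·)) (g := fun m => m / e)
        (f := fun d => ArithmeticFunction.vonMangoldt d)]
      · refine Finset.sum_le_sum_of_subset_of_nonneg ?_
          fun _ _ _ => ArithmeticFunction.vonMangoldt_nonneg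
        intro d hd
        obtain ⟨m, hm, rfl⟩ := Finset.mem_image.1 hd
        obtain ⟨hmS, d, rfl⟩ := Finset.mem_filter.1 hm
        obtain ⟨hm0, _, hm2⟩ := (mem_goodSet E V).1 hmS
        have hd0 : 0 < d := Nat.pos_of_mul_pos_left hm0
        rw [Nat.mul_div_cancel_left d he0, Finset.mem_Ioc]
        refine ⟨hd0, Nat.le_floor ?_⟩
        rw [le_div_iff₀ hl0]
        have := level_mul_le V d (e := e) (by positivity)
        rw [mul_comm d e] at this
        exact le_trans (by exact_mod_cast this) hm2
      · intro a ha b hb hab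
        have ha' := (Finset.mem_filter.1 ha).2
        have hb' := (Finset.mem_filter.1 hb).2
        exact (Nat.div_left_inj ha' hb').1 hab
    refine h3.trans ((Chebyshev.psi_le_const_mul_self hy).trans (le_of_eq ?_))
    rw [weightMul_of_good E V he1]
    ring
  have hSsub : S ⊆ Finset.Icc 1 ⌊y⌋₊ := Finset.filter_subset _ _
  rw [Finset.sum_congr rfl h1, Finset.sum_comm]
  refine (Finset.sum_le_sum h2).trans ?_
  rw [← Finset.mul_sum]
  have : 0 ≤ Real.log 4 := Real.log_nonneg (by norm_num)
  refine mul_le_mul_of_nonneg_left (Finset.sum_le_sum_of_subset_of_nonneg hSsub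
    fun m _ _ => div_nonneg (weightMul_nonneg E V m) (Nat.cast_nonneg _)) (by positivity)

end Count

end PartSet

/-! ### Counting the integers of the given shape -/

namespace PartSet

section Bound

variable {q : ℕ} (E V : Finset (ZMod q))

/-- The numbers `2 ^ k m`, `m` odd, such that `m` has no prime factor in `E` and at most `k + 1`
prime factors in `V`. -/
def Shape (n : ℕ) : Prop :=
  ∃ k m, n = 2 ^ k * m ∧ ¬ 2 ∣ m ∧ Good E m ∧ omegaT {p | (p : ZMod q) ∈ V} m ≤ k + 1

open Classical in
/-- The numbers `n ≤ x` of the prescribed shape. -/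
noncomputable def shapeSet (x : ℝ) : Finset ℕ := {n ∈ Finset.Icc 1 ⌊x⌋₊ | Shape E V n}

lemma two_pow_mul_inj {k k' m m' : ℕ} (h : 2 ^ k * m = 2 ^ k' * m') (hm : ¬ 2 ∣ m)
    (hm' : ¬ 2 ∣ m') : k = k' ∧ m = m' := by
  wlog hk : k ≤ k' generalizing k k' m m'
  · obtain ⟨h1, h2⟩ := this h.symm hm' hm (by omega)
    exact ⟨h1.symm, h2.symm⟩
  obtain ⟨d, rfl⟩ := Nat.exists_eq_add_of_le hk
  rw [pow_add, mul_assoc] at h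
  have h := Nat.eq_of_mul_eq_mul_left (by positivity) h
  rcases d with _ | d
  · simpa using h
  · exact absurd ⟨2 ^ d * m', by rw [h, pow_succ]; ring⟩ hm

/-- Numbers with odd part at most `y` are few: each is fixed by its odd part and an exponent of `2`. -/
lemma card_small_le {x y : ℝ} (hx : 1 ≤ x) (hy : 0 ≤ y) [DecidablePred fun n : ℕ => ∃ k m : ℕ,
      n = 2 ^ k * m ∧ ¬ 2 ∣ m ∧ (m : ℝ) ≤ y] :
    (({n ∈ Finset.Icc 1 ⌊x⌋₊ | ∃ k m : ℕ, n = 2 ^ k * m ∧ ¬ 2 ∣ m ∧ (m : ℝ) ≤ y}).card : ℝ)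
      ≤ (Real.log x / Real.log 2 + 1) * y := by
  set M := ⌊Real.log x / Real.log 2⌋₊ with hM
  have hl2 : 0 < Real.log 2 := Real.log_pos one_lt_two
  have hlx : 0 ≤ Real.log x / Real.log 2 := div_nonneg (Real.log_nonneg hx) hl2.le
  have h : ({n ∈ Finset.Icc 1 ⌊x⌋₊ | ∃ k m : ℕ, n = 2 ^ k * m ∧ ¬ 2 ∣ m ∧ (m : ℝ) ≤ y}) ⊆
      (Finset.range (M + 1) ×ˢ Finset.Icc 1 ⌊y⌋₊).image fun km => 2 ^ km.1 * km.2 := by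
    intro n hn
    obtain ⟨h1, k, m, rfl, hm2, hmy⟩ := Finset.mem_filter.1 hn
    rw [Finset.mem_Icc] at h1
    have hm0 : 0 < m := Nat.pos_of_ne_zero (by rintro rfl; simp at hm2)
    refine Finset.mem_image.2 ⟨(k, m), Finset.mem_product.2 ⟨?_, Finset.mem_Icc.2
      ⟨hm0, Nat.le_floor hmy⟩⟩, rfl⟩
    rw [Finset.mem_range, Nat.lt_succ_iff]
    refine Nat.le_floor ?_
    rw [le_div_iff₀ hl2, ← Real.log_pow]
    refine Real.log_le_log (by positivity) ?_
    have h2 : ((2 ^ k * m : ℕ) : ℝ) ≤ x := (Nat.le_floor_iff (by linarith)).1 h1.2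
    refine le_trans ?_ h2
    exact_mod_cast Nat.le_mul_of_pos_right _ hm0
  have h2 := (Finset.card_le_card h).trans Finset.card_image_le
  rw [Finset.card_product, Finset.card_range, Nat.card_Icc, Nat.add_sub_cancel] at h2
  calc _ ≤ (((M + 1) * ⌊y⌋₊ : ℕ) : ℝ) := by exact_mod_cast h2
    _ = ((M : ℝ) + 1) * (⌊y⌋₊ : ℝ) := by push_cast; ring
    _ ≤ _ := mul_le_mul (by linarith [Nat.floor_le hlx]) (Nat.floor_le hy) (by positivity)
        (by linarith)

/-- The numbers `n = 2 ^ k m` of the prescribed shape with `m > y`: they are counted with weight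
`log m`, through `2 n = 2 ^ t * level m` with `t = k + 1 - ω ≥ 0`. -/
lemma card_large_le {x y : ℝ} (hx : 1 ≤ x) (hy : 1 < y) [DecidablePred fun n : ℕ => ∃ k m : ℕ,
      n = 2 ^ k * m ∧ ¬ 2 ∣ m ∧ (m : ℝ) ≤ y] :
    (({n ∈ shapeSet E V x | ¬ ∃ k m : ℕ, n = 2 ^ k * m ∧ ¬ 2 ∣ m ∧ (m : ℝ) ≤ y}).card : ℝ)
        * Real.log y
      ≤ (Real.log 4 + 4) * (4 * x) * ∑ m ∈ Finset.Icc 1 ⌊2 * x⌋₊, weightMul E V m / m := by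
  classical
  set L := ∑ m ∈ Finset.Icc 1 ⌊2 * x⌋₊, weightMul E V m / m with hL
  have hw : ∀ m : ℕ, 0 ≤ weightMul E V m / m := fun m =>
    div_nonneg (weightMul_nonneg E V m) (Nat.cast_nonneg _)
  have hL0 : 0 ≤ L := Finset.sum_nonneg fun m _ => hw m
  have hl4 : 0 ≤ Real.log 4 := Real.log_nonneg (by norm_num)
  set N := {n ∈ shapeSet E V x | ¬ ∃ k m : ℕ, n = 2 ^ k * m ∧ ¬ 2 ∣ m ∧ (m : ℝ) ≤ y} with hN
  set S := (Finset.range (⌊2 * x⌋₊ + 1)).sigma fun t => goodSet E V (2 * x / 2 ^ t) with hS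
  have key : ∀ n ∈ N, ∃ tm ∈ S, 2 * n = 2 ^ tm.1 * level V tm.2 ∧ y < tm.2 := by
    intro n hn
    obtain ⟨h1, h2⟩ := Finset.mem_filter.1 hn
    obtain ⟨h1, k, m, rfl, hm2, hmg, hmo⟩ := Finset.mem_filter.1 h1
    rw [Finset.mem_Icc] at h1
    have hm0 : 0 < m := Nat.pos_of_ne_zero (by rintro rfl; simp at hm2)
    have hmy : y < m := by
      by_contra h
      exact h2 ⟨k, m, rfl, hm2, not_lt.1 h⟩
    obtain ⟨t, ht⟩ := Nat.exists_eq_add_of_le hmo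
    have e : 2 * (2 ^ k * m) = 2 ^ t * level V m := by
      rw [level, ← mul_assoc, ← pow_succ', ht, pow_add]
      ring
    have h3 : ((2 ^ k * m : ℕ) : ℝ) ≤ x := (Nat.le_floor_iff (by linarith)).1 h1.2
    have h4 : (2 : ℝ) ^ t * level V m ≤ 2 * x := by
      have : ((2 * (2 ^ k * m) : ℕ) : ℝ) = ((2 ^ t * level V m : ℕ) : ℝ) := by rw [e]
      push_cast at this h3
      linarith
    have hl1 : (1 : ℝ) ≤ level V m := by exact_mod_cast hm0.trans_le (le_level V m)
    refine ⟨⟨t, m⟩, Finset.mem_sigma.2 ⟨?_, (mem_goodSet E V).2 ⟨hm0, hmg, ?_⟩⟩, e, hmy⟩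
    · rw [Finset.mem_range, Nat.lt_succ_iff]
      refine Nat.le_floor ?_
      have h5 : (t : ℝ) ≤ 2 ^ t := by exact_mod_cast Nat.lt_two_pow_self.le
      have h6 : (2 : ℝ) ^ t * 1 ≤ 2 ^ t * level V m := by gcongr
      linarith
    · rw [le_div_iff₀ (by positivity)]
      linarith
  choose! f hfS hfe hfy using key
  -- `n` is recovered from `(t, m)` as half of `2 ^ t * level m`
  have hinj : Set.InjOn f N := by
    intro a ha b hb hab
    have h1 := hfe a ha
    have h2 := hfe b hb
    rw [hab] at h1
    omega
  calc (N.card : ℝ) * Real.log y = ∑ n ∈ N, Real.log y := by rw [Finset.sum_const, nsmul_eq_mul]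
    _ ≤ ∑ n ∈ N, Real.log (f n).2 := Finset.sum_le_sum fun n hn =>
        Real.log_le_log (by linarith) (hfy n hn).le
    _ = ∑ tm ∈ N.image f, Real.log tm.2 :=
        (Finset.sum_image (f := fun tm : (_ : ℕ) × ℕ => Real.log tm.2) hinj).symm
    _ ≤ ∑ tm ∈ S, Real.log tm.2 := Finset.sum_le_sum_of_subset_of_nonneg
        (fun tm h => by
          obtain ⟨n, hn, rfl⟩ := Finset.mem_image.1 h
          exact hfS n hn)
        fun tm _ _ => Real.log_natCast_nonneg _
    _ = ∑ t ∈ Finset.range (⌊2 * x⌋₊ + 1), ∑ m ∈ goodSet E V (2 * x / 2 ^ t), Real.log m :=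
        Finset.sum_sigma _ _ _
    _ ≤ ∑ t ∈ Finset.range (⌊2 * x⌋₊ + 1), (Real.log 4 + 4) * (2 * x * L) * (1 / 2) ^ t := by
        refine Finset.sum_le_sum fun t _ => ?_
        have hxt : 0 ≤ 2 * x / 2 ^ t := by positivity
        have hle : 2 * x / 2 ^ t ≤ 2 * x := div_le_self (by linarith) (one_le_pow₀ (by norm_num))
        refine (sum_log_goodSet_le E V hxt).trans ?_
        have h1 : ∑ m ∈ Finset.Icc 1 ⌊2 * x / 2 ^ t⌋₊, weightMul E V m / m ≤ L :=
          Finset.sum_le_sum_of_subset_of_nonneg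
            (Finset.Icc_subset_Icc_right (Nat.floor_mono hle)) fun m _ _ => hw m
        calc _ ≤ (Real.log 4 + 4) * (2 * x / 2 ^ t) * L :=
              mul_le_mul_of_nonneg_left h1 (by positivity)
          _ = _ := by rw [one_div_pow]; ring
    _ ≤ (Real.log 4 + 4) * (2 * x * L) * 2 := by
        rw [← Finset.mul_sum]
        exact mul_le_mul_of_nonneg_left (sum_geometric_two_le _) (by positivity)
    _ = _ := by ring

/-- The numbers of the prescribed shape are counted by `x / (log x) ^ c`, where `c` is the density
of the primes in `E`, plus half of the density of the primes in `V`. -/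
lemma shapeSet_isBigO [NeZero q] (hE : ∀ a ∈ E, IsUnit a) (hV : ∀ a ∈ V, IsUnit a)
    (hEV : Disjoint E V) :
    (fun x : ℝ => ((shapeSet E V x).card : ℝ)) =O[Filter.atTop]
      fun x : ℝ => x / Real.log x ^ ((E.card + V.card / 2) / q.totient : ℝ) := by
  classical
  set c : ℝ := (E.card + V.card / 2) / q.totient with hc
  obtain ⟨C, hC0, hC⟩ := weightMul_sum_bound E V hE hV hEV
  rw [← hc] at hC
  have hl4 : 0 ≤ Real.log 4 := Real.log_nonneg (by norm_num)
  have hl2 : 0 < Real.log 2 := Real.log_pos one_lt_two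
  have hlit : ∀ᶠ x : ℝ in Filter.atTop, Real.log x ^ (1 + c) ≤ x ^ (1 / 2 : ℝ) := by
    have := (isLittleO_log_rpow_rpow_atTop (s := 1 / 2) (1 + c) (by norm_num)).bound one_pos
    filter_upwards [this, Filter.eventually_ge_atTop 1] with x hx h1
    rw [Real.norm_of_nonneg (Real.rpow_nonneg (Real.log_nonneg h1) _),
      Real.norm_of_nonneg (by positivity), one_mul] at hx
    exact hx
  refine Asymptotics.IsBigO.of_bound
    ((1 / Real.log 2 + 1) + 2 * ((Real.log 4 + 4) * 4 * (C * 2 ^ |1 - c|))) ?_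
  filter_upwards [hlit, Filter.eventually_ge_atTop (Real.exp 1)] with x hx hxe
  have hx0 : 0 < x := (Real.exp_pos 1).trans_le hxe
  have hx2 : 2 ≤ x := by linarith [Real.add_one_le_exp (1 : ℝ)]
  have hl1 : 1 ≤ Real.log x := (Real.le_log_iff_exp_le hx0).2 hxe
  have hl0 : 0 < Real.log x := by linarith
  have hpc : 0 < Real.log x ^ c := Real.rpow_pos_of_pos hl0 _
  rw [Real.norm_of_nonneg (Nat.cast_nonneg _), Real.norm_of_nonneg (by positivity)]
  set y := x ^ (1 / 2 : ℝ) with hy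
  have hy1 : 1 < y := Real.one_lt_rpow (by linarith) (by norm_num)
  have hyy : y * y = x := by
    rw [hy, ← Real.rpow_add hx0]; norm_num
  have hlogy : Real.log y = Real.log x / 2 := by rw [hy, Real.log_rpow hx0]; ring
  -- the odd part is at most `√x`
  have hsmall : (({n ∈ shapeSet E V x | ∃ k m : ℕ, n = 2 ^ k * m ∧ ¬ 2 ∣ m ∧ (m : ℝ) ≤ y}).card : ℝ)
      ≤ (1 / Real.log 2 + 1) * (x / Real.log x ^ c) := by
    have h1 : (({n ∈ shapeSet E V x | ∃ k m : ℕ, n = 2 ^ k * m ∧ ¬ 2 ∣ m ∧ (m : ℝ) ≤ y}).card : ℝ)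
        ≤ (Real.log x / Real.log 2 + 1) * y := by
      refine le_trans ?_ (card_small_le (x := x) (by linarith) (by linarith : 0 ≤ y))
      exact_mod_cast Finset.card_le_card (Finset.filter_subset_filter _ (Finset.filter_subset _ _))
    have h2 : Real.log x * y ≤ x / Real.log x ^ c := by
      rw [le_div_iff₀ hpc]
      calc Real.log x * y * Real.log x ^ c = y * Real.log x ^ (1 + c) := by
            rw [Real.rpow_add hl0, Real.rpow_one]; ring
        _ ≤ y * y := mul_le_mul_of_nonneg_left hx (by linarith)
        _ = x := hyy
    have h3 : (Real.log x / Real.log 2 + 1) * y ≤ (1 / Real.log 2 + 1) * (Real.log x * y) := by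
      have : (1 / Real.log 2 + 1) * (Real.log x * y) - (Real.log x / Real.log 2 + 1) * y
          = (Real.log x - 1) * y := by ring
      have : 0 ≤ (Real.log x - 1) * y := mul_nonneg (by linarith) (by linarith)
      linarith
    exact h1.trans (h3.trans (mul_le_mul_of_nonneg_left h2 (by positivity)))
  -- the odd part exceeds `√x`
  have hlarge : (({n ∈ shapeSet E V x |
        ¬ ∃ k m : ℕ, n = 2 ^ k * m ∧ ¬ 2 ∣ m ∧ (m : ℝ) ≤ y}).card : ℝ)
      ≤ 2 * ((Real.log 4 + 4) * 4 * (C * 2 ^ |1 - c|)) * (x / Real.log x ^ c) := by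
    have h1 := card_large_le E V (x := x) (by linarith) hy1
    have h2 := hC (2 * x) (by linarith)
    have h3 : Real.log (2 * x) ^ (1 - c) ≤ 2 ^ |1 - c| * (Real.log x * (1 / Real.log x ^ c)) := by
      have e1 : Real.log x * (1 / Real.log x ^ c) = Real.log x ^ (1 - c) := by
        rw [Real.rpow_sub hl0, Real.rpow_one]; ring
      have e2 : Real.log (2 * x) = Real.log 2 + Real.log x := Real.log_mul (by norm_num) hx0.ne'
      set ρ := Real.log (2 * x) / Real.log x with hρ
      have hρe : Real.log (2 * x) = ρ * Real.log x := by rw [hρ, div_mul_cancel₀ _ hl0.ne']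
      have hl2x : Real.log 2 ≤ Real.log x := Real.log_le_log (by norm_num) hx2
      have hρ1 : 1 ≤ ρ := by rw [hρ, one_le_div hl0]; linarith
      have hρ2 : ρ ≤ 2 := by rw [hρ, div_le_iff₀ hl0]; linarith
      rw [e1, hρe, Real.mul_rpow (by linarith) hl0.le]
      refine mul_le_mul_of_nonneg_right ?_ (by positivity)
      exact (Real.rpow_le_rpow_of_exponent_le hρ1 (le_abs_self _)).trans
        (Real.rpow_le_rpow (by linarith) hρ2 (abs_nonneg _))
    rw [hlogy] at h1
    have h4 : (Real.log 4 + 4) * (4 * x) * ∑ m ∈ Finset.Icc 1 ⌊2 * x⌋₊, weightMul E V m / m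
        ≤ (Real.log 4 + 4) * (4 * x) *
          (C * (2 ^ |1 - c| * (Real.log x * (1 / Real.log x ^ c)))) :=
      mul_le_mul_of_nonneg_left (h2.trans (mul_le_mul_of_nonneg_left h3 hC0)) (by positivity)
    have h5 := h1.trans h4
    refine le_of_mul_le_mul_right (h5.trans (le_of_eq ?_)) (by linarith : 0 < Real.log x / 2)
    ring
  have hcard := Finset.card_filter_add_card_filter_not (s := shapeSet E V x)
    (fun n : ℕ => ∃ k m : ℕ, n = 2 ^ k * m ∧ ¬ 2 ∣ m ∧ (m : ℝ) ≤ y)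
  rw [← hcard]
  push_cast
  rw [add_mul]
  exact add_le_add hsmall hlarge

end Bound

end PartSet

/-! ### The counting function of `A` -/

namespace PartSet

/-- The data used modulo `q`: an element `u` with `u² ∈ E(q)` and a finite set `V` of unit classes,
disjoint from `E(q)`. If there is a semi-bad class, `u` is one and `V = u E(q)`; otherwise `u = 1`
and `V = ∅`. -/
lemma exists_classes {q : ℕ} (hq : Odd q) : ∃ (u : ZMod q) (V : Finset (ZMod q)),
    u ^ 2 ∈ badE q ∧ (∀ a ∈ V, IsUnit a) ∧ Disjoint (cosetE q 1) V ∧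
    ((orderOf (2 : ZMod q) : ℝ) + V.card / 2 = cq q * orderOf (2 : ZMod q)) ∧
    ∀ m, omegaT {p | (p : ZMod q) ∈ V} m ≤ omegaT {p | ∃ l : ℕ, (p : ZMod q) = u * 2 ^ l} m := by
  by_cases h : semiBadE q = ∅
  · refine ⟨1, ∅, ?_, by simp, by simp, by simp [cq, h], fun m => ?_⟩
    · rw [one_pow, mem_badE_iff hq]
      exact ⟨0, by simp⟩
    · simp [omegaT]
  · obtain ⟨u, hu, hu1, hu2⟩ := Set.nonempty_iff_ne_empty.2 h
    refine ⟨u, cosetE q u, hu2, fun a ha => isUnit_of_mem_cosetE hq hu ha, disjoint_cosetE hq hu1,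
      ?_, fun m => ?_⟩
    · rw [card_cosetE hu, cq, if_pos h]
      ring
    · simp only [mem_cosetE hq, le_refl]

lemma coeff_zero_eq_one {j : ℕ} {Ps : Fin j → (ZMod 2)[X]} (h : (∏ i, Ps i).coeff 0 = 1)
    (i : Fin j) : (Ps i).coeff 0 = 1 := by
  rw [Polynomial.coeff_zero_prod] at h
  have h1 : (Ps i).coeff 0 ≠ 0 := fun h0 => by
    rw [Finset.prod_eq_zero (Finset.mem_univ i) h0] at h
    exact zero_ne_one h
  generalize (Ps i).coeff 0 = a at h1
  revert a
  decide

end PartSet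

/-- If `P = P₁·P₂⋯P_j` with each `P_i` irreducible, `q_i` the order of `P_i`, `r_i` the
multiplicative order of `2` modulo `q_i`, and `c = min_i c(q_i)·r_i/φ(q_i)`, then
`A(P,x) ≪ x / (log x)^c` as `x → ∞`. -/
theorem stmt15 (j : ℕ) (hj : 0 < j) (Ps : Fin j → Polynomial (ZMod 2))
    (hirr : ∀ i, Irreducible (Ps i))
    (P : Polynomial (ZMod 2)) (hPprod : P = ∏ i, Ps i) (hP : P.coeff 0 = 1)
    (A : Set ℕ) (hApos : ∀ a ∈ A, 0 < a)
    (hA : ∀ n : ℕ, (partitionCount A n : ZMod 2) = P.coeff n) :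
    (fun x : ℝ => (countA A x : ℝ)) =O[Filter.atTop]
      fun x : ℝ =>
        x / Real.log x ^
          (⨅ i : Fin j, cq (polyOrder (Ps i)) *
            (orderOf (2 : ZMod (polyOrder (Ps i))) : ℝ) /
              ((polyOrder (Ps i)).totient : ℝ)) := by
  subst hPprod
  have h0 := PartSet.coeff_zero_eq_one hP
  set q : Fin j → ℕ := fun i => polyOrder (Ps i) with hq
  have hodd : ∀ i, Odd (q i) := fun i => PartSet.polyOrder_odd (hirr i) (h0 i)
  choose u V hu hV hEV hc hom using fun i => PartSet.exists_classes (hodd i)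
  set c : Fin j → ℝ := fun i => cq (q i) * (orderOf (2 : ZMod (q i)) : ℝ) / ((q i).totient : ℝ)
    with hcdef
  change _ =O[Filter.atTop] fun x : ℝ => x / Real.log x ^ (⨅ i, c i)
  have hinf : ∀ i, ⨅ i, c i ≤ c i := fun i => ciInf_le (Set.finite_range c).bddBelow i
  have hO : ∀ i, (fun x : ℝ => ((PartSet.shapeSet (PartSet.cosetE (q i) 1) (V i) x).card : ℝ))
      =O[Filter.atTop] fun x : ℝ => x / Real.log x ^ (⨅ i, c i) := by
    intro i
    have : NeZero (q i) := ⟨(hodd i).pos.ne'⟩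
    have h1 := PartSet.shapeSet_isBigO (PartSet.cosetE (q i) 1) (V i)
      (fun a ha => PartSet.isUnit_of_mem_cosetE (hodd i) isUnit_one ha) (hV i) (hEV i)
    rw [PartSet.card_cosetE isUnit_one, hc i] at h1
    refine h1.trans (Asymptotics.IsBigO.of_bound' ?_)
    filter_upwards [Filter.eventually_ge_atTop (Real.exp 1)] with x hx
    have hx0 : 0 < x := (Real.exp_pos 1).trans_le hx
    have hl1 : 1 ≤ Real.log x := (Real.le_log_iff_exp_le hx0).2 hx
    have hl0 : 0 < Real.log x := by linarith
    rw [Real.norm_of_nonneg (by positivity), Real.norm_of_nonneg (by positivity)]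
    exact div_le_div_of_nonneg_left hx0.le (Real.rpow_pos_of_pos hl0 _)
      (Real.rpow_le_rpow_of_exponent_le hl1 (hinf i))
  refine Asymptotics.IsBigO.trans (Asymptotics.IsBigO.of_bound' ?_)
    (Asymptotics.IsBigO.fun_sum fun i (_ : i ∈ Finset.univ) => hO i)
  filter_upwards [Filter.eventually_ge_atTop 0] with x hx
  rw [Real.norm_of_nonneg (Nat.cast_nonneg _),
    Real.norm_of_nonneg (Finset.sum_nonneg fun _ _ => Nat.cast_nonneg _)]
  classical
  have hsub : {n : ℕ | n ∈ A ∧ 1 ≤ n ∧ (n : ℝ) ≤ x} ⊆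
      ((Finset.univ.biUnion fun i => PartSet.shapeSet (PartSet.cosetE (q i) 1) (V i) x :
        Finset ℕ) : Set ℕ) := by
    rintro n ⟨hn, hn1, hnx⟩
    obtain ⟨k, m, hm, rfl⟩ := Nat.exists_eq_pow_mul_and_not_dvd (n := n) (by omega) 2 (by norm_num)
    obtain ⟨i, hi1, hi2⟩ := PartSet.exists_of_mem Ps hirr h0 A hApos hA q
      (fun i => (PartSet.polyOrder_spec (hirr i) (h0 i)).2) u hu hm hn
    rw [Finset.mem_coe, Finset.mem_biUnion]
    refine ⟨i, Finset.mem_univ i, Finset.mem_filter.2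
      ⟨Finset.mem_Icc.2 ⟨hn1, Nat.le_floor hnx⟩, k, m, rfl, hm, fun p hp hpm => ?_,
        (hom i m).trans hi2⟩⟩
    rw [PartSet.mem_cosetE_one (hodd i)]
    exact hi1 p hp hpm
  have hcard : countA A x ≤
      ∑ i, (PartSet.shapeSet (PartSet.cosetE (q i) 1) (V i) x).card := by
    refine le_trans ?_ Finset.card_biUnion_le
    rw [countA, ← Set.ncard_coe_finset]
    exact Set.ncard_le_ncard hsub (Finset.finite_toSet _)
  exact_mod_cast hcard
end
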